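/- Let M : ℝ² → ℝ be smooth with all partial derivatives up to order 9 square-integrable on ℝ², let Ω := {x∈ℝ³ : x₁ > M(x₂,x₃)}, let ρ̄, μ̂, p̂ > 0 be constants, and let k ∈ {0,1,2,3,4}. Then there exists a constant C₀ > 0 (depending on Ω) such that the following holds: whenever u : closure(Ω) → ℝ³ is of class C^{k+2} and p : closure(Ω) → ℝ is of class C^{k+1}, with ∫_Ω|∇^j u|² dx < ∞ for 0 ≤ j ≤ k+2 and ∫_Ω|∇^j p|² dx < ∞ for 0 ≤ j ≤ k+1, and h := ρ̄ div u satisfies ‖h‖_{H^{k+1}(Ω)} < ∞, and g := −μ̂Δu + p̂∇p satisfies ‖g‖_{H^{k}(Ω)} < ∞, and u = 0 on ∂Ω and u(x) → 0 as |x| → ∞, then ∫_Ω |∇^{k+2}u|² dx + ∫_Ω |∇^{k+1}p|² dx ≤ C₀ ( ‖h‖²_{H^{k+1}(Ω)} + ‖g‖²_{H^{k}(Ω)} + ∫_Ω |∇u|² dx ). -/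

import Mathlib

/- STATEMENT 9: Cattabriga-type estimate for the Stokes system
ρ̄ div u = h, −μ̂Δu + p̂∇p = g in the perturbed half-space Ω, with no-slip
boundary condition and decay at infinity. -/

noncomputable section

open MeasureTheory Real Set Filter

abbrev E3 : Type := EuclideanSpace ℝ (Fin 3)
abbrev E2 : Type := EuclideanSpace ℝ (Fin 2)

/-- Projection on the tangential variables `x' = (x₂, x₃)`. -/
def proj2 (x : E3) : E2 := (WithLp.equiv 2 (Fin 2 → ℝ)).symm ![x 1, x 2]

/-- The perturbed half-space `Ω = {x : x₁ > M(x₂,x₃)}`. -/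
def Omg (M : E2 → ℝ) : Set E3 := {x : E3 | M (proj2 x) < x 0}

/-- The boundary point `(M(x'), x')` of `∂Ω` over `x' ∈ ℝ²`. -/
def gph (M : E2 → ℝ) (x' : E2) : E3 := (WithLp.equiv 2 (Fin 3 → ℝ)).symm ![M x', x' 0, x' 1]

/-- The vector in `ℝ³` with the given coordinates. -/
def vecE3 (v : Fin 3 → ℝ) : E3 := (WithLp.equiv 2 (Fin 3 → ℝ)).symm v

/-- Partial derivative `∂ᵢf`. -/
def pd (i : Fin 3) (f : E3 → ℝ) (x : E3) : ℝ := fderiv ℝ f x (EuclideanSpace.single i 1)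

/-- Divergence `div u = ∑ᵢ ∂ᵢuᵢ`. -/
def vdiv (u : E3 → E3) (x : E3) : ℝ := ∑ i, pd i (fun y => u y i) x

/-- Gradient `∇f`. -/
def grad (f : E3 → ℝ) (x : E3) : E3 := vecE3 fun i => pd i f x

/-- Componentwise Laplacian `Δu`. -/
def vlap (u : E3 → E3) (x : E3) : E3 := vecE3 fun i => ∑ j, pd j (pd j fun y => u y i) x

/-!
The shear `y ↦ (y₁ + M(y'), y')` flattens `Ω` to the half-space and turns `∂ᵢ` into
`Dᵢ = ∂ᵢ - mᵢ∂₀` with `mᵢ = ∂ᵢM`. The Sobolev embedding on the plane bounds the derivatives of `mᵢ`.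

Tangential derivatives preserve the no-slip condition and commute with the flattened system up to
terms of lower order. Hence the estimate of order `k` for the tangential derivatives of the flow
controls every derivative occurring at order `k + 1` except those of highest order in the normal
direction, and the equations themselves give these: the divergence equation gives `∂₀∂₀` of the
component of the velocity normal to the boundary, the normal component of the momentum equation
gives `∂₀p`, and then the momentum equation gives all of `∂₀∂₀v` because the coefficient
`1 + m₁² + m₂²` of `∂₀∂₀` in the flattened Laplacian is at least `1`.

At order zero the tangential derivatives are bounded by testing the momentum equation with
second tangential derivatives of the velocity. The pressure term in this energy identity is bounded
by the Nečas inequality `‖q‖_{L²} ≲ ‖q‖_{H⁻¹} + ‖∇q‖_{H⁻¹}` for `q = ∂ⱼp`, `j` tangential. Its proof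
represents `q` as the divergence of a vector field with zero boundary values, up to a zero order
term: solve `φ - Δφ = q` on `ℝ³` and subtract reflections of `φ` and `∇φ` across the boundary.
-/

namespace Cattabriga

open scoped ContDiff

/-! ### Calculus on the closed half-space -/

section HalfSpaceCalculus

/-- The closed half-space `{y : y₁ ≥ 0}`, onto which `closure Ω` is flattened. -/
def halfSpace : Set E3 := {y : E3 | 0 ≤ y 0}

/-- The standard basis vectors of `ℝ³`; `basisVec 0` is the normal direction of `halfSpace`. -/
def basisVec (i : Fin 3) : E3 := EuclideanSpace.single i 1

/-- The one-sided partial derivative `∂ᵢf` on the closed half-space, extended by `0`, so that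
integrals over the half-space are integrals over `ℝ³`. -/
def hderiv (i : Fin 3) (f : E3 → ℝ) : E3 → ℝ :=
  halfSpace.indicator fun y => fderivWithin ℝ f halfSpace y (basisVec i)

/-- `f` is extended by `0` outside the closed half-space. -/
def ZeroOutside (f : E3 → ℝ) : Prop := ∀ y ∉ halfSpace, f y = 0

/-- `f` vanishes on the boundary plane of the half-space. -/
def ZeroOnBoundary (f : E3 → ℝ) : Prop := ∀ y : E3, y 0 = 0 → f y = 0

lemma basisVec_zero_apply_zero : (basisVec 0) 0 = 1 := by simp [basisVec]

lemma basisVec_apply_zero_of_ne {j : Fin 3} (hj : j ≠ 0) : (basisVec j) 0 = 0 := by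
  simp [basisVec, hj.symm]

lemma isOpen_setOf_pos : IsOpen {y : E3 | 0 < y 0} := isOpen_lt continuous_const (by fun_prop)

lemma isClosed_halfSpace : IsClosed halfSpace := isClosed_le continuous_const (by fun_prop)

lemma measurableSet_halfSpace : MeasurableSet halfSpace := isClosed_halfSpace.measurableSet

lemma setOf_pos_subset_halfSpace : {y : E3 | 0 < y 0} ⊆ halfSpace :=
  fun y (hy : 0 < y 0) => hy.le

lemma halfSpace_mem_nhds {y : E3} (hy : 0 < y 0) : halfSpace ∈ nhds y :=
  mem_of_superset (isOpen_setOf_pos.mem_nhds hy) setOf_pos_subset_halfSpace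

lemma setOf_pos_subset_interior : {y : E3 | 0 < y 0} ⊆ interior halfSpace :=
  interior_maximal setOf_pos_subset_halfSpace isOpen_setOf_pos

lemma convex_halfSpace : Convex ℝ halfSpace :=
  (convex_Ici (0 : ℝ)).linear_preimage (EuclideanSpace.proj (0 : Fin 3) : E3 →L[ℝ] ℝ).toLinearMap

lemma uniqueDiffOn_halfSpace : UniqueDiffOn ℝ halfSpace :=
  uniqueDiffOn_convex convex_halfSpace
    ⟨basisVec 0, setOf_pos_subset_interior (by simp [basisVec_zero_apply_zero])⟩

lemma halfSpace_subset_closure_setOf_pos : halfSpace ⊆ closure {y : E3 | 0 < y 0} := by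
  intro y hy
  have htendsto : Tendsto (fun t : ℝ => y + t • basisVec 0) (nhdsWithin 0 (Ioi 0)) (nhds y) := by
    have hcont : Continuous fun t : ℝ => y + t • basisVec 0 := by fun_prop
    simpa using (hcont.tendsto 0).mono_left nhdsWithin_le_nhds
  refine mem_closure_of_tendsto htendsto ?_
  filter_upwards [self_mem_nhdsWithin] with t ht
  have hpos : 0 < y 0 + t := add_pos_of_nonneg_of_pos hy ht
  simpa [basisVec] using hpos

lemma halfSpace_subset_closure_interior : halfSpace ⊆ closure (interior halfSpace) :=
  halfSpace_subset_closure_setOf_pos.trans (closure_mono setOf_pos_subset_interior)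

namespace ZeroOutside

variable {f g : E3 → ℝ}

lemma ext (hf : ZeroOutside f) (hg : ZeroOutside g) (h : ∀ y ∈ halfSpace, f y = g y) : f = g := by
  funext y
  by_cases hy : y ∈ halfSpace
  · exact h y hy
  · rw [hf y hy, hg y hy]

lemma add (hf : ZeroOutside f) (hg : ZeroOutside g) : ZeroOutside (f + g) := fun y hy => by
  simp [hf y hy, hg y hy]

lemma mul_left (c : E3 → ℝ) (hf : ZeroOutside f) : ZeroOutside (c * f) := fun y hy => by
  simp [hf y hy]

lemma hderiv {i : Fin 3} : ZeroOutside (hderiv i f) := fun _ hy => indicator_of_notMem hy _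

end ZeroOutside

variable {i : Fin 3} {f g : E3 → ℝ}

lemma hderiv_apply {y : E3} (hy : y ∈ halfSpace) :
    hderiv i f y = fderivWithin ℝ f halfSpace y (basisVec i) := indicator_of_mem hy _

lemma hderiv_apply_of_pos {y : E3} (hy : 0 < y 0) : hderiv i f y = fderiv ℝ f y (basisVec i) := by
  rw [hderiv_apply hy.le, fderivWithin_of_mem_nhds (halfSpace_mem_nhds hy)]

lemma contDiffOn_hderiv {m : ℕ} (hf : ContDiffOn ℝ (m + 1 : ℕ) f halfSpace) (i : Fin 3) :
    ContDiffOn ℝ m (hderiv i f) halfSpace :=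
  ((hf.fderivWithin uniqueDiffOn_halfSpace (m := m) (by norm_cast)).clm_apply
    contDiffOn_const).congr fun _ hy => hderiv_apply hy

lemma hderiv_add (hf : DifferentiableOn ℝ f halfSpace) (hg : DifferentiableOn ℝ g halfSpace) :
    hderiv i (f + g) = hderiv i f + hderiv i g :=
  ZeroOutside.hderiv.ext (ZeroOutside.hderiv.add ZeroOutside.hderiv) fun y hy => by
    simp only [Pi.add_apply, hderiv_apply hy,
      fderivWithin_add (uniqueDiffOn_halfSpace y hy) (hf y hy) (hg y hy),
      add_apply]

lemma hderiv_mul (hf : DifferentiableOn ℝ f halfSpace) (hg : DifferentiableOn ℝ g halfSpace) :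
    hderiv i (f * g) = hderiv i f * g + f * hderiv i g := by
  funext y
  by_cases hy : y ∈ halfSpace
  · simp only [Pi.add_apply, Pi.mul_apply, hderiv_apply hy,
      fderivWithin_mul (uniqueDiffOn_halfSpace y hy) (hf y hy) (hg y hy),
      add_apply, smul_apply, smul_eq_mul]
    ring
  · simp [hderiv, hy]

lemma hderiv_coeff_mul {c : E3 → ℝ} (hc : Differentiable ℝ c)
    (hf : DifferentiableOn ℝ f halfSpace) (hzero : ZeroOutside f) :
    hderiv i (c * f) = pd i c * f + c * hderiv i f := by
  rw [hderiv_mul hc.differentiableOn hf]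
  congr 1
  refine ZeroOutside.ext (hzero.mul_left _) (hzero.mul_left _) fun y hy => ?_
  rw [Pi.mul_apply, Pi.mul_apply, hderiv_apply hy,
    fderivWithin_eq_fderiv (uniqueDiffOn_halfSpace y hy) (hc y)]
  rfl

lemma hderiv_smul (a : ℝ) (hf : DifferentiableOn ℝ f halfSpace) :
    hderiv i (a • f) = a • hderiv i f := by
  funext y
  by_cases hy : y ∈ halfSpace
  · simp only [Pi.smul_apply, hderiv_apply hy,
      fderivWithin_const_smul (uniqueDiffOn_halfSpace y hy) (hf y hy), smul_apply]
  · simp [hderiv, hy]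

lemma hderiv_neg (hf : DifferentiableOn ℝ f halfSpace) : hderiv i (-f) = -hderiv i f := by
  rw [← neg_one_smul ℝ f, hderiv_smul _ hf, neg_one_smul]

lemma hderiv_sub (hf : DifferentiableOn ℝ f halfSpace) (hg : DifferentiableOn ℝ g halfSpace) :
    hderiv i (f - g) = hderiv i f - hderiv i g := by
  rw [sub_eq_add_neg, hderiv_add hf hg.neg, hderiv_neg hg, sub_eq_add_neg]

lemma hderiv_sum {ι : Type*} {s : Finset ι} {f : ι → E3 → ℝ}
    (hf : ∀ l ∈ s, DifferentiableOn ℝ (f l) halfSpace) :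
    hderiv i (∑ l ∈ s, f l) = ∑ l ∈ s, hderiv i (f l) := by
  funext y
  by_cases hy : y ∈ halfSpace
  · simp only [Finset.sum_apply, hderiv_apply hy,
      fderivWithin_sum (uniqueDiffOn_halfSpace y hy) fun l hl => hf l hl y hy, sum_apply]
  · simp [hderiv, hy]

lemma hderiv_hderiv_apply (hf : ContDiffOn ℝ (2 : ℕ) f halfSpace) (i j : Fin 3) {y : E3}
    (hy : y ∈ halfSpace) : hderiv i (hderiv j f) y =
      fderivWithin ℝ (fderivWithin ℝ f halfSpace) halfSpace y (basisVec i) (basisVec j) := by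
  have hcongr : fderivWithin ℝ (hderiv j f) halfSpace y =
      fderivWithin ℝ (fun z => fderivWithin ℝ f halfSpace z (basisVec j)) halfSpace y :=
    fderivWithin_congr (fun z hz => hderiv_apply hz) (hderiv_apply hy)
  have hdiff : DifferentiableWithinAt ℝ (fderivWithin ℝ f halfSpace) halfSpace y :=
    (hf.fderivWithin uniqueDiffOn_halfSpace (m := 1) (by norm_num)).differentiableOn
      (by norm_num) y hy
  rw [hderiv_apply hy, hcongr, fderivWithin_clm_apply (uniqueDiffOn_halfSpace y hy) hdiff
    (differentiableWithinAt_const _)]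
  simp

lemma hderiv_comm (hf : ContDiffOn ℝ (2 : ℕ) f halfSpace) (i j : Fin 3) :
    hderiv i (hderiv j f) = hderiv j (hderiv i f) := by
  refine ZeroOutside.ext ZeroOutside.hderiv ZeroOutside.hderiv fun y hy => ?_
  rw [hderiv_hderiv_apply hf i j hy, hderiv_hderiv_apply hf j i hy]
  exact ((hf y hy).isSymmSndFDerivWithinAt (by simp) uniqueDiffOn_halfSpace
    (halfSpace_subset_closure_interior hy) hy).eq _ _

end HalfSpaceCalculus

/-! ### Coefficients with bounded derivatives -/

section Coefficients

lemma pd_apply (i : Fin 3) (c : E3 → ℝ) (y : E3) : pd i c y = fderiv ℝ c y (basisVec i) := rfl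

variable {i : Fin 3} {c d : E3 → ℝ} {m : ℕ}

lemma contDiff_pd (hc : ContDiff ℝ ∞ c) (i : Fin 3) : ContDiff ℝ ∞ (pd i c) :=
  (hc.fderiv_right (m := ∞) (by norm_cast)).clm_apply contDiff_const

lemma pd_add (hc : Differentiable ℝ c) (hd : Differentiable ℝ d) :
    pd i (c + d) = pd i c + pd i d := by
  funext y
  simp only [pd_apply, Pi.add_apply, fderiv_add (hc y) (hd y), add_apply]

lemma pd_mul (hc : Differentiable ℝ c) (hd : Differentiable ℝ d) :
    pd i (c * d) = pd i c * d + c * pd i d := by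
  funext y
  simp only [pd_apply, Pi.add_apply, Pi.mul_apply, fderiv_mul (hc y) (hd y), add_apply,
    smul_apply, smul_eq_mul]
  ring

lemma pd_const (a : ℝ) : pd i (fun _ => a) = fun _ => 0 := by
  funext y
  simp [pd_apply]

lemma pd_inv (hc : Differentiable ℝ c) (hne : ∀ y, c y ≠ 0) :
    pd i c⁻¹ = -(pd i c * (c⁻¹ * c⁻¹)) := by
  funext y
  have hinv : HasFDerivAt c⁻¹ (-(c y ^ 2)⁻¹ • fderiv ℝ c y) y :=
    ((hasDerivAt_inv (hne y)).comp_hasFDerivAt y (hc y).hasFDerivAt)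
  simp only [pd_apply, hinv.fderiv, smul_apply, smul_eq_mul, Pi.neg_apply, Pi.mul_apply,
    Pi.inv_apply]
  field_simp

/-- All partial derivatives of `c` of order at most `m` are bounded. -/
def BoundedDerivs : ℕ → (E3 → ℝ) → Prop
  | 0, c => ∃ K, ∀ y, |c y| ≤ K
  | m + 1, c => (∃ K, ∀ y, |c y| ≤ K) ∧ ∀ i, BoundedDerivs m (pd i c)

/-- Smooth coefficients on `ℝ³` with bounded derivatives up to order `m`: these are the multipliers
of the Sobolev spaces of order at most `m`. -/
structure BoundedCoeff (m : ℕ) (c : E3 → ℝ) : Prop where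
  smooth : ContDiff ℝ ∞ c
  bounded : BoundedDerivs m c

namespace BoundedCoeff

lemma differentiable (hc : BoundedCoeff m c) : Differentiable ℝ c :=
  hc.smooth.differentiable (by norm_num)

lemma contDiff (hc : BoundedCoeff m c) (n : ℕ) : ContDiff ℝ n c :=
  hc.smooth.of_le (by exact_mod_cast le_top)

lemma exists_bound (hc : BoundedCoeff m c) : ∃ K, 0 ≤ K ∧ ∀ y, |c y| ≤ K := by
  obtain ⟨K, hK⟩ : ∃ K, ∀ y, |c y| ≤ K := by
    cases m with
    | zero => exact hc.bounded
    | succ m => exact hc.bounded.1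
  exact ⟨K, (abs_nonneg _).trans (hK 0), hK⟩

lemma deriv (hc : BoundedCoeff (m + 1) c) (i : Fin 3) : BoundedCoeff m (pd i c) :=
  ⟨contDiff_pd hc.smooth i, hc.bounded.2 i⟩

lemma succ (hc : ContDiff ℝ ∞ c) (hbound : ∃ K, ∀ y, |c y| ≤ K)
    (hderiv : ∀ i, BoundedCoeff m (pd i c)) : BoundedCoeff (m + 1) c :=
  ⟨hc, hbound, fun i => (hderiv i).bounded⟩

lemma pred (hc : BoundedCoeff (m + 1) c) : BoundedCoeff m c := by
  induction m generalizing c with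
  | zero => exact ⟨hc.smooth, hc.bounded.1⟩
  | succ m ih => exact succ hc.smooth hc.bounded.1 fun i => ih (hc.deriv i)

lemma mono {n : ℕ} (hmn : m ≤ n) (hc : BoundedCoeff n c) : BoundedCoeff m c := by
  induction n, hmn using Nat.le_induction with
  | base => exact hc
  | succ n _ ih => exact ih hc.pred

lemma const (a : ℝ) : BoundedCoeff m (fun _ => a) := by
  induction m generalizing a with
  | zero => exact ⟨contDiff_const, |a|, fun _ => le_rfl⟩
  | succ m ih =>
    refine succ contDiff_const ⟨|a|, fun _ => le_rfl⟩ fun i => ?_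
    rw [pd_const]
    exact ih 0

lemma exists_bound_add (hc : BoundedCoeff m c) (hd : BoundedCoeff m d) :
    ∃ K, ∀ y, |(c + d) y| ≤ K := by
  obtain ⟨K, -, hK⟩ := hc.exists_bound
  obtain ⟨L, -, hL⟩ := hd.exists_bound
  exact ⟨K + L, fun y => (abs_add_le _ _).trans (add_le_add (hK y) (hL y))⟩

lemma add (hc : BoundedCoeff m c) (hd : BoundedCoeff m d) : BoundedCoeff m (c + d) := by
  induction m generalizing c d with
  | zero => exact ⟨hc.smooth.add hd.smooth, exists_bound_add hc hd⟩
  | succ m ih =>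
    refine succ (hc.smooth.add hd.smooth) (exists_bound_add hc hd) fun i => ?_
    rw [pd_add hc.differentiable hd.differentiable]
    exact ih (hc.deriv i) (hd.deriv i)

lemma exists_bound_mul (hc : BoundedCoeff m c) (hd : BoundedCoeff m d) :
    ∃ K, ∀ y, |(c * d) y| ≤ K := by
  obtain ⟨K, hK0, hK⟩ := hc.exists_bound
  obtain ⟨L, -, hL⟩ := hd.exists_bound
  refine ⟨K * L, fun y => ?_⟩
  rw [Pi.mul_apply, abs_mul]
  exact mul_le_mul (hK y) (hL y) (abs_nonneg _) hK0

lemma mul (hc : BoundedCoeff m c) (hd : BoundedCoeff m d) : BoundedCoeff m (c * d) := by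
  induction m generalizing c d with
  | zero => exact ⟨hc.smooth.mul hd.smooth, exists_bound_mul hc hd⟩
  | succ m ih =>
    refine succ (hc.smooth.mul hd.smooth) (exists_bound_mul hc hd) fun i => ?_
    rw [pd_mul hc.differentiable hd.differentiable]
    exact (ih (hc.deriv i) hd.pred).add (ih hc.pred (hd.deriv i))

lemma neg (hc : BoundedCoeff m c) : BoundedCoeff m (-c) := by
  have hmul := (const (m := m) (-1)).mul hc
  rwa [show (fun _ => (-1 : ℝ)) * c = -c from neg_one_mul c] at hmul

lemma inv_of_one_le (hc : BoundedCoeff m c) (hone : ∀ y, 1 ≤ c y) : BoundedCoeff m c⁻¹ := by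
  have hne : ∀ y, c y ≠ 0 := fun y => by linarith [hone y]
  have hsmooth : ContDiff ℝ ∞ c⁻¹ := hc.smooth.inv hne
  have hbound : ∃ K, ∀ y, |c⁻¹ y| ≤ K := ⟨1, fun y => by
    rw [Pi.inv_apply, abs_inv, abs_of_nonneg (by linarith [hone y])]
    exact inv_le_one_of_one_le₀ (hone y)⟩
  induction m with
  | zero => exact ⟨hsmooth, hbound⟩
  | succ m ih =>
    refine succ hsmooth hbound fun i => ?_
    rw [pd_inv hc.differentiable hne]
    exact ((hc.deriv i).mul ((ih hc.pred).mul (ih hc.pred))).neg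

end BoundedCoeff

end Coefficients

/-! ### Sobolev classes on the half-space -/

section Sobolev

/-- All one-sided partial derivatives of `f` of order at most `m` are square-integrable. -/
def MemL2Derivs : ℕ → (E3 → ℝ) → Prop
  | 0, f => MemLp f 2 volume
  | m + 1, f => MemLp f 2 volume ∧ ∀ i, MemL2Derivs m (hderiv i f)

/-- The functions of class `C^m ∩ H^m` on the closed half-space, extended by `0`. -/
structure HalfSobolev (m : ℕ) (f : E3 → ℝ) : Prop where
  contDiffOn : ContDiffOn ℝ m f halfSpace
  zeroOutside : ZeroOutside f
  memL2Derivs : MemL2Derivs m f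

/-- The squared `H^m`-norm on the half-space, in which each word `∂_{i₁}⋯∂_{iⱼ}`, `j ≤ m`, counts
once. -/
def sobolevSq : ℕ → (E3 → ℝ) → ℝ
  | 0, f => ∫ y, f y ^ 2
  | m + 1, f => (∫ y, f y ^ 2) + ∑ i, sobolevSq m (hderiv i f)

variable {m : ℕ} {f g c : E3 → ℝ}

lemma sobolevSq_zero (f : E3 → ℝ) : sobolevSq 0 f = ∫ y, f y ^ 2 := rfl

lemma sobolevSq_succ (m : ℕ) (f : E3 → ℝ) :
    sobolevSq (m + 1) f = sobolevSq 0 f + ∑ i, sobolevSq m (hderiv i f) := rfl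

lemma sobolevSq_nonneg (m : ℕ) (f : E3 → ℝ) : 0 ≤ sobolevSq m f := by
  induction m generalizing f with
  | zero => exact integral_nonneg fun y => sq_nonneg _
  | succ m ih =>
    exact add_nonneg (integral_nonneg fun y => sq_nonneg _) (Finset.sum_nonneg fun i _ => ih _)

lemma sobolevSq_hderiv_le (m : ℕ) (f : E3 → ℝ) (i : Fin 3) :
    sobolevSq m (hderiv i f) ≤ sobolevSq (m + 1) f :=
  (Finset.single_le_sum (f := fun i => sobolevSq m (hderiv i f))
    (fun _ _ => sobolevSq_nonneg m _) (Finset.mem_univ i)).trans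
    (le_add_of_nonneg_left (sobolevSq_nonneg 0 f))

lemma sobolevSq_le_succ (m : ℕ) (f : E3 → ℝ) : sobolevSq m f ≤ sobolevSq (m + 1) f := by
  induction m generalizing f with
  | zero => exact le_add_of_nonneg_right (Finset.sum_nonneg fun i _ => sobolevSq_nonneg 0 _)
  | succ m ih =>
    rw [sobolevSq_succ, sobolevSq_succ (m + 1)]
    gcongr with i
    exact ih (hderiv i f)

lemma sobolevSq_mono {n : ℕ} (hmn : m ≤ n) (f : E3 → ℝ) : sobolevSq m f ≤ sobolevSq n f :=
  monotone_nat_of_le_succ (f := fun m => sobolevSq m f) (fun m => sobolevSq_le_succ m f) hmn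

lemma integral_sq_add_le (hf : MemLp f 2 volume) (hg : MemLp g 2 volume) :
    ∫ y, (f + g) y ^ 2 ≤ 2 * ((∫ y, f y ^ 2) + ∫ y, g y ^ 2) := by
  rw [← integral_add hf.integrable_sq hg.integrable_sq, ← integral_const_mul]
  refine integral_mono (hf.add hg).integrable_sq
    ((hf.integrable_sq.add hg.integrable_sq).const_mul 2) fun y => ?_
  simp only [Pi.add_apply]
  nlinarith [sq_nonneg (f y - g y)]

lemma BoundedCoeff.memLp_mul (hc : BoundedCoeff m c) (hf : MemLp f 2 volume) :
    MemLp (c * f) 2 volume := by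
  obtain ⟨K, -, hK⟩ := hc.exists_bound
  refine MemLp.of_le_mul (c := K) hf (hc.smooth.continuous.aestronglyMeasurable.mul hf.1)
    (Eventually.of_forall fun y => ?_)
  rw [Pi.mul_apply, norm_mul]
  exact mul_le_mul_of_nonneg_right (hK y) (norm_nonneg _)

lemma BoundedCoeff.exists_integral_sq_mul_le (hc : BoundedCoeff m c) :
    ∃ C : ℝ, 0 ≤ C ∧ ∀ f : E3 → ℝ, MemLp f 2 volume → ∫ y, (c * f) y ^ 2 ≤ C * ∫ y, f y ^ 2 := by
  obtain ⟨K, -, hK⟩ := hc.exists_bound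
  refine ⟨K ^ 2, sq_nonneg _, fun f hf => ?_⟩
  rw [← integral_const_mul]
  refine integral_mono (hc.memLp_mul hf).integrable_sq (hf.integrable_sq.const_mul _) fun y => ?_
  simp only [Pi.mul_apply, mul_pow]
  exact mul_le_mul_of_nonneg_right (sq_le_sq' (abs_le.1 (hK y)).1 (abs_le.1 (hK y)).2) (sq_nonneg _)

lemma MemL2Derivs.memLp (hf : MemL2Derivs m f) : MemLp f 2 volume := by
  cases m with
  | zero => exact hf
  | succ m => exact hf.1

lemma MemL2Derivs.pred (hf : MemL2Derivs (m + 1) f) : MemL2Derivs m f := by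
  induction m generalizing f with
  | zero => exact hf.1
  | succ m ih => exact ⟨hf.1, fun i => ih (hf.2 i)⟩

namespace HalfSobolev

lemma memLp (hf : HalfSobolev m f) : MemLp f 2 volume := hf.memL2Derivs.memLp

lemma integrable_mul {k l : ℕ} (hf : HalfSobolev k f) (hg : HalfSobolev l g) :
    Integrable (f * g) := hf.memLp.integrable_mul hg.memLp

lemma differentiableOn (hf : HalfSobolev (m + 1) f) : DifferentiableOn ℝ f halfSpace :=
  hf.contDiffOn.differentiableOn (by norm_cast)

lemma deriv (hf : HalfSobolev (m + 1) f) (i : Fin 3) : HalfSobolev m (hderiv i f) :=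
  ⟨contDiffOn_hderiv hf.contDiffOn i, ZeroOutside.hderiv, hf.memL2Derivs.2 i⟩

lemma pred (hf : HalfSobolev (m + 1) f) : HalfSobolev m f :=
  ⟨hf.contDiffOn.of_le (by norm_cast; omega), hf.zeroOutside, hf.memL2Derivs.pred⟩

lemma mono {n : ℕ} (hmn : m ≤ n) (hf : HalfSobolev n f) : HalfSobolev m f := by
  induction n, hmn using Nat.le_induction with
  | base => exact hf
  | succ n _ ih => exact ih hf.pred

lemma succ (hcont : ContDiffOn ℝ (m + 1 : ℕ) f halfSpace) (hzero : ZeroOutside f)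
    (hmem : MemLp f 2 volume) (hderiv : ∀ i, HalfSobolev m (hderiv i f)) :
    HalfSobolev (m + 1) f :=
  ⟨hcont, hzero, hmem, fun i => (hderiv i).memL2Derivs⟩

lemma hderiv_comm (hf : HalfSobolev (m + 2) f) (i j : Fin 3) :
    hderiv i (hderiv j f) = hderiv j (hderiv i f) :=
  Cattabriga.hderiv_comm (hf.contDiffOn.of_le (by norm_cast; omega)) i j

lemma add (hf : HalfSobolev m f) (hg : HalfSobolev m g) : HalfSobolev m (f + g) := by
  induction m generalizing f g with
  | zero => exact ⟨hf.contDiffOn.add hg.contDiffOn, hf.zeroOutside.add hg.zeroOutside,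
      hf.memLp.add hg.memLp⟩
  | succ m ih =>
    refine succ (hf.contDiffOn.add hg.contDiffOn) (hf.zeroOutside.add hg.zeroOutside)
      (hf.memLp.add hg.memLp) fun i => ?_
    rw [hderiv_add hf.differentiableOn hg.differentiableOn]
    exact ih (hf.deriv i) (hg.deriv i)

lemma coeff_mul (hc : BoundedCoeff m c) (hf : HalfSobolev m f) : HalfSobolev m (c * f) := by
  induction m generalizing c f with
  | zero => exact ⟨(hc.contDiff 0).contDiffOn.mul hf.contDiffOn, hf.zeroOutside.mul_left c,
      hc.memLp_mul hf.memLp⟩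
  | succ m ih =>
    refine succ ((hc.contDiff (m + 1)).contDiffOn.mul hf.contDiffOn) (hf.zeroOutside.mul_left c)
      (hc.memLp_mul hf.memLp) fun i => ?_
    rw [hderiv_coeff_mul hc.differentiable hf.differentiableOn hf.zeroOutside]
    exact (ih (hc.deriv i) hf.pred).add (ih hc.pred (hf.deriv i))

lemma smul (a : ℝ) (hf : HalfSobolev m f) : HalfSobolev m (a • f) :=
  coeff_mul (BoundedCoeff.const a) hf

lemma neg (hf : HalfSobolev m f) : HalfSobolev m (-f) := by
  simpa only [neg_one_smul] using hf.smul (-1)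

lemma sub (hf : HalfSobolev m f) (hg : HalfSobolev m g) : HalfSobolev m (f - g) := by
  simpa only [sub_eq_add_neg] using hf.add hg.neg

lemma sum {ι : Type*} [Fintype ι] [Nonempty ι] {f : ι → E3 → ℝ}
    (hf : ∀ i, HalfSobolev m (f i)) : HalfSobolev m (∑ i, f i) :=
  Finset.sum_induction_nonempty f (HalfSobolev m) (fun _ _ => add) Finset.univ_nonempty
    fun i _ => hf i

end HalfSobolev

lemma sobolevSq_add_le (hf : HalfSobolev m f) (hg : HalfSobolev m g) :
    sobolevSq m (f + g) ≤ 2 * (sobolevSq m f + sobolevSq m g) := by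
  induction m generalizing f g with
  | zero => exact integral_sq_add_le hf.memLp hg.memLp
  | succ m ih =>
    have hzero : sobolevSq 0 (f + g) ≤ 2 * (sobolevSq 0 f + sobolevSq 0 g) :=
      integral_sq_add_le hf.memLp hg.memLp
    have hderiv : ∑ i, sobolevSq m (hderiv i (f + g)) ≤
        ∑ i, 2 * (sobolevSq m (hderiv i f) + sobolevSq m (hderiv i g)) := by
      refine Finset.sum_le_sum fun i _ => ?_
      rw [hderiv_add hf.differentiableOn hg.differentiableOn]
      exact ih (hf.deriv i) (hg.deriv i)
    rw [← Finset.mul_sum, Finset.sum_add_distrib] at hderiv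
    simp only [sobolevSq_succ]
    linarith

lemma BoundedCoeff.exists_sobolevSq_mul_le (hc : BoundedCoeff m c) :
    ∃ C : ℝ, 0 ≤ C ∧ ∀ f : E3 → ℝ, HalfSobolev m f → sobolevSq m (c * f) ≤ C * sobolevSq m f := by
  obtain ⟨C₀, hC₀, hzero⟩ := hc.exists_integral_sq_mul_le
  induction m generalizing c C₀ with
  | zero => exact ⟨C₀, hC₀, fun f hf => hzero f hf.memLp⟩
  | succ m ih =>
    have hstep : ∀ {c : E3 → ℝ}, BoundedCoeff m c → ∃ C : ℝ, 0 ≤ C ∧ ∀ f : E3 → ℝ, HalfSobolev m f →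
        sobolevSq m (c * f) ≤ C * sobolevSq m f := fun hc =>
      let ⟨C, hC, h⟩ := hc.exists_integral_sq_mul_le
      ih hc C hC h
    obtain ⟨C₁, hC₁, hmul⟩ := hstep hc.pred
    choose C₂ hC₂ hmul' using fun i => hstep (hc.deriv i)
    have hsum : 0 ≤ ∑ i, 2 * (C₂ i + C₁) :=
      Finset.sum_nonneg fun i _ => by linarith [hC₂ i]
    refine ⟨C₀ + ∑ i, 2 * (C₂ i + C₁), by positivity, fun f hf => ?_⟩
    rw [sobolevSq_succ, add_mul, Finset.sum_mul]
    refine add_le_add ((hzero f hf.memLp).trans ?_) (Finset.sum_le_sum fun i _ => ?_)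
    · exact mul_le_mul_of_nonneg_left (sobolevSq_mono (Nat.zero_le _) f) hC₀
    · rw [hderiv_coeff_mul hc.differentiable hf.differentiableOn hf.zeroOutside]
      calc sobolevSq m (pd i c * f + c * hderiv i f)
          ≤ 2 * (sobolevSq m (pd i c * f) + sobolevSq m (c * hderiv i f)) :=
            sobolevSq_add_le (.coeff_mul (hc.deriv i) hf.pred) (.coeff_mul hc.pred (hf.deriv i))
        _ ≤ 2 * (C₂ i * sobolevSq m f + C₁ * sobolevSq m (hderiv i f)) := by
            gcongr
            exacts [hmul' i f hf.pred, hmul _ (hf.deriv i)]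
        _ ≤ 2 * (C₂ i * sobolevSq (m + 1) f + C₁ * sobolevSq (m + 1) f) := by
            gcongr
            exacts [hC₂ i, sobolevSq_le_succ m f, sobolevSq_hderiv_le m f i]
        _ = 2 * (C₂ i + C₁) * sobolevSq (m + 1) f := by ring

end Sobolev

/-! ### Uniform Sobolev bounds for families of functions -/

/-- The members `F d`, `d ∈ P`, of a family satisfy `‖F d‖²_{H^m} ≤ C R(d)` with a constant `C`
independent of `d`. -/
def SobolevBounded {α : Type*} (P : α → Prop) (R : α → ℝ) (m : ℕ) (F : α → E3 → ℝ) : Prop :=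
  ∃ C, 0 ≤ C ∧ ∀ d, P d → HalfSobolev m (F d) ∧ sobolevSq m (F d) ≤ C * R d

namespace SobolevBounded

variable {α : Type*} {P : α → Prop} {R : α → ℝ} {m : ℕ} {F G : α → E3 → ℝ}

lemma of_le (hmem : ∀ d, P d → HalfSobolev m (F d)) (hle : ∀ d, P d → sobolevSq m (F d) ≤ R d) :
    SobolevBounded P R m F :=
  ⟨1, zero_le_one, fun d hd => ⟨hmem d hd, by rw [one_mul]; exact hle d hd⟩⟩

lemma halfSobolev (hF : SobolevBounded P R m F) {d : α} (hd : P d) : HalfSobolev m (F d) :=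
  let ⟨_, _, h⟩ := hF
  (h d hd).1

lemma congr (hF : SobolevBounded P R m F) (h : ∀ d, P d → G d = F d) :
    SobolevBounded P R m G := by
  obtain ⟨C, hC, hle⟩ := hF
  exact ⟨C, hC, fun d hd => by rw [h d hd]; exact hle d hd⟩

lemma add (hF : SobolevBounded P R m F) (hG : SobolevBounded P R m G) :
    SobolevBounded P R m (fun d => F d + G d) := by
  obtain ⟨C, hC, hF⟩ := hF
  obtain ⟨D, hD, hG⟩ := hG
  refine ⟨2 * (C + D), by positivity, fun d hd => ⟨(hF d hd).1.add (hG d hd).1, ?_⟩⟩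
  linarith [sobolevSq_add_le (hF d hd).1 (hG d hd).1, (hF d hd).2, (hG d hd).2]

lemma coeff_mul {c : E3 → ℝ} (hc : BoundedCoeff m c) (hF : SobolevBounded P R m F) :
    SobolevBounded P R m (fun d => c * F d) := by
  obtain ⟨C, hC, hF⟩ := hF
  obtain ⟨D, hD, hmul⟩ := hc.exists_sobolevSq_mul_le
  refine ⟨D * C, by positivity, fun d hd => ⟨.coeff_mul hc (hF d hd).1, ?_⟩⟩
  linarith [hmul _ (hF d hd).1, mul_le_mul_of_nonneg_left (hF d hd).2 hD]

lemma smul (a : ℝ) (hF : SobolevBounded P R m F) : SobolevBounded P R m (fun d => a • F d) :=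
  hF.coeff_mul (BoundedCoeff.const a)

lemma neg (hF : SobolevBounded P R m F) : SobolevBounded P R m (fun d => -F d) := by
  simpa only [neg_one_smul] using hF.smul (-1)

lemma sub (hF : SobolevBounded P R m F) (hG : SobolevBounded P R m G) :
    SobolevBounded P R m (fun d => F d - G d) := by
  simpa only [sub_eq_add_neg] using hF.add hG.neg

lemma sum {ι : Type*} [Fintype ι] [Nonempty ι] {F : ι → α → E3 → ℝ}
    (hF : ∀ i, SobolevBounded P R m (F i)) : SobolevBounded P R m (fun d => ∑ i, F i d) :=
  (Finset.sum_induction_nonempty F (SobolevBounded P R m) (fun _ _ => add) Finset.univ_nonempty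
    fun i _ => hF i).congr fun d _ => (Finset.sum_apply d Finset.univ F).symm

lemma trans {R' : α → ℝ} (hF : SobolevBounded P R m F)
    (hR : ∃ C, 0 ≤ C ∧ ∀ d, P d → R d ≤ C * R' d) : SobolevBounded P R' m F := by
  obtain ⟨C, hC, hF⟩ := hF
  obtain ⟨D, hD, hR⟩ := hR
  refine ⟨C * D, by positivity, fun d hd => ⟨(hF d hd).1, (hF d hd).2.trans ?_⟩⟩
  rw [mul_assoc]
  exact mul_le_mul_of_nonneg_left (hR d hd) hC

lemma comp {β : Type*} (hF : SobolevBounded P R m F) {Q : β → Prop} (φ : β → α)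
    (hφ : ∀ e, Q e → P (φ e)) : SobolevBounded Q (fun e => R (φ e)) m (fun e => F (φ e)) := by
  obtain ⟨C, hC, hF⟩ := hF
  exact ⟨C, hC, fun e he => hF _ (hφ e he)⟩

lemma deriv {i : Fin 3} (hF : SobolevBounded P R (m + 1) F) :
    SobolevBounded P R m (fun d => hderiv i (F d)) := by
  obtain ⟨C, hC, hF⟩ := hF
  exact ⟨C, hC, fun d hd => ⟨(hF d hd).1.deriv i, (sobolevSq_hderiv_le _ _ _).trans (hF d hd).2⟩⟩

lemma mono {n : ℕ} (hmn : m ≤ n) (hF : SobolevBounded P R n F) : SobolevBounded P R m F := by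
  obtain ⟨C, hC, hF⟩ := hF
  exact ⟨C, hC, fun d hd => ⟨(hF d hd).1.mono hmn, (sobolevSq_mono hmn _).trans (hF d hd).2⟩⟩

lemma succ (hzero : SobolevBounded P R 0 F)
    (hderiv : ∀ i, SobolevBounded P R m (fun d => hderiv i (F d)))
    (hmem : ∀ d, P d → HalfSobolev (m + 1) (F d)) : SobolevBounded P R (m + 1) F := by
  obtain ⟨C, hC, hzero⟩ := hzero
  choose D hD hderiv using hderiv
  have hsum := Finset.sum_nonneg fun i (_ : i ∈ Finset.univ) => hD i
  refine ⟨C + ∑ i, D i, by positivity, fun d hd => ⟨hmem d hd, ?_⟩⟩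
  rw [sobolevSq_succ, add_mul, Finset.sum_mul]
  exact add_le_add (hzero d hd).2 (Finset.sum_le_sum fun i _ => (hderiv i d hd).2)

end SobolevBounded

/-! ### The flattened Stokes system -/

/-- The coefficients `mᵢ = ∂ᵢM` that the flattening of `Ω` introduces: `m₀ = 0`, the derivatives up
to order `n` are bounded, and nothing depends on the normal variable. -/
structure FlatteningCoeff (n : ℕ) (m : Fin 3 → E3 → ℝ) : Prop where
  zero : m 0 = 0
  bounded : ∀ i, BoundedCoeff n (m i)
  normal : ∀ i, pd 0 (m i) = 0

/-- The derivative `Dᵢf = ∂ᵢf - mᵢ∂₀f` on the half-space to which `∂ᵢ` on `Ω` is flattened. -/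
def pullbackDeriv (m : Fin 3 → E3 → ℝ) (i : Fin 3) (f : E3 → ℝ) : E3 → ℝ :=
  hderiv i f - m i * hderiv 0 f

/-- A velocity and a pressure on the half-space. -/
structure StokesFlow where
  /-- The components of the velocity. -/
  vel : Fin 3 → E3 → ℝ
  /-- The pressure. -/
  pres : E3 → ℝ

namespace StokesFlow

/-- The flattened divergence `∑ᵢ Dᵢvᵢ` of the velocity. -/
def divergence (m : Fin 3 → E3 → ℝ) (d : StokesFlow) : E3 → ℝ := ∑ i, pullbackDeriv m i (d.vel i)

/-- The `i`-th component `-μ ∑ₗ DₗDₗvᵢ + κ Dᵢp` of the flattened momentum equation. -/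
def force (μ κ : ℝ) (m : Fin 3 → E3 → ℝ) (i : Fin 3) (d : StokesFlow) : E3 → ℝ :=
  -(μ • ∑ l, pullbackDeriv m l (pullbackDeriv m l (d.vel i))) + κ • pullbackDeriv m i d.pres

/-- The flows to which the estimate of order `k` applies: `v ∈ H^{k+2}` vanishes on the boundary
and `p ∈ H^{k+1}`. -/
structure Admissible (k : ℕ) (d : StokesFlow) : Prop where
  vel : ∀ i, HalfSobolev (k + 2) (d.vel i)
  pres : HalfSobolev (k + 1) d.pres
  boundary : ∀ i, ZeroOnBoundary (d.vel i)

/-- The right-hand side of the flattened estimate of order `k`, without its constant. -/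
def dataSq (μ κ : ℝ) (m : Fin 3 → E3 → ℝ) (k : ℕ) (d : StokesFlow) : ℝ :=
  sobolevSq (k + 1) (divergence m d) + (∑ i, sobolevSq k (force μ κ m i d)) +
    ∑ i, ∑ a, sobolevSq 0 (hderiv a (d.vel i))

/-- The derivative `∂ⱼ` of a flow; for tangential `j` it is again a flow with no-slip condition. -/
def deriv (j : Fin 3) (d : StokesFlow) : StokesFlow :=
  ⟨fun i => hderiv j (d.vel i), hderiv j d.pres⟩

end StokesFlow

section StokesOperators

variable {m : Fin 3 → E3 → ℝ} {μ κ : ℝ} {k n : ℕ} {f g : E3 → ℝ} {d : StokesFlow}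

lemma FlatteningCoeff.mono (hn : k ≤ n) (hm : FlatteningCoeff n m) : FlatteningCoeff k m :=
  ⟨hm.zero, fun i => (hm.bounded i).mono hn, hm.normal⟩

lemma FlatteningCoeff.deriv (hm : FlatteningCoeff (n + 1) m) (i j : Fin 3) :
    BoundedCoeff n (pd j (m i)) := (hm.bounded i).deriv j

lemma HalfSobolev.pullback (hm : FlatteningCoeff n m) (i : Fin 3) (hf : HalfSobolev (n + 1) f) :
    HalfSobolev n (pullbackDeriv m i f) :=
  (hf.deriv i).sub (.coeff_mul (hm.bounded i) (hf.deriv 0))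

lemma SobolevBounded.pullbackDeriv_of_hderiv {α : Type*} {P : α → Prop} {R : α → ℝ}
    {F : α → E3 → ℝ} (hm : FlatteningCoeff n m)
    (hF : ∀ a, SobolevBounded P R n (fun d => hderiv a (F d))) (i : Fin 3) :
    SobolevBounded P R n (fun d => pullbackDeriv m i (F d)) :=
  (hF i).sub ((hF 0).coeff_mul (hm.bounded i))

lemma SobolevBounded.pullback {α : Type*} {P : α → Prop} {R : α → ℝ} {F : α → E3 → ℝ}
    (hm : FlatteningCoeff n m) (i : Fin 3) (hF : SobolevBounded P R (n + 1) F) :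
    SobolevBounded P R n (fun d => pullbackDeriv m i (F d)) :=
  .pullbackDeriv_of_hderiv hm (fun _ => hF.deriv) i

lemma hderiv_eq_pullbackDeriv_add (hm : m 0 = 0) (a : Fin 3) (f : E3 → ℝ) :
    hderiv a f = pullbackDeriv m a f + m a * pullbackDeriv m 0 f := by
  unfold pullbackDeriv
  rw [hm]
  ring

lemma SobolevBounded.hderiv_of_pullbackDeriv {α : Type*} {P : α → Prop} {R : α → ℝ}
    {F : α → E3 → ℝ} (hm : FlatteningCoeff n m)
    (hF : ∀ i, SobolevBounded P R n (fun d => pullbackDeriv m i (F d))) (a : Fin 3) :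
    SobolevBounded P R n (fun d => hderiv a (F d)) :=
  ((hF a).add ((hF 0).coeff_mul (hm.bounded a))).congr
    fun _ _ => hderiv_eq_pullbackDeriv_add hm.zero a _

lemma pullbackDeriv_add {l : Fin 3} (hf : DifferentiableOn ℝ f halfSpace)
    (hg : DifferentiableOn ℝ g halfSpace) :
    pullbackDeriv m l (f + g) = pullbackDeriv m l f + pullbackDeriv m l g := by
  unfold pullbackDeriv
  rw [hderiv_add hf hg, hderiv_add hf hg]
  ring

lemma hderiv_pullbackDeriv (hm : FlatteningCoeff n m) (hf : HalfSobolev (k + 2) f) (j l : Fin 3) :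
    hderiv j (pullbackDeriv m l f) =
      pullbackDeriv m l (hderiv j f) - pd j (m l) * hderiv 0 f := by
  have hml := (hm.bounded l).differentiable
  have hnormal := hf.deriv 0
  unfold pullbackDeriv
  rw [hderiv_sub (hf.deriv l).differentiableOn (hml.differentiableOn.mul hnormal.differentiableOn),
    hderiv_coeff_mul hml hnormal.differentiableOn hnormal.zeroOutside, hf.hderiv_comm j l,
    hf.hderiv_comm j 0]
  ring

lemma pullbackDeriv_pullbackDeriv (hm : FlatteningCoeff n m) (hf : HalfSobolev (k + 2) f)
    (l : Fin 3) : pullbackDeriv m l (pullbackDeriv m l f) =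
      hderiv l (hderiv l f) - pd l (m l) * hderiv 0 f -
        (2 : ℝ) • (m l * hderiv l (hderiv 0 f)) + m l * (m l * hderiv 0 (hderiv 0 f)) := by
  rw [pullbackDeriv, hderiv_pullbackDeriv hm hf, hderiv_pullbackDeriv hm hf, hm.normal]
  unfold pullbackDeriv
  rw [hf.hderiv_comm 0 l, ofNat_smul_eq_nsmul, two_nsmul]
  ring

lemma ZeroOnBoundary.hderiv_of_ne (hf : DifferentiableOn ℝ f halfSpace) (hzero : ZeroOnBoundary f)
    {j : Fin 3} (hj : j ≠ 0) : ZeroOnBoundary (hderiv j f) := by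
  intro y hy
  have hmem : y ∈ halfSpace := hy.ge
  have hplane : ∀ t : ℝ, (y + t • basisVec j) 0 = 0 := fun t => by
    simp [hy, basisVec_apply_zero_of_ne hj]
  have hline : HasDerivAt (fun t : ℝ => y + t • basisVec j) (basisVec j) 0 := by
    simpa using ((hasDerivAt_id (0 : ℝ)).smul_const (basisVec j)).const_add y
  have hcomp : HasDerivWithinAt (f ∘ fun t : ℝ => y + t • basisVec j)
      (fderivWithin ℝ f halfSpace y (basisVec j)) univ 0 := by
    refine HasFDerivWithinAt.comp_hasDerivWithinAt (t := halfSpace) 0 ?_ hline.hasDerivWithinAt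
      fun t _ => (hplane t).ge
    simpa using (hf y hmem).hasFDerivWithinAt
  have hconst : (f ∘ fun t : ℝ => y + t • basisVec j) = fun _ => 0 :=
    funext fun t => hzero _ (hplane t)
  rw [hconst, hasDerivWithinAt_univ] at hcomp
  rw [hderiv_apply hmem]
  exact hcomp.unique (hasDerivAt_const _ _)

namespace StokesFlow

lemma Admissible.pred (hd : Admissible (k + 1) d) : Admissible k d :=
  ⟨fun i => (hd.vel i).pred, hd.pres.pred, hd.boundary⟩

lemma Admissible.tangential (hd : Admissible (k + 1) d) {j : Fin 3} (hj : j ≠ 0) :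
    Admissible k (deriv j d) :=
  ⟨fun i => (hd.vel i).deriv j, hd.pres.deriv j,
    fun i => (hd.boundary i).hderiv_of_ne (hd.vel i).differentiableOn hj⟩

lemma Admissible.divergence (hm : FlatteningCoeff (k + 1) m) (hd : Admissible k d) :
    HalfSobolev (k + 1) (divergence m d) := .sum fun i => .pullback hm i (hd.vel i)

lemma Admissible.laplacian (hm : FlatteningCoeff (k + 1) m) (hd : Admissible k d) (i l : Fin 3) :
    HalfSobolev k (pullbackDeriv m l (pullbackDeriv m l (d.vel i))) :=
  .pullback (hm.mono (Nat.le_succ k)) l (.pullback hm l (hd.vel i))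

lemma Admissible.force (hm : FlatteningCoeff (k + 1) m) (hd : Admissible k d) (i : Fin 3) :
    HalfSobolev k (force μ κ m i d) :=
  ((HalfSobolev.sum (hd.laplacian hm i)).smul μ).neg.add
    ((HalfSobolev.pullback (hm.mono (Nat.le_succ k)) i hd.pres).smul κ)

lemma sobolevSq_divergence_le_dataSq (k : ℕ) (d : StokesFlow) :
    sobolevSq (k + 1) (divergence m d) ≤ dataSq μ κ m k d := by
  rw [dataSq, add_assoc]
  exact le_add_of_nonneg_right (add_nonneg (Finset.sum_nonneg fun _ _ => sobolevSq_nonneg _ _)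
    (Finset.sum_nonneg fun _ _ => Finset.sum_nonneg fun _ _ => sobolevSq_nonneg _ _))

lemma dataSq_nonneg (k : ℕ) (d : StokesFlow) : 0 ≤ dataSq μ κ m k d :=
  (sobolevSq_nonneg _ _).trans (sobolevSq_divergence_le_dataSq k d)

lemma sobolevSq_force_le_dataSq (k : ℕ) (d : StokesFlow) (i : Fin 3) :
    sobolevSq k (force μ κ m i d) ≤ dataSq μ κ m k d :=
  calc sobolevSq k (force μ κ m i d) ≤ ∑ i, sobolevSq k (force μ κ m i d) :=
        Finset.single_le_sum (f := fun i => sobolevSq k (force μ κ m i d))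
          (fun _ _ => sobolevSq_nonneg _ _) (Finset.mem_univ i)
    _ ≤ sobolevSq (k + 1) (divergence m d) + ∑ i, sobolevSq k (force μ κ m i d) :=
        le_add_of_nonneg_left (sobolevSq_nonneg _ _)
    _ ≤ dataSq μ κ m k d := le_add_of_nonneg_right
        (Finset.sum_nonneg fun _ _ => Finset.sum_nonneg fun _ _ => sobolevSq_nonneg _ _)

lemma sobolevSq_hderiv_vel_le_dataSq (k : ℕ) (d : StokesFlow) (i a : Fin 3) :
    sobolevSq 0 (hderiv a (d.vel i)) ≤ dataSq μ κ m k d :=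
  calc sobolevSq 0 (hderiv a (d.vel i)) ≤ ∑ a, sobolevSq 0 (hderiv a (d.vel i)) :=
        Finset.single_le_sum (f := fun a => sobolevSq 0 (hderiv a (d.vel i)))
          (fun _ _ => sobolevSq_nonneg _ _) (Finset.mem_univ a)
    _ ≤ ∑ i, ∑ a, sobolevSq 0 (hderiv a (d.vel i)) :=
        Finset.single_le_sum (f := fun i => ∑ a, sobolevSq 0 (hderiv a (d.vel i)))
          (fun _ _ => Finset.sum_nonneg fun _ _ => sobolevSq_nonneg _ _) (Finset.mem_univ i)
    _ ≤ dataSq μ κ m k d := le_add_of_nonneg_left (add_nonneg (sobolevSq_nonneg _ _)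
        (Finset.sum_nonneg fun _ _ => sobolevSq_nonneg _ _))

lemma dataSq_le_succ (k : ℕ) (d : StokesFlow) : dataSq μ κ m k d ≤ dataSq μ κ m (k + 1) d := by
  unfold dataSq
  gcongr <;> exact sobolevSq_le_succ _ _

end StokesFlow

namespace SobolevBounded

open StokesFlow

lemma divergence (hm : FlatteningCoeff (k + 1) m) :
    SobolevBounded (Admissible k) (dataSq μ κ m k) (k + 1) (StokesFlow.divergence m) :=
  .of_le (fun _ hd => hd.divergence hm) fun d _ => sobolevSq_divergence_le_dataSq k d

lemma force (hm : FlatteningCoeff (k + 1) m) (i : Fin 3) :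
    SobolevBounded (Admissible k) (dataSq μ κ m k) k (StokesFlow.force μ κ m i) :=
  .of_le (fun _ hd => hd.force hm i) fun d _ => sobolevSq_force_le_dataSq k d i

lemma hderiv_vel (i a : Fin 3) :
    SobolevBounded (Admissible k) (dataSq μ κ m k) 0 (fun d => hderiv a (d.vel i)) :=
  .of_le (fun _ hd => ((hd.vel i).deriv a).mono (Nat.zero_le _))
    fun d _ => sobolevSq_hderiv_vel_le_dataSq k d i a

end SobolevBounded

end StokesOperators

/-! ### Recovery of the normal derivatives -/

section NormalDerivatives

/-- The coefficient `1 + m₁² + m₂²` of `∂₀∂₀` in the flattened Laplacian. -/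
def normalCoeff (m : Fin 3 → E3 → ℝ) : E3 → ℝ := (fun _ => 1) + (m 1 * m 1 + m 2 * m 2)

/-- The summand of `DₗDₗf` without the term `mₗ²∂₀∂₀f`. -/
def tangentialTerm (m : Fin 3 → E3 → ℝ) (l : Fin 3) (f : E3 → ℝ) : E3 → ℝ :=
  hderiv l (hderiv l f) - pd l (m l) * hderiv 0 f - (2 : ℝ) • (m l * hderiv l (hderiv 0 f))

/-- The flattened Laplacian without its `∂₀∂₀` term. -/
def tangentialPart (m : Fin 3 → E3 → ℝ) (f : E3 → ℝ) : E3 → ℝ :=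
  tangentialTerm m 1 f + tangentialTerm m 2 f

variable {m : Fin 3 → E3 → ℝ} {μ κ : ℝ} {k n : ℕ} {f : E3 → ℝ} {d : StokesFlow}

lemma one_le_normalCoeff (m : Fin 3 → E3 → ℝ) (y : E3) : 1 ≤ normalCoeff m y :=
  le_add_of_nonneg_right (add_nonneg (mul_self_nonneg (m 1 y)) (mul_self_nonneg (m 2 y)))

lemma FlatteningCoeff.normalCoeff (hm : FlatteningCoeff n m) : BoundedCoeff n (normalCoeff m) :=
  (BoundedCoeff.const 1).add
    (((hm.bounded 1).mul (hm.bounded 1)).add ((hm.bounded 2).mul (hm.bounded 2)))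

lemma sum_pullbackDeriv_pullbackDeriv (hm : FlatteningCoeff n m) (hf : HalfSobolev (k + 2) f) :
    ∑ l, pullbackDeriv m l (pullbackDeriv m l f) =
      normalCoeff m * hderiv 0 (hderiv 0 f) + tangentialPart m f := by
  have hpd : pd 0 (0 : E3 → ℝ) = 0 := hm.zero ▸ hm.normal 0
  simp only [Fin.sum_univ_three, pullbackDeriv_pullbackDeriv hm hf, hm.zero, hpd]
  funext y
  simp only [tangentialPart, tangentialTerm, normalCoeff, Pi.sub_apply, Pi.add_apply, Pi.mul_apply,
    Pi.smul_apply, Pi.zero_apply, smul_eq_mul]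
  ring

namespace StokesFlow

lemma force_apply (hm : FlatteningCoeff n m) (hd : Admissible k d) (i : Fin 3) (y : E3) :
    force μ κ m i d y =
      -(μ * (normalCoeff m y * hderiv 0 (hderiv 0 (d.vel i)) y + tangentialPart m (d.vel i) y)) +
        κ * (hderiv i d.pres y - m i y * hderiv 0 d.pres y) := by
  rw [force, sum_pullbackDeriv_pullbackDeriv hm (hd.vel i)]
  rfl

lemma hderiv_zero_divergence_apply (hm : FlatteningCoeff (k + 1) m) (hd : Admissible k d) (y : E3) :
    hderiv 0 (divergence m d) y = hderiv 0 (hderiv 0 (d.vel 0)) y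
      - m 1 y * hderiv 0 (hderiv 0 (d.vel 1)) y - m 2 y * hderiv 0 (hderiv 0 (d.vel 2)) y
      + hderiv 1 (hderiv 0 (d.vel 1)) y + hderiv 2 (hderiv 0 (d.vel 2)) y := by
  unfold divergence
  rw [hderiv_sum fun l _ => (HalfSobolev.pullback hm l (hd.vel l)).differentiableOn]
  simp only [hderiv_pullbackDeriv hm (hd.vel _), Fin.sum_univ_three, hm.normal]
  simp only [pullbackDeriv, hm.zero, Pi.sub_apply, Pi.add_apply, Pi.mul_apply, Pi.zero_apply]
  ring

/-- The combination of the data and of tangential derivatives that equals `∂₀p`. -/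
def normalPresDeriv (μ κ : ℝ) (m : Fin 3 → E3 → ℝ) (d : StokesFlow) : E3 → ℝ :=
  (normalCoeff m)⁻¹ * (κ⁻¹ • (force μ κ m 0 d - m 1 * force μ κ m 1 d - m 2 * force μ κ m 2 d
    + μ • (normalCoeff m * (hderiv 0 (divergence m d) - hderiv 1 (hderiv 0 (d.vel 1))
      - hderiv 2 (hderiv 0 (d.vel 2))))
    + μ • (tangentialPart m (d.vel 0) - m 1 * tangentialPart m (d.vel 1)
      - m 2 * tangentialPart m (d.vel 2))) + (m 1 * hderiv 1 d.pres + m 2 * hderiv 2 d.pres))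

/-- In `g₀ - m₁g₁ - m₂g₂` the second normal derivatives of the velocity combine to those in the
normal derivative of the divergence. -/
lemma hderiv_zero_pres_eq (hm : FlatteningCoeff (k + 1) m) (hκ : κ ≠ 0) (hd : Admissible k d) :
    hderiv 0 d.pres = normalPresDeriv μ κ m d := by
  funext y
  have hne : normalCoeff m y ≠ 0 := by linarith [one_le_normalCoeff m y]
  have hcoeff : normalCoeff m y = 1 + (m 1 y * m 1 y + m 2 y * m 2 y) := rfl
  simp only [normalPresDeriv, Pi.sub_apply, Pi.add_apply, Pi.mul_apply, Pi.smul_apply, smul_eq_mul,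
    Pi.inv_apply]
  rw [force_apply hm hd, force_apply hm hd, force_apply hm hd, hderiv_zero_divergence_apply hm hd,
    hm.zero, Pi.zero_apply]
  field_simp
  rw [hcoeff]
  ring

lemma hderiv_zero_hderiv_zero_vel_eq (hm : FlatteningCoeff n m) (hμ : μ ≠ 0) (hd : Admissible k d)
    (i : Fin 3) : hderiv 0 (hderiv 0 (d.vel i)) = μ⁻¹ • ((normalCoeff m)⁻¹ *
      (κ • (hderiv i d.pres - m i * hderiv 0 d.pres) - force μ κ m i d
        - μ • tangentialPart m (d.vel i))) := by
  funext y
  have hne : normalCoeff m y ≠ 0 := by linarith [one_le_normalCoeff m y]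
  simp only [Pi.sub_apply, Pi.mul_apply, Pi.smul_apply, smul_eq_mul, Pi.inv_apply]
  rw [force_apply hm hd]
  field_simp
  ring

/-- Uniform bounds in terms of `R` for the data of the Stokes system and for all derivatives of the
flow that involve a tangential direction, at order `k`. -/
structure TangentialBounds (μ κ : ℝ) (m : Fin 3 → E3 → ℝ) (k : ℕ) (R : StokesFlow → ℝ) : Prop where
  force : ∀ i, SobolevBounded (Admissible k) R k (force μ κ m i)
  divergence : SobolevBounded (Admissible k) R k (fun d => hderiv 0 (divergence m d))
  vel₂ : ∀ j ≠ 0, ∀ a i, SobolevBounded (Admissible k) R k (fun d => hderiv j (hderiv a (d.vel i)))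
  pres : ∀ j ≠ 0, SobolevBounded (Admissible k) R k (fun d => hderiv j d.pres)
  vel₁ : ∀ a i, SobolevBounded (Admissible k) R k (fun d => hderiv a (d.vel i))

namespace TangentialBounds

variable {R : StokesFlow → ℝ}

lemma tangentialTerm (hR : TangentialBounds μ κ m k R) (hm : FlatteningCoeff (k + 1) m) {l : Fin 3}
    (hl : l ≠ 0) (i : Fin 3) :
    SobolevBounded (Admissible k) R k (fun d => tangentialTerm m l (d.vel i)) :=
  ((hR.vel₂ l hl l i).sub ((hR.vel₁ 0 i).coeff_mul (hm.deriv l l))).sub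
    (((hR.vel₂ l hl 0 i).coeff_mul (hm.bounded l).pred).smul 2)

lemma tangentialPart (hR : TangentialBounds μ κ m k R) (hm : FlatteningCoeff (k + 1) m)
    (i : Fin 3) : SobolevBounded (Admissible k) R k (fun d => tangentialPart m (d.vel i)) :=
  (hR.tangentialTerm hm (by decide) i).add (hR.tangentialTerm hm (by decide) i)

lemma sub_mul_sub_mul (hm : FlatteningCoeff (k + 1) m) {F : Fin 3 → StokesFlow → E3 → ℝ}
    (hF : ∀ i, SobolevBounded (Admissible k) R k (F i)) :
    SobolevBounded (Admissible k) R k (fun d => F 0 d - m 1 * F 1 d - m 2 * F 2 d) :=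
  ((hF 0).sub ((hF 1).coeff_mul (hm.bounded 1).pred)).sub ((hF 2).coeff_mul (hm.bounded 2).pred)

lemma hderiv_pres (hR : TangentialBounds μ κ m k R) (hm : FlatteningCoeff (k + 1) m) (hκ : κ ≠ 0)
    (i : Fin 3) : SobolevBounded (Admissible k) R k (fun d => hderiv i d.pres) := by
  rcases eq_or_ne i 0 with rfl | hi
  swap
  · exact hR.pres i hi
  have hcoeff := hm.normalCoeff.pred
  refine SobolevBounded.congr ?_ fun d hd => hderiv_zero_pres_eq (μ := μ) hm hκ hd
  refine .coeff_mul (hcoeff.inv_of_one_le (one_le_normalCoeff m))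
    (.add (.smul _ (.add (.add ?_ ?_) ?_)) ?_)
  · exact sub_mul_sub_mul hm hR.force
  · exact .smul _ (.coeff_mul hcoeff ((hR.divergence.sub (hR.vel₂ 1 (by decide) 0 1)).sub
      (hR.vel₂ 2 (by decide) 0 2)))
  · exact .smul _ (sub_mul_sub_mul hm (hR.tangentialPart hm))
  · exact ((hR.pres 1 (by decide)).coeff_mul (hm.bounded 1).pred).add
      ((hR.pres 2 (by decide)).coeff_mul (hm.bounded 2).pred)

lemma hderiv_zero_hderiv_zero_vel (hR : TangentialBounds μ κ m k R)
    (hm : FlatteningCoeff (k + 1) m) (hμ : μ ≠ 0) (hκ : κ ≠ 0) (i : Fin 3) :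
    SobolevBounded (Admissible k) R k (fun d => hderiv 0 (hderiv 0 (d.vel i))) := by
  refine SobolevBounded.congr ?_ fun d hd => hderiv_zero_hderiv_zero_vel_eq (κ := κ) hm hμ hd i
  have hpres := hR.hderiv_pres hm hκ
  exact .smul _ (.coeff_mul (hm.normalCoeff.pred.inv_of_one_le (one_le_normalCoeff m))
    (((SobolevBounded.smul κ ((hpres i).sub ((hpres 0).coeff_mul (hm.bounded i).pred))).sub
      (hR.force i)).sub ((hR.tangentialPart hm i).smul μ)))

lemma hderiv_hderiv_vel (hR : TangentialBounds μ κ m k R) (hm : FlatteningCoeff (k + 1) m)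
    (hμ : μ ≠ 0) (hκ : κ ≠ 0) (i a b : Fin 3) :
    SobolevBounded (Admissible k) R k (fun d => hderiv b (hderiv a (d.vel i))) := by
  rcases eq_or_ne b 0 with rfl | hb
  · rcases eq_or_ne a 0 with rfl | ha
    · exact hR.hderiv_zero_hderiv_zero_vel hm hμ hκ i
    · exact (hR.vel₂ a ha 0 i).congr fun d hd => (hd.vel i).hderiv_comm 0 a
  · exact hR.vel₂ b hb a i

end TangentialBounds

end StokesFlow

end NormalDerivatives

/-! ### Induction on the order -/

namespace StokesFlow

/-- The a priori estimate of order `k` on the half-space: `‖∇v‖_{H^{k+1}}` and `‖∇p‖_{H^k}` are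
controlled by the data. -/
structure RegularityEstimate (μ κ : ℝ) (m : Fin 3 → E3 → ℝ) (k : ℕ) : Prop where
  vel : ∀ i a, SobolevBounded (Admissible k) (dataSq μ κ m k) (k + 1) (fun d => hderiv a (d.vel i))
  pres : ∀ a, SobolevBounded (Admissible k) (dataSq μ κ m k) k (fun d => hderiv a d.pres)

variable {m : Fin 3 → E3 → ℝ} {μ κ : ℝ} {k : ℕ} {d : StokesFlow}

lemma _root_.Cattabriga.SobolevBounded.dataSq_succ {n : ℕ} {F : StokesFlow → E3 → ℝ}
    (hF : SobolevBounded (Admissible k) (dataSq μ κ m k) n F) :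
    SobolevBounded (Admissible (k + 1)) (dataSq μ κ m (k + 1)) n F :=
  (hF.comp (Q := Admissible (k + 1)) id fun _ hd => hd.pred).trans
    ⟨1, zero_le_one, fun d _ => (dataSq_le_succ k d).trans_eq (one_mul _).symm⟩

lemma exists_dataSq_le {α : Type*} {P : α → Prop} {R : α → ℝ} {flow : α → StokesFlow}
    (hdiv : SobolevBounded P R (k + 1) (fun e => divergence m (flow e)))
    (hforce : ∀ i, SobolevBounded P R k (fun e => force μ κ m i (flow e)))
    (hvel : ∀ i a, SobolevBounded P R 0 (fun e => hderiv a ((flow e).vel i))) :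
    ∃ C, 0 ≤ C ∧ ∀ e, P e → dataSq μ κ m k (flow e) ≤ C * R e := by
  obtain ⟨A, hA, hdiv⟩ := hdiv
  choose B hB hforce using hforce
  choose C hC hvel using hvel
  have hBsum := Finset.sum_nonneg fun i (_ : i ∈ Finset.univ) => hB i
  have hCsum := Finset.sum_nonneg fun i (_ : i ∈ Finset.univ) =>
    Finset.sum_nonneg fun a (_ : a ∈ Finset.univ) => hC i a
  refine ⟨A + ∑ i, B i + ∑ i, ∑ a, C i a, by positivity, fun e he => ?_⟩
  simp only [add_mul, Finset.sum_mul]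
  exact add_le_add (add_le_add (hdiv e he).2 (Finset.sum_le_sum fun i _ => (hforce i e he).2))
    (Finset.sum_le_sum fun i _ => Finset.sum_le_sum fun a _ => (hvel i a e he).2)

lemma divergence_deriv (hm : FlatteningCoeff (k + 1) m) (hd : Admissible k d) (j : Fin 3) :
    divergence m (deriv j d) =
      hderiv j (divergence m d) + ∑ i, pd j (m i) * hderiv 0 (d.vel i) := by
  unfold divergence deriv
  rw [hderiv_sum fun l _ => (HalfSobolev.pullback hm l (hd.vel l)).differentiableOn]
  simp only [hderiv_pullbackDeriv hm (hd.vel _), Finset.sum_sub_distrib, sub_add_cancel]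

lemma pullbackDeriv_pullbackDeriv_hderiv (hm : FlatteningCoeff (k + 2) m)
    (hd : Admissible (k + 1) d) (i j l : Fin 3) :
    pullbackDeriv m l (pullbackDeriv m l (hderiv j (d.vel i))) =
      hderiv j (pullbackDeriv m l (pullbackDeriv m l (d.vel i))) +
        (pd j (m l) * hderiv 0 (pullbackDeriv m l (d.vel i)) +
          pullbackDeriv m l (pd j (m l) * hderiv 0 (d.vel i))) := by
  have hpull : HalfSobolev (k + 2) (pullbackDeriv m l (d.vel i)) := .pullback hm l (hd.vel i)
  have hlower : HalfSobolev (k + 1) (pd j (m l) * hderiv 0 (d.vel i)) :=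
    .coeff_mul (hm.deriv l j) ((hd.vel i).deriv 0).pred
  have hcomm : pullbackDeriv m l (hderiv j (d.vel i)) =
      hderiv j (pullbackDeriv m l (d.vel i)) + pd j (m l) * hderiv 0 (d.vel i) := by
    rw [hderiv_pullbackDeriv hm (hd.vel i), sub_add_cancel]
  rw [hcomm, pullbackDeriv_add (hpull.deriv j).differentiableOn hlower.differentiableOn,
    hderiv_pullbackDeriv hm hpull]
  ring

lemma hderiv_force (hm : FlatteningCoeff (k + 2) m) (hd : Admissible (k + 1) d) (i j : Fin 3) :
    hderiv j (force μ κ m i d) =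
      -(μ • ∑ l, hderiv j (pullbackDeriv m l (pullbackDeriv m l (d.vel i)))) +
        κ • (pullbackDeriv m i (hderiv j d.pres) - pd j (m i) * hderiv 0 d.pres) := by
  have hlap := hd.laplacian hm i
  have hsum := HalfSobolev.sum hlap
  have hpres : HalfSobolev (k + 1) (pullbackDeriv m i d.pres) :=
    .pullback (hm.mono (Nat.le_succ _)) i hd.pres
  unfold force
  rw [hderiv_add (hsum.smul μ).neg.differentiableOn (hpres.smul κ).differentiableOn,
    hderiv_neg (hsum.smul μ).differentiableOn, hderiv_smul _ hsum.differentiableOn,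
    hderiv_sum fun l _ => (hlap l).differentiableOn, hderiv_smul _ hpres.differentiableOn,
    hderiv_pullbackDeriv hm hd.pres]

lemma force_deriv (hm : FlatteningCoeff (k + 2) m) (hd : Admissible (k + 1) d) (i j : Fin 3) :
    force μ κ m i (deriv j d) = hderiv j (force μ κ m i d) -
      μ • (∑ l, (pd j (m l) * hderiv 0 (pullbackDeriv m l (d.vel i)) +
        pullbackDeriv m l (pd j (m l) * hderiv 0 (d.vel i)))) +
      κ • (pd j (m i) * hderiv 0 d.pres) := by
  rw [hderiv_force hm hd]
  simp only [force, deriv, pullbackDeriv_pullbackDeriv_hderiv hm hd]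
  rw [Finset.sum_add_distrib, smul_add, smul_sub]
  abel

namespace RegularityEstimate

lemma divergence_deriv (hE : RegularityEstimate μ κ m k)
    (hm : FlatteningCoeff (k + 2) m) (j : Fin 3) :
    SobolevBounded (Admissible (k + 1)) (dataSq μ κ m (k + 1)) (k + 1)
      (fun d => divergence m (deriv j d)) :=
  ((SobolevBounded.divergence hm).deriv.add (.sum fun i =>
    (hE.vel i 0).dataSq_succ.coeff_mul (hm.deriv i j))).congr
    fun _ hd => StokesFlow.divergence_deriv hm hd j

lemma force_deriv (hE : RegularityEstimate μ κ m k) (hm : FlatteningCoeff (k + 2) m) (i j : Fin 3) :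
    SobolevBounded (Admissible (k + 1)) (dataSq μ κ m (k + 1)) k
      (fun d => force μ κ m i (deriv j d)) := by
  have hvel := (hE.vel i 0).dataSq_succ
  have hmk : FlatteningCoeff k m := hm.mono (by omega)
  refine SobolevBounded.congr ?_ fun d hd => StokesFlow.force_deriv hm hd i j
  refine ((SobolevBounded.force hm i).deriv.sub (.smul _ (.sum fun l => ?_))).add
    (.smul _ ((hE.pres 0).dataSq_succ.coeff_mul (hm.deriv i j).pred))
  refine .add (.coeff_mul (hm.deriv l j).pred ?_) (.pullback hmk l (hvel.coeff_mul (hm.deriv l j)))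
  refine (hvel.pullback hmk l).congr fun d hd => ?_
  rw [hderiv_pullbackDeriv hm (hd.vel i), hm.normal, zero_mul, sub_zero]

lemma hderiv_vel_deriv (hE : RegularityEstimate μ κ m k) (i a j : Fin 3) :
    SobolevBounded (Admissible (k + 1)) (dataSq μ κ m (k + 1)) 0
      (fun d => hderiv a ((deriv j d).vel i)) :=
  ((hE.vel i a).dataSq_succ.deriv.mono (Nat.zero_le k)).congr
    fun _ hd => (hd.vel i).hderiv_comm a j

lemma exists_dataSq_deriv_le (hE : RegularityEstimate μ κ m k)
    (hm : FlatteningCoeff (k + 2) m) (j : Fin 3) :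
    ∃ C, 0 ≤ C ∧ ∀ d, Admissible (k + 1) d →
      dataSq μ κ m k (deriv j d) ≤ C * dataSq μ κ m (k + 1) d :=
  exists_dataSq_le (hE.divergence_deriv hm j) (hE.force_deriv hm · j)
    (hE.hderiv_vel_deriv · · j)

lemma comp_deriv (hE : RegularityEstimate μ κ m k)
    (hm : FlatteningCoeff (k + 2) m) {j : Fin 3} (hj : j ≠ 0) {n : ℕ}
    {F : StokesFlow → E3 → ℝ} (hF : SobolevBounded (Admissible k) (dataSq μ κ m k) n F) :
    SobolevBounded (Admissible (k + 1)) (dataSq μ κ m (k + 1)) n (fun d => F (deriv j d)) :=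
  (hF.comp (deriv j) fun _ hd => hd.tangential hj).trans (hE.exists_dataSq_deriv_le hm j)

lemma tangentialBounds (hE : RegularityEstimate μ κ m k) (hm : FlatteningCoeff (k + 2) m) :
    TangentialBounds μ κ m (k + 1) (dataSq μ κ m (k + 1)) where
  force := SobolevBounded.force hm
  divergence := (SobolevBounded.divergence hm).deriv
  vel₂ j hj a i := (hE.comp_deriv hm hj (hE.vel i a)).congr fun _ hd => (hd.vel i).hderiv_comm j a
  pres j hj := .succ ((hE.pres j).dataSq_succ.mono (Nat.zero_le _))
    (fun a => hE.comp_deriv hm hj (hE.pres a)) fun _ hd => hd.pres.deriv j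
  vel₁ a i := (hE.vel i a).dataSq_succ

lemma succ (hE : RegularityEstimate μ κ m k)
    (hm : FlatteningCoeff (k + 2) m) (hμ : μ ≠ 0) (hκ : κ ≠ 0) :
    RegularityEstimate μ κ m (k + 1) where
  vel i a := .succ ((hE.vel i a).dataSq_succ.mono (Nat.zero_le _))
    (fun b => (hE.tangentialBounds hm).hderiv_hderiv_vel hm hμ hκ i a b)
    fun _ hd => (hd.vel i).deriv a
  pres a := (hE.tangentialBounds hm).hderiv_pres hm hκ a

end RegularityEstimate

end StokesFlow

/-! ### Line primitives and translations -/

section LinePrimitive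

variable {E : Type*} [NormedAddCommGroup E] [NormedSpace ℝ E] {v : E} {z g F : E → ℝ}

/-- `g` is the derivative of `z` in direction `v` in integrated form: the fundamental theorem of
calculus holds along every line parallel to `v`. Unlike pointwise differentiability, this survives
the extension of boundary-vanishing functions by zero. -/
def IsLinePrimitive (v : E) (z g : E → ℝ) : Prop :=
  ∀ y t, ∫ s in (0 : ℝ)..t, g (y + s • v) = z (y + t • v) - z y

/-- The translate `f (· + v)`. -/
def translate (v : E) (f : E → ℝ) : E → ℝ := fun y => f (y + v)

lemma integral_mul_sub_eq_intervalIntegral [MeasurableSpace E] {μ : Measure E} [SFinite μ]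
    (hz : IsLinePrimitive v z g) {t : ℝ}
    (hint : Integrable (fun q : ℝ × E => F q.2 * g (q.2 + q.1 • v))
      ((volume.restrict (uIoc 0 t)).prod μ)) :
    ∫ y, F y * (z (y + t • v) - z y) ∂μ = ∫ s in (0 : ℝ)..t, ∫ y, F y * g (y + s • v) ∂μ := by
  rw [intervalIntegral.intervalIntegral_eq_integral_uIoc,
    integral_integral_swap (f := fun s y => F y * g (y + s • v)) hint, smul_eq_mul,
    ← integral_const_mul]
  congr 1
  funext y
  rw [← hz y t, intervalIntegral.intervalIntegral_eq_integral_uIoc, integral_const_mul,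
    smul_eq_mul]
  ring

instance isFiniteMeasure_restrict_uIoc (a b : ℝ) :
    IsFiniteMeasure (volume.restrict (uIoc a b)) := by
  unfold uIoc
  infer_instance

variable [FiniteDimensional ℝ E] [MeasurableSpace E] [BorelSpace E] {μ : Measure E}
  [μ.IsAddHaarMeasure]

lemma measurePreserving_prod_add_smul (ν : Measure ℝ) [SFinite ν] (v : E) :
    MeasurePreserving (fun q : ℝ × E => (q.1, q.2 + q.1 • v)) (ν.prod μ) (ν.prod μ) :=
  MeasurePreserving.skew_product (g := fun s y => y + s • v) (MeasurePreserving.id ν)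
    (by fun_prop) (Eventually.of_forall fun s => (measurePreserving_add_right μ (s • v)).map_eq)

lemma IsLinePrimitive.integral_eq_zero (hz : IsLinePrimitive v z g) (hzint : Integrable z μ)
    (hgint : Integrable g μ) : ∫ y, g y ∂μ = 0 := by
  have hfubini := integral_mul_sub_eq_intervalIntegral (μ := μ) (F := fun _ => 1) hz (t := 1) <| by
    simp only [one_mul]
    exact (measurePreserving_prod_add_smul (volume.restrict (uIoc (0 : ℝ) 1))
      v).integrable_comp_of_integrable (hgint.comp_snd (volume.restrict (uIoc (0 : ℝ) 1)))
  have htranslate : ∀ s : ℝ, ∫ y, g (y + s • v) ∂μ = ∫ y, g y ∂μ := fun s =>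
    integral_add_right_eq_self g (s • v)
  simp only [one_mul, htranslate] at hfubini
  rw [integral_sub (hzint.comp_add_right _) hzint, integral_add_right_eq_self] at hfubini
  simpa using hfubini.symm

lemma continuous_integral_mul_translate (hF : MemLp F 2 μ) (hg : MemLp g 2 μ) (v : E) :
    Continuous fun t : ℝ => ∫ y, F y * g (y + t • v) ∂μ := by
  have hshift : ∀ t : ℝ, MeasurePreserving (fun y : E => y + t • v) μ μ := fun t =>
    measurePreserving_add_right μ (t • v)
  have hcurve : Continuous fun t : ℝ => (⟨fun y : E => y + t • v, by fun_prop⟩ : C(E, E)) := by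
    refine ContinuousMap.continuous_of_continuous_uncurry _ ?_
    simp only [Function.uncurry_def, ContinuousMap.coe_mk]
    fun_prop
  have hLp : Continuous fun t : ℝ =>
      Lp.compMeasurePreserving (fun y : E => y + t • v) (hshift t) (hg.toLp g) :=
    Continuous.compMeasurePreservingLp (f := fun _ => hg.toLp g) continuous_const hcurve hshift
      (by norm_num)
  convert! continuous_const.inner (𝕜 := ℝ) (f := fun _ : ℝ => hF.toLp F) hLp using 2 with t
  rw [L2.inner_def, Lp.toLp_compMeasurePreserving hg (hshift t)]
  refine integral_congr_ae ?_
  filter_upwards [hF.coeFn_toLp, (hg.comp_measurePreserving (hshift t)).coeFn_toLp] with y hFy hgy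
  simp only [hFy, hgy, Function.comp_apply]
  exact mul_comm _ _

lemma IsLinePrimitive.integral_mul_sub_eq (hz : IsLinePrimitive v z g) (hF : MemLp F 2 μ)
    (hg : MemLp g 2 μ) (t : ℝ) :
    ∫ y, F y * (z (y + t • v) - z y) ∂μ = ∫ s in (0 : ℝ)..t, ∫ y, F y * g (y + s • v) ∂μ :=
  integral_mul_sub_eq_intervalIntegral hz <| (hF.comp_snd _).integrable_mul <|
    (hg.comp_snd _).comp_measurePreserving (measurePreserving_prod_add_smul _ v)

lemma IsLinePrimitive.tendsto_integral_mul_slope (hz : IsLinePrimitive v z g) (hF : MemLp F 2 μ)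
    (hg : MemLp g 2 μ) :
    Tendsto (fun t : ℝ => t⁻¹ * ∫ y, F y * (z (y + t • v) - z y) ∂μ) (nhdsWithin 0 {0}ᶜ)
      (nhds (∫ y, F y * g y ∂μ)) := by
  have hcont := continuous_integral_mul_translate hF hg v
  have hderiv := intervalIntegral.integral_hasDerivAt_right (hcont.intervalIntegrable 0 0)
    (hcont.stronglyMeasurableAtFilter _ _) hcont.continuousAt
  have hslope := hderiv.tendsto_slope_zero
  simp only [zero_smul, add_zero, zero_add, intervalIntegral.integral_same, sub_zero,
    smul_eq_mul] at hslope
  exact hslope.congr fun t => by rw [hz.integral_mul_sub_eq hF hg]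

end LinePrimitive

/-! ### Integration by parts on the half-space -/

section IntegrationByParts

variable {f w z : E3 → ℝ} {a j : Fin 3}

lemma ZeroOnBoundary.mul_left (c : E3 → ℝ) (hf : ZeroOnBoundary f) : ZeroOnBoundary (c * f) :=
  fun y hy => by simp [hf y hy]

lemma ZeroOnBoundary.continuous (hzero : ZeroOnBoundary f) (hout : ZeroOutside f)
    (hf : ContinuousOn f halfSpace) : Continuous f := by
  have hindicator : halfSpace.indicator f = f :=
    indicator_eq_self.2 fun y hy => by_contra fun hmem => hy (hout y hmem)
  rw [← hindicator]
  refine continuous_indicator (fun y hy => hzero y ?_) (by rwa [isClosed_halfSpace.closure_eq])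
  rw [isClosed_halfSpace.frontier_eq] at hy
  by_contra hne
  exact hy.2 (setOf_pos_subset_interior (lt_of_le_of_ne hy.1 (Ne.symm hne)))

lemma hasDerivAt_line {y : E3} {s : ℝ} (hf : DifferentiableOn ℝ f halfSpace)
    (hmem : ∀ᶠ t in nhds s, y + t • basisVec a ∈ halfSpace) :
    HasDerivAt (fun t : ℝ => f (y + t • basisVec a)) (hderiv a f (y + s • basisVec a)) s := by
  have hs : y + s • basisVec a ∈ halfSpace := hmem.self_of_nhds
  rw [hderiv_apply hs]
  have hline : HasDerivAt (fun t : ℝ => y + t • basisVec a) (basisVec a) s := by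
    simpa using ((hasDerivAt_id s).smul_const (basisVec a)).const_add y
  exact ((hf _ hs).hasFDerivWithinAt.comp_hasDerivWithinAt (t := halfSpace) s
    hline.hasDerivWithinAt fun t ht => ht).hasDerivAt hmem

lemma hasDerivAt_line_of_notMem {y : E3} {s : ℝ} (hout : ZeroOutside f)
    (hs : y + s • basisVec a ∉ halfSpace) :
    HasDerivAt (fun t : ℝ => f (y + t • basisVec a)) (hderiv a f (y + s • basisVec a)) s := by
  have hline : Continuous fun t : ℝ => y + t • basisVec a := by fun_prop
  rw [ZeroOutside.hderiv _ hs]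
  refine (hasDerivAt_const s (0 : ℝ)).congr_of_eventuallyEq ?_
  filter_upwards [(isClosed_halfSpace.isOpen_compl.preimage hline).mem_nhds hs] with t ht
  exact hout _ ht

lemma intervalIntegrable_hderiv_line (hf : ContDiffOn ℝ 1 f halfSpace) (y : E3) (t : ℝ) :
    IntervalIntegrable (fun s : ℝ => hderiv a f (y + s • basisVec a)) volume 0 t := by
  have hline : Continuous fun s : ℝ => y + s • basisVec a := by fun_prop
  have hclosed : IsClosed ((fun s : ℝ => y + s • basisVec a) ⁻¹' halfSpace) :=
    isClosed_halfSpace.preimage hline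
  have hindicator : ((fun s : ℝ => y + s • basisVec a) ⁻¹' halfSpace).indicator
      (fun s : ℝ => hderiv a f (y + s • basisVec a)) =
        fun s : ℝ => hderiv a f (y + s • basisVec a) :=
    indicator_eq_self.2 fun s hs => by_contra fun hmem => hs (ZeroOutside.hderiv _ hmem)
  rw [intervalIntegrable_iff', ← hindicator, integrableOn_indicator_iff hclosed.measurableSet]
  exact ContinuousOn.integrableOn_compact (isCompact_uIcc.inter_left hclosed)
    ((contDiffOn_hderiv (m := 0) hf a).continuousOn.comp hline.continuousOn fun s hs => hs.1)

lemma add_smul_basisVec_mem_halfSpace (hj : j ≠ 0) (t : ℝ) (y : E3) :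
    y + t • basisVec j ∈ halfSpace ↔ y ∈ halfSpace := by
  simp [halfSpace, basisVec_apply_zero_of_ne hj]

lemma isLinePrimitive_hderiv_of_ne (hj : j ≠ 0) (hf : ContDiffOn ℝ 1 f halfSpace)
    (hout : ZeroOutside f) : IsLinePrimitive (basisVec j) f (hderiv j f) := by
  intro y t
  have hderivAt : ∀ s : ℝ, HasDerivAt (fun t : ℝ => f (y + t • basisVec j))
      (hderiv j f (y + s • basisVec j)) s := by
    intro s
    by_cases hy : y ∈ halfSpace
    · exact hasDerivAt_line (hf.differentiableOn one_ne_zero)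
        (Eventually.of_forall fun r => (add_smul_basisVec_mem_halfSpace hj r y).2 hy)
    · exact hasDerivAt_line_of_notMem hout (mt (add_smul_basisVec_mem_halfSpace hj s y).1 hy)
  simpa using intervalIntegral.integral_eq_sub_of_hasDerivAt (fun s _ => hderivAt s)
    (intervalIntegrable_hderiv_line hf y t)

lemma isLinePrimitive_hderiv_zero (hzero : ZeroOnBoundary f) (hf : ContDiffOn ℝ 1 f halfSpace)
    (hout : ZeroOutside f) : IsLinePrimitive (basisVec 0) f (hderiv 0 f) := by
  intro y t
  have hcont : Continuous fun s : ℝ => f (y + s • basisVec 0) :=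
    (hzero.continuous hout hf.continuousOn).comp (by fun_prop)
  have hnormal : ∀ r : ℝ, (y + r • basisVec 0) 0 = y 0 + r := fun r => by
    simp [basisVec_zero_apply_zero]
  have hderivAt : ∀ s ≠ -y 0, HasDerivAt (fun t : ℝ => f (y + t • basisVec 0))
      (hderiv 0 f (y + s • basisVec 0)) s := by
    intro s hs
    rcases lt_or_gt_of_ne hs with hlt | hgt
    · refine hasDerivAt_line_of_notMem hout fun (hmem : 0 ≤ (y + s • basisVec 0) 0) => ?_
      linarith [hnormal s]
    · refine hasDerivAt_line (hf.differentiableOn one_ne_zero) ?_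
      filter_upwards [Ioi_mem_nhds hgt] with r hr
      change 0 ≤ (y + r • basisVec 0) 0
      linarith [hnormal r, mem_Ioi.1 hr]
  simpa using integral_eq_of_hasDerivAt_off_countable (fun s : ℝ => f (y + s • basisVec 0))
    (fun s : ℝ => hderiv 0 f (y + s • basisVec 0)) (countable_singleton (-y 0))
    hcont.continuousOn (fun s hs => hderivAt s hs.2) (intervalIntegrable_hderiv_line hf y t)

lemma isLinePrimitive_hderiv (hb : a ≠ 0 ∨ ZeroOnBoundary f) (hf : ContDiffOn ℝ 1 f halfSpace)
    (hout : ZeroOutside f) : IsLinePrimitive (basisVec a) f (hderiv a f) := by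
  rcases eq_or_ne a 0 with rfl | ha
  · exact isLinePrimitive_hderiv_zero (hb.resolve_left (· rfl)) hf hout
  · exact isLinePrimitive_hderiv_of_ne ha hf hout

lemma integral_hderiv_mul (hf : HalfSobolev 1 f) (hw : HalfSobolev 1 w)
    (hb : a ≠ 0 ∨ ZeroOnBoundary w) :
    ∫ y, (hderiv a f * w) y = -∫ y, (f * hderiv a w) y := by
  have hleibniz := hderiv_mul (i := a) hf.differentiableOn hw.differentiableOn
  have hint₁ : Integrable (hderiv a f * w) := (hf.deriv a).integrable_mul hw
  have hint₂ : Integrable (f * hderiv a w) := hf.integrable_mul (hw.deriv a)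
  have hprimitive : IsLinePrimitive (basisVec a) (f * w) (hderiv a (f * w)) :=
    isLinePrimitive_hderiv (hb.imp_right (·.mul_left f)) (hf.contDiffOn.mul hw.contDiffOn)
      (hw.zeroOutside.mul_left f)
  have hvanish := hprimitive.integral_eq_zero (μ := volume) (hf.integrable_mul hw)
    (by rw [hleibniz]; exact hint₁.add hint₂)
  rw [hleibniz, integral_add' hint₁ hint₂] at hvanish
  linarith

lemma HalfSobolev.integral_mul_sub {u : E3 → ℝ} {k l n : ℕ} (hf : HalfSobolev k f)
    (hw : HalfSobolev l w) (hu : HalfSobolev n u) :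
    ∫ y, (f * (w - u)) y = (∫ y, (f * w) y) - ∫ y, (f * u) y := by
  rw [mul_sub, integral_sub' (hf.integrable_mul hw) (hf.integrable_mul hu)]

lemma HalfSobolev.integral_sub_mul {u : E3 → ℝ} {k l n : ℕ} (hw : HalfSobolev l w)
    (hu : HalfSobolev n u) (hf : HalfSobolev k f) :
    ∫ y, ((w - u) * f) y = (∫ y, (w * f) y) - ∫ y, (u * f) y := by
  rw [sub_mul, integral_sub' (hw.integrable_mul hf) (hu.integrable_mul hf)]

open scoped Pointwise in
lemma hderiv_translate (hj : j ≠ 0) (t : ℝ) (i : Fin 3) (f : E3 → ℝ) :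
    hderiv i (translate (t • basisVec j) f) = translate (t • basisVec j) (hderiv i f) := by
  have hinvariant : (t • basisVec j) +ᵥ halfSpace = halfSpace := by
    ext y
    rw [mem_vadd_set_iff_neg_vadd_mem, ← neg_smul, vadd_eq_add, add_comm]
    exact add_smul_basisVec_mem_halfSpace hj (-t) y
  funext y
  by_cases hy : y ∈ halfSpace
  · have hy' := (add_smul_basisVec_mem_halfSpace hj t y).2 hy
    rw [translate, hderiv_apply hy, hderiv_apply hy']
    unfold translate
    rw [fderivWithin_comp_add_right, hinvariant]
  · have hy' := mt (add_smul_basisVec_mem_halfSpace hj t y).1 hy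
    rw [translate, ZeroOutside.hderiv _ hy, ZeroOutside.hderiv _ hy']

lemma HalfSobolev.translate (hj : j ≠ 0) (t : ℝ) (hf : HalfSobolev 1 f) :
    HalfSobolev 1 (translate (t • basisVec j) f) := by
  refine ⟨?_, fun y hy => hf.zeroOutside _ (mt (add_smul_basisVec_mem_halfSpace hj t y).1 hy),
    hf.memLp.comp_measurePreserving (measurePreserving_add_right _ _), fun i => ?_⟩
  · exact hf.contDiffOn.comp (t := halfSpace) (by fun_prop)
      fun y hy => (add_smul_basisVec_mem_halfSpace hj t y).2 hy
  · rw [hderiv_translate hj]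
    exact (hf.deriv i).memLp.comp_measurePreserving (measurePreserving_add_right _ _)

lemma ZeroOnBoundary.translate (hj : j ≠ 0) (t : ℝ) (hf : ZeroOnBoundary f) :
    ZeroOnBoundary (translate (t • basisVec j) f) :=
  fun y hy => hf _ (by simp [basisVec_apply_zero_of_ne hj, hy])

lemma integral_translate_neg_mul (v : E3) (f w : E3 → ℝ) :
    ∫ y, (translate (-v) f * w) y = ∫ y, (f * translate v w) y := by
  rw [← integral_add_right_eq_self (translate (-v) f * w) v]
  simp [translate]

lemma integral_hderiv_mul_translate_sub (hf : HalfSobolev 1 f) (hz : HalfSobolev 1 z)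
    (hzero : ZeroOnBoundary z) (hj : j ≠ 0) (t : ℝ) :
    ∫ y, hderiv a f y * (z (y + t • basisVec j) - z y) =
      -∫ y, hderiv a z y * (f (y + (-t) • basisVec j) - f y) := by
  have hleft := (hf.deriv a).integral_mul_sub (hz.translate hj t) hz
  have hright := (hf.translate hj (-t)).integral_sub_mul hf (hz.deriv a)
  rw [integral_hderiv_mul hf (hz.translate hj t) (.inr (hzero.translate hj t)),
    integral_hderiv_mul hf hz (.inr hzero), hderiv_translate hj] at hleft
  rw [neg_smul, integral_translate_neg_mul] at hright
  simp only [mul_comm (hderiv a z _), neg_smul]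
  change ∫ y, (hderiv a f * (translate (t • basisVec j) z - z)) y =
    -∫ y, ((translate (-(t • basisVec j)) f - f) * hderiv a z) y
  rw [hleft, hright]
  ring

/-- No second derivatives are available here, so one of the two derivatives is replaced by a
difference quotient, which is then moved to the other factor. -/
lemma integral_hderiv_mul_hderiv_comm (hf : HalfSobolev 1 f) (hz : HalfSobolev 1 z)
    (hzero : ZeroOnBoundary z) (hj : j ≠ 0) :
    ∫ y, (hderiv a f * hderiv j z) y = ∫ y, (hderiv j f * hderiv a z) y := by
  have hslope_z := (isLinePrimitive_hderiv_of_ne hj hz.contDiffOn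
    hz.zeroOutside).tendsto_integral_mul_slope (hf.deriv a).memLp (hz.deriv j).memLp
  have hslope_f := (isLinePrimitive_hderiv_of_ne hj hf.contDiffOn
    hf.zeroOutside).tendsto_integral_mul_slope (hz.deriv a).memLp (hf.deriv j).memLp
  have hneg : Tendsto (fun t : ℝ => -t) (nhdsWithin 0 {0}ᶜ) (nhdsWithin 0 {0}ᶜ) := by
    refine tendsto_nhdsWithin_iff.2 ⟨?_, ?_⟩
    · exact (continuous_neg.tendsto' 0 0 neg_zero).mono_left nhdsWithin_le_nhds
    · filter_upwards [self_mem_nhdsWithin] with t ht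
      simpa using ht
  have hunique := tendsto_nhds_unique hslope_z ((hslope_f.comp hneg).congr fun t => by
    rw [Function.comp_apply, integral_hderiv_mul_translate_sub hf hz hzero hj, inv_neg, mul_neg,
      neg_mul])
  rw [mul_comm (hderiv j f)]
  exact hunique

variable {m : Fin 3 → E3 → ℝ}

lemma integral_pullbackDeriv_mul (hm : FlatteningCoeff 1 m) (hf : HalfSobolev 1 f)
    (hw : HalfSobolev 1 w) (hzero : ZeroOnBoundary w) (i : Fin 3) :
    ∫ y, (pullbackDeriv m i f * w) y = -∫ y, (f * pullbackDeriv m i w) y := by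
  have hm₀ := hm.mono zero_le_one
  have hmw := hw.coeff_mul (hm.bounded i)
  have htangential := integral_hderiv_mul hf hw (a := i) (.inr hzero)
  have hnormal := integral_hderiv_mul hf hmw (a := 0) (.inr (hzero.mul_left _))
  rw [hderiv_coeff_mul (hm.bounded i).differentiable hw.differentiableOn hw.zeroOutside,
    hm.normal, zero_mul, zero_add] at hnormal
  have hleft := (hf.deriv i).integral_sub_mul ((hf.deriv 0).coeff_mul (hm₀.bounded i)) hw
  have hright := hf.integral_mul_sub (hw.deriv i) ((hw.deriv 0).coeff_mul (hm₀.bounded i))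
  rw [mul_assoc, mul_left_comm] at hleft
  unfold pullbackDeriv
  rw [hleft, hright, htangential, hnormal]
  ring

lemma integral_pullbackDeriv_mul_hderiv (hm : FlatteningCoeff 1 m) (hf : HalfSobolev 1 f)
    (hz : HalfSobolev 1 z) (hzero : ZeroOnBoundary z) (i : Fin 3) (hj : j ≠ 0) :
    ∫ y, (pullbackDeriv m i f * hderiv j z) y =
      (∫ y, (hderiv j f * pullbackDeriv m i z) y) +
        ∫ y, (hderiv 0 f * (pd j (m i) * z)) y := by
  have hm₀ := hm.mono zero_le_one
  have htangential := integral_hderiv_mul_hderiv_comm hf hz hzero (a := i) hj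
  have hnormal := integral_hderiv_mul_hderiv_comm hf (hz.coeff_mul (hm.bounded i))
    (hzero.mul_left _) (a := 0) hj
  have hmz₀ := (hz.deriv 0).coeff_mul (hm₀.bounded i)
  have hmzj := (hz.deriv j).coeff_mul (hm₀.bounded i)
  have hpdz : HalfSobolev 0 (pd j (m i) * z) := hz.pred.coeff_mul ((hm.bounded i).deriv j)
  rw [hderiv_coeff_mul (hm.bounded i).differentiable hz.differentiableOn hz.zeroOutside,
    hderiv_coeff_mul (hm.bounded i).differentiable hz.differentiableOn hz.zeroOutside,
    hm.normal, zero_mul, zero_add, mul_add,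
    integral_add' ((hf.deriv 0).integrable_mul hpdz) ((hf.deriv 0).integrable_mul hmzj)] at hnormal
  have hleft := (hf.deriv i).integral_sub_mul ((hf.deriv 0).coeff_mul (hm₀.bounded i)) (hz.deriv j)
  have hright := (hf.deriv j).integral_mul_sub (hz.deriv i) hmz₀
  rw [mul_assoc, mul_left_comm] at hleft
  unfold pullbackDeriv
  rw [hleft, hright]
  linarith

end IntegrationByParts

/-! ### The resolvent of the Laplacian on Schwartz functions -/

section SchwartzResolvent

open scoped SchwartzMap LineDeriv Laplacian

variable {E : Type*} [NormedAddCommGroup E] [InnerProductSpace ℝ E]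

lemma lineDerivOp_comm (φ : 𝓢(E, ℝ)) (v w : E) : ∂_{v} (∂_{w} φ) = ∂_{w} (∂_{v} φ) := by
  have hdiff : Differentiable ℝ (fderiv ℝ φ) :=
    ((φ.smooth 2).fderiv_right (m := 1) (by norm_num)).differentiable one_ne_zero
  have hsecond : ∀ (v w y : E), (∂_{v} (∂_{w} φ)) y = fderiv ℝ (fderiv ℝ φ) y v w := by
    intro v w y
    change fderiv ℝ (fun x => fderiv ℝ φ x w) y v = _
    rw [fderiv_clm_apply (hdiff y) (differentiableAt_const w)]
    simp
  ext y
  rw [hsecond, hsecond]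
  exact (((φ.smooth 2).contDiffAt).isSymmSndFDerivAt (by simp)).eq v w

variable [FiniteDimensional ℝ E]

lemma laplacian_postcompCLM {F G : Type*} [NormedAddCommGroup F] [NormedSpace ℝ F]
    [NormedAddCommGroup G] [NormedSpace ℝ G] (L : F →L[ℝ] G) (φ : 𝓢(E, F)) :
    Δ (φ.postcompCLM L) = (Δ φ).postcompCLM L := by
  ext x
  rw [SchwartzMap.laplacian_apply, SchwartzMap.postcompCLM_apply, SchwartzMap.laplacian_apply]
  exact ((φ.smooth 2).contDiffAt).laplacian_CLM_comp_left

variable {ι : Type*} [Fintype ι] (b : OrthonormalBasis ι ℝ E)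

lemma lineDerivOp_laplacian (φ : 𝓢(E, ℝ)) (i : ι) : ∂_{b i} (Δ φ) = Δ (∂_{b i} φ) := by
  rw [SchwartzMap.laplacian_eq_sum b, SchwartzMap.laplacian_eq_sum b,
    LineDeriv.lineDerivOp_sum]
  exact Finset.sum_congr rfl fun j _ => by
    rw [lineDerivOp_comm, lineDerivOp_comm φ (b i) (b j)]

variable [MeasurableSpace E] [BorelSpace E]

/-- The factor for which `1 - resolventScale • Δ` has the Fourier symbol `1 + ‖ξ‖²`. -/
def resolventScale : ℝ := ((2 * π) ^ 2)⁻¹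

lemma resolventScale_pos : 0 < resolventScale := by unfold resolventScale; positivity

lemma exists_complex_sub_smul_laplacian_eq (θ : 𝓢(E, ℂ)) :
    ∃ φ : 𝓢(E, ℂ), φ - resolventScale • Δ φ = θ := by
  let g : E → ℝ := fun x => (1 + ‖x‖ ^ 2) ^ (-1 : ℝ)
  have hg : g.HasTemperateGrowth := Function.hasTemperateGrowth_one_add_norm_sq_rpow E (-1)
  have hsq : (fun x : E => ‖x‖ ^ 2).HasTemperateGrowth := by fun_prop
  have hscale : resolventScale * (2 * π) ^ 2 = 1 := by unfold resolventScale; field_simp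
  have hsymbol : (fun x : E => ∑ i, ![g, (fun x : E => ‖x‖ ^ 2) * g] i x) = fun _ => (1 : ℝ) := by
    funext x
    have hne : (1 + ‖x‖ ^ 2 : ℝ) ≠ 0 := by positivity
    simp only [Fin.sum_univ_two, Matrix.cons_val_zero, Matrix.cons_val_one, Pi.mul_apply, g,
      rpow_neg_one]
    field_simp
  have hsum := SchwartzMap.fourierMultiplierCLM_sum ℂ (g := ![g, (fun x : E => ‖x‖ ^ 2) * g])
    (s := Finset.univ) (𝕜 := ℝ) fun i _ => by fin_cases i; exacts [hg, hsq.mul hg]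
  rw [hsymbol, SchwartzMap.fourierMultiplierCLM_const] at hsum
  refine ⟨SchwartzMap.fourierMultiplierCLM ℂ g θ, ?_⟩
  rw [SchwartzMap.laplacian_eq_fourierMultiplierCLM,
    SchwartzMap.fourierMultiplierCLM_fourierMultiplierCLM_apply hsq hg, neg_smul, smul_neg,
    sub_neg_eq_add, smul_smul, hscale, one_smul]
  simpa [Fin.sum_univ_two] using (DFunLike.congr_fun hsum θ).symm

lemma exists_sub_smul_laplacian_eq (θ : 𝓢(E, ℝ)) :
    ∃ φ : 𝓢(E, ℝ), φ - resolventScale • Δ φ = θ := by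
  obtain ⟨φ, hφ⟩ := exists_complex_sub_smul_laplacian_eq (θ.postcompCLM Complex.ofRealCLM)
  refine ⟨φ.postcompCLM Complex.reCLM, ?_⟩
  rw [laplacian_postcompCLM, ← map_smul, ← map_sub, hφ]
  ext x
  simp [SchwartzMap.postcompCLM_apply]

lemma integrable_schwartz_mul (φ ψ : 𝓢(E, ℝ)) : Integrable (fun y => φ y * ψ y) :=
  (φ.memLp 2).integrable_mul (ψ.memLp 2)

lemma integral_mul_laplacian (φ ψ : 𝓢(E, ℝ)) :
    ∫ y, φ y * (Δ ψ) y = -∑ i, ∫ y, (∂_{b i} φ) y * (∂_{b i} ψ) y := by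
  have hsum : ∀ y, φ y * (Δ ψ) y = ∑ i, φ y * (∂_{b i} (∂_{b i} ψ)) y := fun y => by
    rw [SchwartzMap.laplacian_eq_sum b, sum_apply, Finset.mul_sum]
  simp only [hsum]
  rw [integral_finsetSum _ fun i _ => integrable_schwartz_mul φ (∂_{b i} (∂_{b i} ψ)),
    ← Finset.sum_neg_distrib]
  exact Finset.sum_congr rfl fun i _ =>
    SchwartzMap.integral_mul_lineDerivOp_right_eq_neg_left φ (∂_{b i} ψ) (b i)

lemma integral_laplacian_sq (φ : 𝓢(E, ℝ)) :
    ∫ y, (Δ φ) y ^ 2 = ∑ i, ∑ j, ∫ y, (∂_{b i} (∂_{b j} φ)) y ^ 2 := by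
  simp only [sq]
  rw [integral_mul_laplacian b, Finset.sum_comm, ← Finset.sum_neg_distrib]
  refine Finset.sum_congr rfl fun j _ => ?_
  rw [lineDerivOp_laplacian]
  simp only [mul_comm ((Δ (∂_{b j} φ)) _)]
  rw [integral_mul_laplacian b, neg_neg]

lemma integral_sub_smul_laplacian_sq (φ : 𝓢(E, ℝ)) (κ : ℝ) :
    ∫ y, (φ - κ • Δ φ) y ^ 2 = (∫ y, φ y ^ 2) + 2 * κ * (∑ i, ∫ y, (∂_{b i} φ) y ^ 2) +
      κ ^ 2 * ∑ i, ∑ j, ∫ y, (∂_{b i} (∂_{b j} φ)) y ^ 2 := by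
  have hexpand : ∀ y, (φ - κ • Δ φ) y ^ 2 =
      φ y ^ 2 - 2 * κ * (φ y * (Δ φ) y) + κ ^ 2 * (Δ φ) y ^ 2 := fun y => by
    simp only [sub_apply, smul_apply, smul_eq_mul]
    ring
  have hsq := (φ.memLp 2).integrable_sq (μ := volume)
  have hcross := (integrable_schwartz_mul φ (Δ φ)).const_mul (2 * κ)
  have hlap := ((Δ φ).memLp 2).integrable_sq (μ := volume).const_mul (κ ^ 2)
  have hdiff : Integrable (fun y => φ y ^ 2 - 2 * κ * (φ y * (Δ φ) y)) := hsq.sub hcross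
  simp only [hexpand]
  rw [integral_add hdiff hlap, integral_sub hsq hcross, integral_const_mul,
    integral_const_mul, integral_laplacian_sq b, integral_mul_laplacian b]
  simp only [sq]
  ring

lemma exists_integral_sq_le_of_sub_smul_laplacian {κ : ℝ} (hκ : 0 < κ) :
    ∃ C, 0 ≤ C ∧ ∀ φ : 𝓢(E, ℝ),
      ∫ y, φ y ^ 2 ≤ C * ∫ y, (φ - κ • Δ φ) y ^ 2 ∧
      (∀ i, ∫ y, (∂_{b i} φ) y ^ 2 ≤ C * ∫ y, (φ - κ • Δ φ) y ^ 2) ∧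
      ∀ i j, ∫ y, (∂_{b i} (∂_{b j} φ)) y ^ 2 ≤ C * ∫ y, (φ - κ • Δ φ) y ^ 2 := by
  refine ⟨1 + (2 * κ)⁻¹ + (κ ^ 2)⁻¹, by positivity, fun φ => ?_⟩
  have hidentity := integral_sub_smul_laplacian_sq b φ κ
  set R := ∫ y, (φ - κ • Δ φ) y ^ 2
  have hnonneg : ∀ ψ : 𝓢(E, ℝ), 0 ≤ ∫ y, ψ y ^ 2 := fun ψ => integral_nonneg fun y => sq_nonneg _
  have hR : 0 ≤ R := hnonneg _
  have hφ := hnonneg φ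
  have hfirst : 0 ≤ 2 * κ * ∑ i, ∫ y, (∂_{b i} φ) y ^ 2 :=
    mul_nonneg (by positivity) (Finset.sum_nonneg fun i _ => hnonneg _)
  have hsecond : 0 ≤ κ ^ 2 * ∑ i, ∑ j, ∫ y, (∂_{b i} (∂_{b j} φ)) y ^ 2 :=
    mul_nonneg (sq_nonneg κ) (Finset.sum_nonneg fun i _ => Finset.sum_nonneg fun j _ => hnonneg _)
  have hfirstR : ∑ i, ∫ y, (∂_{b i} φ) y ^ 2 ≤ (2 * κ)⁻¹ * R := by
    rw [inv_mul_eq_div, le_div_iff₀' (by positivity)]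
    linarith only [hidentity, hφ, hsecond]
  have hsecondR : ∑ i, ∑ j, ∫ y, (∂_{b i} (∂_{b j} φ)) y ^ 2 ≤ (κ ^ 2)⁻¹ * R := by
    rw [inv_mul_eq_div, le_div_iff₀' (by positivity)]
    linarith only [hidentity, hφ, hfirst]
  have hR₁ : 0 ≤ (2 * κ)⁻¹ * R := by positivity
  have hR₂ : 0 ≤ (κ ^ 2)⁻¹ * R := by positivity
  simp only [add_mul, one_mul]
  refine ⟨?_, fun i => ?_, fun i j => ?_⟩
  · linarith only [hidentity, hfirst, hsecond, hR₁, hR₂]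
  · linarith [Finset.single_le_sum (f := fun i => ∫ y, (∂_{b i} φ) y ^ 2)
      (fun i _ => hnonneg _) (Finset.mem_univ i)]
  · linarith [Finset.single_le_sum (f := fun i => ∑ j, ∫ y, (∂_{b i} (∂_{b j} φ)) y ^ 2)
        (fun i _ => Finset.sum_nonneg fun j _ => hnonneg _) (Finset.mem_univ i),
      Finset.single_le_sum (f := fun j => ∫ y, (∂_{b i} (∂_{b j} φ)) y ^ 2)
        (fun j _ => hnonneg _) (Finset.mem_univ j)]

/-- The squared `L²`-norms of `φ` and of its first derivatives along `b` are at most `B`. -/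
structure SchwartzSobolevLe (B : ℝ) (φ : 𝓢(E, ℝ)) : Prop where
  integral_sq_le : ∫ y, φ y ^ 2 ≤ B
  integral_lineDerivOp_sq_le : ∀ i, ∫ y, (∂_{b i} φ) y ^ 2 ≤ B

-- For `φ` the resolvent of `θ`, the choice `ψᵢ := -κ ∂ᵢφ` brings `φ - κ Δφ = θ` to this form.
lemma exists_eq_add_sum_lineDerivOp : ∃ C, 0 ≤ C ∧ ∀ θ : 𝓢(E, ℝ), ∃ (φ : 𝓢(E, ℝ))
    (ψ : ι → 𝓢(E, ℝ)), φ + ∑ i, ∂_{b i} (ψ i) = θ ∧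
      SchwartzSobolevLe b (C * ∫ y, θ y ^ 2) φ ∧
      ∀ i, SchwartzSobolevLe b (C * ∫ y, θ y ^ 2) (ψ i) := by
  obtain ⟨C, hC, hbound⟩ := exists_integral_sq_le_of_sub_smul_laplacian b resolventScale_pos
  refine ⟨(1 + resolventScale ^ 2) * C, by positivity, fun θ => ?_⟩
  obtain ⟨φ, rfl⟩ := exists_sub_smul_laplacian_eq θ
  obtain ⟨hφ, hfirst, hsecond⟩ := hbound φ
  set R := C * ∫ y, (φ - resolventScale • Δ φ) y ^ 2
  have hR : 0 ≤ R := (integral_nonneg fun y => sq_nonneg _).trans hφ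
  have hscale : 0 ≤ resolventScale ^ 2 * R := by positivity
  have hsmul : ∀ χ : 𝓢(E, ℝ), ∫ y, χ y ^ 2 ≤ R →
      ∫ y, ((-resolventScale) • χ) y ^ 2 ≤ R + resolventScale ^ 2 * R := fun χ hχ => by
    simp only [smul_apply, smul_eq_mul, mul_pow, neg_sq, integral_const_mul]
    exact (mul_le_mul_of_nonneg_left hχ (sq_nonneg _)).trans (le_add_of_nonneg_left hR)
  rw [mul_assoc, one_add_mul]
  refine ⟨φ, fun i => (-resolventScale) • ∂_{b i} φ, ?_, ⟨by linarith, fun i => ?_⟩, fun i =>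
    ⟨hsmul _ (hfirst i), fun j => ?_⟩⟩
  · simp only [LineDeriv.lineDerivOp_smul, ← Finset.smul_sum]
    rw [← SchwartzMap.laplacian_eq_sum b, neg_smul, sub_eq_add_neg]
  · linarith [hfirst i]
  · rw [LineDeriv.lineDerivOp_smul]
    exact hsmul _ (hsecond j i)

lemma exists_schwartz_integral_sub_sq_le {F : E → ℝ} (hF : MemLp F 2 volume) {ε : ℝ}
    (hε : 0 < ε) : ∃ θ : 𝓢(E, ℝ), ∫ y, (θ y - F y) ^ 2 ≤ ε := by
  obtain ⟨g, hcompact, hsmooth, hclose⟩ := hF.exist_eLpNorm_sub_le (by norm_num) (by norm_num)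
    (Real.sqrt_pos.2 hε)
  refine ⟨hcompact.toSchwartzMap hsmooth, ?_⟩
  have hg : MemLp g 2 volume := hsmooth.continuous.memLp_of_hasCompactSupport hcompact
  rw [(hF.sub hg).eLpNorm_eq_integral_rpow_norm (by norm_num) (by norm_num),
    ENNReal.ofReal_le_ofReal_iff (Real.sqrt_nonneg _)] at hclose
  have hnorm : ∫ y, ‖(F - g) y‖ ^ (ENNReal.toReal 2) = ∫ y, (g y - F y) ^ 2 := by
    congr 1
    funext y
    simp only [ENNReal.toReal_ofNat, Real.rpow_ofNat, Pi.sub_apply, Real.norm_eq_abs, sq_abs]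
    ring
  rw [hnorm, ENNReal.toReal_ofNat, ← one_div, ← Real.sqrt_eq_rpow] at hclose
  exact (Real.sqrt_le_sqrt_iff hε.le).1 hclose

end SchwartzResolvent

/-! ### Reflection across the boundary and the Nečas decomposition -/

section Reflection

lemma exists_integral_sq_comp_le {E : Type*} [NormedAddCommGroup E] [NormedSpace ℝ E]
    [FiniteDimensional ℝ E] [MeasurableSpace E] [BorelSpace E] (ν : Measure E)
    [ν.IsAddHaarMeasure] {L : E →L[ℝ] E} (hL : LinearMap.det (L : E →ₗ[ℝ] E) ≠ 0) :
    ∃ C, 0 ≤ C ∧ ∀ ψ : E → ℝ, MemLp ψ 2 ν →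
      MemLp (ψ ∘ L) 2 ν ∧ ∫ y, ψ (L y) ^ 2 ∂ν ≤ C * ∫ y, ψ y ^ 2 ∂ν := by
  set c := |(LinearMap.det (L : E →ₗ[ℝ] E))⁻¹|
  have hmap : Measure.map L ν = ENNReal.ofReal c • ν :=
    Measure.map_linearMap_addHaar_eq_smul_addHaar ν hL
  refine ⟨c, abs_nonneg _, fun ψ hψ => ?_⟩
  have hψmap : MemLp ψ 2 (Measure.map L ν) := by
    rw [hmap]
    exact hψ.smul_measure ENNReal.ofReal_ne_top
  have hmeas : AEMeasurable L ν := L.continuous.measurable.aemeasurable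
  refine ⟨(memLp_map_measure_iff hψmap.1 hmeas).1 hψmap, ?_⟩
  rw [← integral_map (f := fun y => ψ y ^ 2) hmeas (hψmap.1.pow 2), hmap, integral_smul_measure,
    ENNReal.toReal_ofReal (abs_nonneg _), smul_eq_mul]

/-- The linear map multiplying the normal coordinate by `s` and fixing the tangential ones. -/
def normalScale (s : ℝ) : E3 →L[ℝ] E3 :=
  ContinuousLinearMap.id ℝ E3 +
    (s - 1) • (EuclideanSpace.proj (0 : Fin 3) : E3 →L[ℝ] ℝ).smulRight (basisVec 0)

lemma normalScale_apply (s : ℝ) (y : E3) :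
    normalScale s y = y + ((s - 1) * y 0) • basisVec 0 := by
  simp [normalScale, smul_smul]

lemma normalScale_apply_zero (s : ℝ) (y : E3) : (normalScale s y) 0 = s * y 0 := by
  rw [normalScale_apply, PiLp.add_apply, PiLp.smul_apply, basisVec_zero_apply_zero, smul_eq_mul]
  ring

lemma normalScale_basisVec_zero (s : ℝ) : normalScale s (basisVec 0) = s • basisVec 0 := by
  rw [normalScale_apply, basisVec_zero_apply_zero]
  module

lemma normalScale_eq_self (s : ℝ) {y : E3} (hy : y 0 = 0) : normalScale s y = y := by
  rw [normalScale_apply, hy, mul_zero, zero_smul, add_zero]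

lemma normalScale_normalScale (s t : ℝ) (y : E3) :
    normalScale s (normalScale t y) = normalScale (s * t) y := by
  rw [normalScale_apply, normalScale_apply_zero, normalScale_apply, normalScale_apply]
  module

lemma det_normalScale_ne_zero {s : ℝ} (hs : s ≠ 0) :
    LinearMap.det (normalScale s : E3 →ₗ[ℝ] E3) ≠ 0 := by
  have hinv : (normalScale s : E3 →ₗ[ℝ] E3) ∘ₗ (normalScale s⁻¹ : E3 →ₗ[ℝ] E3) =
      LinearMap.id := by
    ext1 y
    change normalScale s (normalScale s⁻¹ y) = y
    rw [normalScale_normalScale, mul_inv_cancel₀ hs, normalScale_apply, sub_self, zero_mul,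
      zero_smul, add_zero]
  refine left_ne_zero_of_mul_eq_one (b := LinearMap.det (normalScale s⁻¹ : E3 →ₗ[ℝ] E3)) ?_
  rw [← LinearMap.det_comp, hinv, LinearMap.det_id]

variable {ψ : E3 → ℝ}

/-- The combination of `ψ` with its two reflections `y₀ ↦ -y₀` and `y₀ ↦ -2y₀`, with weights
`a` and `b`. -/
def reflect (a b : ℝ) (ψ : E3 → ℝ) : E3 → ℝ :=
  ψ + a • ψ ∘ normalScale (-1) + b • ψ ∘ normalScale (-2)

lemma reflect_apply (a b : ℝ) (ψ : E3 → ℝ) (y : E3) :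
    reflect a b ψ y = ψ y + a * ψ (normalScale (-1) y) + b * ψ (normalScale (-2) y) := rfl

lemma reflect_apply_of_boundary {a b : ℝ} (hab : 1 + a + b = 0) (ψ : E3 → ℝ) {y : E3}
    (hy : y 0 = 0) : reflect a b ψ y = 0 := by
  rw [reflect_apply, normalScale_eq_self _ hy, normalScale_eq_self _ hy]
  linear_combination ψ y * hab

lemma contDiff_reflect {n : ℕ∞} (hψ : ContDiff ℝ n ψ) (a b : ℝ) :
    ContDiff ℝ n (reflect a b ψ) :=
  (hψ.add ((hψ.comp (normalScale (-1)).contDiff).const_smul a)).add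
    ((hψ.comp (normalScale (-2)).contDiff).const_smul b)

lemma exists_integral_reflect_sq_le (a b : ℝ) : ∃ C, 0 ≤ C ∧ ∀ ψ : E3 → ℝ, MemLp ψ 2 volume →
    MemLp (reflect a b ψ) 2 volume ∧ ∫ y, reflect a b ψ y ^ 2 ≤ C * ∫ y, ψ y ^ 2 := by
  obtain ⟨C, hC, hone⟩ := exists_integral_sq_comp_le volume
    (det_normalScale_ne_zero (s := -1) (by norm_num))
  obtain ⟨D, hD, htwo⟩ := exists_integral_sq_comp_le volume
    (det_normalScale_ne_zero (s := -2) (by norm_num))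
  refine ⟨2 * (2 * (1 + a ^ 2 * C) + b ^ 2 * D), by positivity, fun ψ hψ => ?_⟩
  obtain ⟨hmem₁, hle₁⟩ := hone ψ hψ
  obtain ⟨hmem₂, hle₂⟩ := htwo ψ hψ
  have hsmul : ∀ (c : ℝ) (f : E3 → ℝ), ∫ y, (c • f) y ^ 2 = c ^ 2 * ∫ y, f y ^ 2 := fun c f => by
    simp only [Pi.smul_apply, smul_eq_mul, mul_pow, integral_const_mul]
  have hsum := hψ.add (hmem₁.const_smul a)
  refine ⟨hsum.add (hmem₂.const_smul b), ?_⟩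
  calc ∫ y, reflect a b ψ y ^ 2
      ≤ 2 * ((∫ y, (ψ + a • ψ ∘ normalScale (-1)) y ^ 2) +
          ∫ y, (b • ψ ∘ normalScale (-2)) y ^ 2) := integral_sq_add_le hsum (hmem₂.const_smul b)
    _ ≤ 2 * (2 * ((∫ y, ψ y ^ 2) + ∫ y, (a • ψ ∘ normalScale (-1)) y ^ 2) +
          ∫ y, (b • ψ ∘ normalScale (-2)) y ^ 2) := by
        gcongr
        exact integral_sq_add_le hψ (hmem₁.const_smul a)
    _ ≤ 2 * (2 * ((∫ y, ψ y ^ 2) + a ^ 2 * (C * ∫ y, ψ y ^ 2)) +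
          b ^ 2 * (D * ∫ y, ψ y ^ 2)) := by
        rw [hsmul, hsmul]
        gcongr <;> assumption
    _ = 2 * (2 * (1 + a ^ 2 * C) + b ^ 2 * D) * ∫ y, ψ y ^ 2 := by ring

lemma pd_reflect (hψ : Differentiable ℝ ψ) (a b : ℝ) (i : Fin 3) (y : E3) :
    pd i (reflect a b ψ) y = fderiv ℝ ψ y (basisVec i) +
      a * fderiv ℝ ψ (normalScale (-1) y) (normalScale (-1) (basisVec i)) +
      b * fderiv ℝ ψ (normalScale (-2) y) (normalScale (-2) (basisVec i)) := by
  have hcomp : ∀ s, HasFDerivAt (ψ ∘ normalScale s)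
      ((fderiv ℝ ψ (normalScale s y)).comp (normalScale s)) y := fun s =>
    (hψ _).hasFDerivAt.comp y (normalScale s).hasFDerivAt
  have hreflect := ((hψ y).hasFDerivAt.add ((hcomp (-1)).const_smul a)).add
    ((hcomp (-2)).const_smul b)
  rw [pd_apply, reflect, hreflect.fderiv]
  rfl

lemma pd_zero_reflect (hψ : Differentiable ℝ ψ) (a b : ℝ) :
    pd 0 (reflect a b ψ) = reflect (-a) (-2 * b) (pd 0 ψ) := by
  funext y
  rw [pd_reflect hψ, normalScale_basisVec_zero, normalScale_basisVec_zero, map_smul, map_smul,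
    reflect_apply]
  simp only [smul_eq_mul, pd_apply]
  ring

lemma pd_reflect_of_ne (hψ : Differentiable ℝ ψ) (a b : ℝ) {j : Fin 3} (hj : j ≠ 0) :
    pd j (reflect a b ψ) = reflect a b (pd j ψ) := by
  have hfix := fun s => normalScale_eq_self s (basisVec_apply_zero_of_ne hj)
  funext y
  rw [pd_reflect hψ, hfix, hfix]
  rfl

lemma hderiv_indicator (hψ : Differentiable ℝ ψ) (i : Fin 3) :
    hderiv i (halfSpace.indicator ψ) = halfSpace.indicator (pd i ψ) := by
  refine ZeroOutside.ext ZeroOutside.hderiv (fun y hy => indicator_of_notMem hy _) fun y hy => ?_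
  rw [hderiv_apply hy, indicator_of_mem hy, pd_apply,
    ← (hψ y).fderivWithin (uniqueDiffOn_halfSpace y hy)]
  congr 1
  exact fderivWithin_congr (fun z hz => indicator_of_mem hz _) (indicator_of_mem hy _)

lemma sobolevSq_zero_indicator_le (hψ : MemLp ψ 2 volume) :
    sobolevSq 0 (halfSpace.indicator ψ) ≤ ∫ y, ψ y ^ 2 := by
  rw [sobolevSq_zero]
  refine integral_mono (hψ.indicator measurableSet_halfSpace).integrable_sq hψ.integrable_sq
    fun y => ?_
  by_cases hy : y ∈ halfSpace
  · simp [hy]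
  · simp [hy, sq_nonneg]

/-- The test functions of the weak formulation: `C¹ ∩ H¹` functions on the half-space with zero
boundary values and squared `H¹`-norm at most `B`. -/
structure IsTestFunction (B : ℝ) (w : E3 → ℝ) : Prop where
  halfSobolev : HalfSobolev 1 w
  zeroOnBoundary : ZeroOnBoundary w
  sobolevSq_le : sobolevSq 1 w ≤ B

lemma IsTestFunction.mono {B B' : ℝ} {w : E3 → ℝ} (hw : IsTestFunction B w) (hB : B ≤ B') :
    IsTestFunction B' w :=
  ⟨hw.halfSobolev, hw.zeroOnBoundary, hw.sobolevSq_le.trans hB⟩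

lemma isTestFunction_indicator (hψ : ContDiff ℝ 1 ψ) (hboundary : ZeroOnBoundary ψ)
    (hmem : MemLp ψ 2 volume) (hmem' : ∀ i, MemLp (pd i ψ) 2 volume) {B : ℝ}
    (hB : ∫ y, ψ y ^ 2 ≤ B) (hB' : ∀ i, ∫ y, pd i ψ y ^ 2 ≤ B) :
    IsTestFunction (4 * B) (halfSpace.indicator ψ) := by
  have hderiv_eq := hderiv_indicator (hψ.differentiable (by norm_num))
  refine ⟨⟨hψ.contDiffOn.congr fun z hz => indicator_of_mem hz _,
    fun y hy => indicator_of_notMem hy _, hmem.indicator measurableSet_halfSpace, fun i => ?_⟩,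
    fun y hy => (indicator_of_mem (show y ∈ halfSpace from hy.ge) _).trans (hboundary y hy), ?_⟩
  · rw [hderiv_eq]
    exact (hmem' i).indicator measurableSet_halfSpace
  · rw [sobolevSq_succ, Fin.sum_univ_three]
    simp only [hderiv_eq]
    have hle := fun i => (sobolevSq_zero_indicator_le (hmem' i)).trans (hB' i)
    linarith [sobolevSq_zero_indicator_le hmem, hle 0, hle 1, hle 2]

end Reflection

section Necas

open scoped SchwartzMap LineDeriv

local notation "stdBasis" => EuclideanSpace.basisFun (Fin 3) ℝ

lemma pd_schwartz (ψ : 𝓢(E3, ℝ)) (i : Fin 3) : pd i ψ = ∂_{stdBasis i} ψ := by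
  rw [EuclideanSpace.basisFun_apply]
  rfl

lemma exists_isTestFunction_indicator_reflect {a b : ℝ} (hab : 1 + a + b = 0) :
    ∃ C, 0 ≤ C ∧ ∀ (ψ : 𝓢(E3, ℝ)) (B : ℝ), SchwartzSobolevLe stdBasis B ψ →
      IsTestFunction (C * B) (halfSpace.indicator (reflect a b ψ)) := by
  obtain ⟨C, hC, heven⟩ := exists_integral_reflect_sq_le a b
  obtain ⟨D, hD, hodd⟩ := exists_integral_reflect_sq_le (-a) (-2 * b)
  refine ⟨4 * (C + D), by positivity, fun ψ B hψ => ?_⟩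
  have hB : 0 ≤ B := (integral_nonneg fun y => sq_nonneg _).trans hψ.integral_sq_le
  have hCle : C * B ≤ (C + D) * B := by gcongr; linarith
  have hDle : D * B ≤ (C + D) * B := by gcongr; linarith
  have hderiv : ∀ i, MemLp (pd i (reflect a b ψ)) 2 volume ∧
      ∫ y, pd i (reflect a b ψ) y ^ 2 ≤ (C + D) * B := by
    intro i
    have hmem := (∂_{stdBasis i} ψ).memLp 2 (μ := volume)
    have hle := hψ.integral_lineDerivOp_sq_le i
    by_cases hi : i = 0
    · subst hi
      rw [pd_zero_reflect ψ.differentiable, pd_schwartz]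
      exact ⟨(hodd _ hmem).1, ((hodd _ hmem).2.trans (by gcongr)).trans hDle⟩
    · rw [pd_reflect_of_ne ψ.differentiable _ _ hi, pd_schwartz]
      exact ⟨(heven _ hmem).1, ((heven _ hmem).2.trans (by gcongr)).trans hCle⟩
  obtain ⟨hmem, hle⟩ := heven ψ (ψ.memLp 2)
  have hsq := hψ.integral_sq_le
  rw [mul_assoc]
  exact isTestFunction_indicator (contDiff_reflect (n := 1) (ψ.smooth 1) a b)
    (fun y hy => reflect_apply_of_boundary hab ψ hy) hmem (fun i => (hderiv i).1)
    ((hle.trans (by gcongr)).trans hCle) fun i => (hderiv i).2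

/-- The `a`-th component of a reflected vector field. The weights differ so that the divergence
is `reflect 3 (-4)` of the divergence of `ψ`, while all components vanish on the boundary. -/
def reflectField (a : Fin 3) (ψ : E3 → ℝ) : E3 → ℝ :=
  halfSpace.indicator (if a = 0 then reflect (-3) 2 ψ else reflect 3 (-4) ψ)

lemma hderiv_reflectField (a : Fin 3) (ψ : 𝓢(E3, ℝ)) : hderiv a (reflectField a ψ) =
    halfSpace.indicator (reflect 3 (-4) (∂_{stdBasis a} ψ : 𝓢(E3, ℝ))) := by
  have hdiff := fun b c =>
    (contDiff_reflect (n := 1) (ψ.smooth 1) b c).differentiable (by norm_num)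
  rw [reflectField, ← pd_schwartz]
  split_ifs with ha
  · subst ha
    rw [hderiv_indicator (hdiff _ _), pd_zero_reflect ψ.differentiable]
    norm_num
  · rw [hderiv_indicator (hdiff _ _), pd_reflect_of_ne ψ.differentiable _ _ ha]

lemma exists_isTestFunction_reflectField : ∃ C, 0 ≤ C ∧ ∀ (a : Fin 3) (ψ : 𝓢(E3, ℝ)) (B : ℝ),
    SchwartzSobolevLe stdBasis B ψ → IsTestFunction (C * B) (reflectField a ψ) := by
  obtain ⟨C, hC, hnormal⟩ := exists_isTestFunction_indicator_reflect
    (a := -3) (b := 2) (by norm_num)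
  obtain ⟨D, hD, htangential⟩ := exists_isTestFunction_indicator_reflect
    (a := 3) (b := -4) (by norm_num)
  refine ⟨C + D, by positivity, fun a ψ B hψ => ?_⟩
  have hB : 0 ≤ B := (integral_nonneg fun y => sq_nonneg _).trans hψ.integral_sq_le
  rw [reflectField]
  split_ifs
  · exact (hnormal ψ B hψ).mono (by gcongr; linarith)
  · exact (htangential ψ B hψ).mono (by gcongr; linarith)

lemma ae_apply_zero_ne_zero : ∀ᵐ y : E3, y 0 ≠ 0 := by
  let normal : E3 →ₗ[ℝ] ℝ := (EuclideanSpace.proj (0 : Fin 3) : E3 →L[ℝ] ℝ)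
  have hker : LinearMap.ker normal ≠ ⊤ := fun htop => by
    have hmem : basisVec 0 ∈ LinearMap.ker normal := htop ▸ Submodule.mem_top
    exact one_ne_zero (basisVec_zero_apply_zero.symm.trans hmem)
  have hnull : volume {y : E3 | y 0 = 0} = 0 :=
    Measure.addHaar_submodule (volume : Measure E3) _ hker
  simpa only [ae_iff, not_not] using hnull

-- The reflected points lie outside the half-space, where `F` vanishes.
lemma ZeroOutside.indicator_reflect_ae_eq {F : E3 → ℝ} (hF : ZeroOutside F) (a b : ℝ) :
    halfSpace.indicator (reflect a b F) =ᵐ[volume] F := by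
  filter_upwards [ae_apply_zero_ne_zero] with y hy
  by_cases hyH : y ∈ halfSpace
  · have hpos : 0 < y 0 := lt_of_le_of_ne hyH hy.symm
    have hreflected : ∀ s < 0, F (normalScale s y) = 0 := fun s hs => hF _ fun hmem => by
      have hnonneg : 0 ≤ (normalScale s y) 0 := hmem
      rw [normalScale_apply_zero] at hnonneg
      exact (mul_neg_of_neg_of_pos hs hpos).not_ge hnonneg
    rw [indicator_of_mem hyH, reflect_apply, hreflected _ (by norm_num),
      hreflected _ (by norm_num), mul_zero, mul_zero, add_zero, add_zero]
  · rw [indicator_of_notMem hyH, hF y hyH]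

lemma sum_hderiv_reflectField_add (φ : 𝓢(E3, ℝ)) (ψ : Fin 3 → 𝓢(E3, ℝ)) :
    ∑ a, hderiv a (reflectField a (ψ a)) + halfSpace.indicator (reflect 3 (-4) φ) =
      halfSpace.indicator
        (reflect 3 (-4) (φ + ∑ a, ∂_{stdBasis a} (ψ a) : 𝓢(E3, ℝ))) := by
  funext y
  by_cases hy : y ∈ halfSpace
  · simp only [hderiv_reflectField, Fin.sum_univ_three, Pi.add_apply, indicator_of_mem hy,
      reflect_apply, add_apply]
    ring
  · simp [hderiv_reflectField, hy, Fin.sum_univ_three]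

lemma exists_sobolevSq_indicator_reflect_sub_le : ∃ C, 0 ≤ C ∧ ∀ θ F : E3 → ℝ,
    MemLp θ 2 volume → MemLp F 2 volume → ZeroOutside F →
      sobolevSq 0 (halfSpace.indicator (reflect 3 (-4) θ) - F) ≤
        C * ∫ y, (θ y - F y) ^ 2 := by
  obtain ⟨C, hC, hreflect⟩ := exists_integral_reflect_sq_le 3 (-4)
  refine ⟨C, hC, fun θ F hθ hF hzero => ?_⟩
  obtain ⟨hmem, hle⟩ := hreflect (θ - F) (hθ.sub hF)
  have hae : (fun y => (halfSpace.indicator (reflect 3 (-4) θ) - F) y ^ 2) =ᵐ[volume]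
      fun y => halfSpace.indicator (reflect 3 (-4) (θ - F)) y ^ 2 := by
    filter_upwards [hzero.indicator_reflect_ae_eq 3 (-4)] with y hy
    rw [Pi.sub_apply, ← hy, ← Pi.sub_apply, ← indicator_sub']
    congr 2
    funext z
    simp only [reflect_apply, Pi.sub_apply]
    ring
  rw [sobolevSq_zero, integral_congr_ae hae]
  exact (sobolevSq_zero_indicator_le hmem).trans hle

lemma integral_sq_le_four_mul {θ F : E3 → ℝ} (hθ : MemLp θ 2 volume) (hF : MemLp F 2 volume)
    (hclose : ∫ y, (θ y - F y) ^ 2 ≤ ∫ y, F y ^ 2) : ∫ y, θ y ^ 2 ≤ 4 * ∫ y, F y ^ 2 := by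
  have hadd := integral_sq_add_le (hθ.sub hF) hF
  rw [sub_add_cancel] at hadd
  simp only [Pi.sub_apply] at hadd
  linarith

theorem exists_necas_decomposition : ∃ C, 0 ≤ C ∧ ∀ F : E3 → ℝ,
    MemLp F 2 volume → ZeroOutside F → 0 < sobolevSq 0 F →
    ∃ (W : Fin 3 → E3 → ℝ) (r : E3 → ℝ), (∀ a, IsTestFunction (C * sobolevSq 0 F) (W a)) ∧
      IsTestFunction (C * sobolevSq 0 F) r ∧
      sobolevSq 0 (∑ a, hderiv a (W a) + r - F) ≤ sobolevSq 0 F / 4 := by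
  obtain ⟨A, hA, hrepresent⟩ := exists_eq_add_sum_lineDerivOp stdBasis
  obtain ⟨C, hC, hfield⟩ := exists_isTestFunction_reflectField
  obtain ⟨D, hD, hscalar⟩ := exists_isTestFunction_indicator_reflect
    (a := 3) (b := -4) (by norm_num)
  obtain ⟨K, hK, hdiff⟩ := exists_sobolevSq_indicator_reflect_sub_le
  refine ⟨(C + D) * (A * 4), by positivity, fun F hF hzero hpos => ?_⟩
  obtain ⟨θ, hθ⟩ := exists_schwartz_integral_sub_sq_le hF
    (ε := sobolevSq 0 F / (4 * (K + 1))) (by positivity)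
  have hθF : sobolevSq 0 F / (4 * (K + 1)) ≤ sobolevSq 0 F := div_le_self hpos.le (by linarith)
  have hsq := integral_sq_le_four_mul (θ.memLp 2) hF (hθ.trans hθF)
  obtain ⟨φ, ψ, heq, hφ, hψ⟩ := hrepresent θ
  have hbound : ∀ c ≤ C + D,
      c * (A * ∫ y, θ y ^ 2) ≤ (C + D) * (A * 4) * sobolevSq 0 F := fun c hcle => by
    rw [mul_assoc, mul_assoc]
    gcongr
    exact hsq
  refine ⟨fun a => reflectField a (ψ a), halfSpace.indicator (reflect 3 (-4) φ),
    fun a => (hfield a _ _ (hψ a)).mono (hbound C (by linarith)),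
    (hscalar φ _ hφ).mono (hbound D (by linarith)), ?_⟩
  rw [sum_hderiv_reflectField_add, heq]
  calc _ ≤ K * ∫ y, (θ y - F y) ^ 2 := hdiff θ F (θ.memLp 2) hF hzero
    _ ≤ (K + 1) * (sobolevSq 0 F / (4 * (K + 1))) := by gcongr; linarith
    _ = sobolevSq 0 F / 4 := by field_simp

end Necas

/-! ### The Nečas inequality -/

section NecasInequality

variable {F η : E3 → ℝ}

lemma abs_integral_mul_le (hF : MemLp F 2 volume) (hη : MemLp η 2 volume) :
    |∫ y, (F * η) y| ≤ √(sobolevSq 0 F) * √(sobolevSq 0 η) := by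
  have hholder := integral_mul_norm_le_Lp_mul_Lq (μ := (volume : Measure E3)) (f := F) (g := η)
    Real.HolderConjugate.two_two (by simpa using hF) (by simpa using hη)
  calc |∫ y, (F * η) y| ≤ ∫ y, ‖(F * η) y‖ :=
        norm_integral_le_integral_norm (fun y => (F * η) y)
    _ = ∫ y, ‖F y‖ * ‖η y‖ := by simp only [Pi.mul_apply, norm_mul]
    _ ≤ _ := hholder.trans_eq (by simp [sobolevSq_zero, Real.sqrt_eq_rpow])

lemma abs_integral_mul_le_half (hF : MemLp F 2 volume) (hη : MemLp η 2 volume)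
    (hle : sobolevSq 0 η ≤ sobolevSq 0 F / 4) : |∫ y, (F * η) y| ≤ sobolevSq 0 F / 2 := by
  have hsqrt : √(sobolevSq 0 η) ≤ √(sobolevSq 0 F) / 2 := by
    refine Real.sqrt_le_iff.2 ⟨by positivity, ?_⟩
    rwa [div_pow, Real.sq_sqrt (sobolevSq_nonneg _ _), show (2 : ℝ) ^ 2 = 4 by norm_num]
  calc _ ≤ √(sobolevSq 0 F) * √(sobolevSq 0 η) := abs_integral_mul_le hF hη
    _ ≤ √(sobolevSq 0 F) * (√(sobolevSq 0 F) / 2) := by gcongr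
    _ = sobolevSq 0 F / 2 := by
      rw [← mul_div_assoc, Real.mul_self_sqrt (sobolevSq_nonneg _ _)]

lemma sobolevSq_zero_eq_sum_integral_mul {W : Fin 3 → E3 → ℝ} {r : E3 → ℝ}
    (hF : MemLp F 2 volume) (hW : ∀ a, HalfSobolev 1 (W a)) (hr : HalfSobolev 1 r) :
    sobolevSq 0 F = (∑ a, ∫ y, (F * hderiv a (W a)) y) + (∫ y, (F * r) y) -
      ∫ y, (F * (∑ a, hderiv a (W a) + r - F)) y := by
  have hFW : ∀ a, Integrable (F * hderiv a (W a)) := fun a =>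
    hF.integrable_mul ((hW a).deriv a).memLp
  have hFr : Integrable (F * r) := hF.integrable_mul hr.memLp
  have hFF : Integrable (F * F) := hF.integrable_mul hF
  have hsum : Integrable (∑ a, F * hderiv a (W a)) := integrable_finsetSum' _ fun a _ => hFW a
  rw [mul_sub, mul_add, Finset.mul_sum, integral_sub' (hsum.add hFr) hFF, integral_add' hsum hFr]
  simp only [Finset.sum_apply]
  rw [integral_finsetSum _ fun a _ => hFW a, sobolevSq_zero, sub_sub_cancel]
  simp only [Pi.mul_apply, sq]

theorem exists_sobolevSq_zero_le_of_abs_integral_le : ∃ C, 0 ≤ C ∧ ∀ (F : E3 → ℝ) (N : ℝ),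
    MemLp F 2 volume → ZeroOutside F → 0 ≤ N →
    (∀ w, HalfSobolev 1 w → ZeroOnBoundary w → |∫ y, (F * w) y| ≤ N * √(sobolevSq 1 w)) →
    (∀ a w, HalfSobolev 1 w → ZeroOnBoundary w →
      |∫ y, (F * hderiv a w) y| ≤ N * √(sobolevSq 1 w)) →
    sobolevSq 0 F ≤ C * N ^ 2 := by
  obtain ⟨C, hC, hdecompose⟩ := exists_necas_decomposition
  refine ⟨64 * C, by positivity, fun F N hF hout hN htest htest' => ?_⟩
  rcases (sobolevSq_nonneg 0 F).eq_or_lt with hzero | hpos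
  · rw [← hzero]
    positivity
  obtain ⟨W, r, hW, hr, hη⟩ := hdecompose F hF hout hpos
  have hsqrt : ∀ w, IsTestFunction (C * sobolevSq 0 F) w →
      N * √(sobolevSq 1 w) ≤ N * (√C * √(sobolevSq 0 F)) := fun w hw => by
    rw [← Real.sqrt_mul hC]
    exact mul_le_mul_of_nonneg_left (Real.sqrt_le_sqrt hw.sobolevSq_le) hN
  have hboundW : ∑ a, ∫ y, (F * hderiv a (W a)) y ≤ 3 * (N * (√C * √(sobolevSq 0 F))) :=
    (Finset.sum_le_card_nsmul _ _ _ fun a _ => (le_abs_self _).trans ((htest' a (W a)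
      (hW a).halfSobolev (hW a).zeroOnBoundary).trans (hsqrt _ (hW a)))).trans_eq (by simp)
  have hboundr : ∫ y, (F * r) y ≤ N * (√C * √(sobolevSq 0 F)) :=
    (le_abs_self _).trans ((htest r hr.halfSobolev hr.zeroOnBoundary).trans (hsqrt _ hr))
  have hηmem := ((HalfSobolev.sum fun a => (hW a).halfSobolev.deriv a).memLp.add
    hr.halfSobolev.memLp).sub hF
  have hboundη := neg_le_of_abs_le (abs_integral_mul_le_half hF hηmem hη)
  have hmain : √(sobolevSq 0 F) * √(sobolevSq 0 F) ≤ 8 * N * √C * √(sobolevSq 0 F) := by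
    rw [Real.mul_self_sqrt hpos.le]
    linarith [sobolevSq_zero_eq_sum_integral_mul hF (fun a => (hW a).halfSobolev) hr.halfSobolev]
  have hle := le_of_mul_le_mul_right hmain (Real.sqrt_pos.2 hpos)
  calc sobolevSq 0 F = √(sobolevSq 0 F) ^ 2 := (Real.sq_sqrt hpos.le).symm
    _ ≤ (8 * N * √C) ^ 2 := by gcongr
    _ = 64 * C * N ^ 2 := by rw [mul_pow, Real.sq_sqrt hC]; ring

end NecasInequality

/-! ### Uniform bounds for integrals of products -/

/-- The quantities `I d`, `d ∈ P`, satisfy `|I d| ≤ C A(d)^{1/2} B(d)^{1/2}` with a constant `C`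
independent of `d`. -/
def PairingBounded {α : Type*} (P : α → Prop) (A B I : α → ℝ) : Prop :=
  ∃ C, 0 ≤ C ∧ ∀ d, P d → |I d| ≤ C * (√(A d) * √(B d))

namespace PairingBounded

variable {α : Type*} {P : α → Prop} {A B I J : α → ℝ} {F G : α → E3 → ℝ}

lemma mul {k l : ℕ} (hF : SobolevBounded P A k F) (hG : SobolevBounded P B l G) :
    PairingBounded P A B (fun d => ∫ y, (F d * G d) y) := by
  obtain ⟨C, hC, hF⟩ := hF.mono (Nat.zero_le _)
  obtain ⟨D, hD, hG⟩ := hG.mono (Nat.zero_le _)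
  refine ⟨√C * √D, by positivity, fun d hd => ?_⟩
  have hFd := Real.sqrt_le_sqrt (hF d hd).2
  have hGd := Real.sqrt_le_sqrt (hG d hd).2
  rw [Real.sqrt_mul hC] at hFd
  rw [Real.sqrt_mul hD] at hGd
  calc _ ≤ √(sobolevSq 0 (F d)) * √(sobolevSq 0 (G d)) :=
        abs_integral_mul_le (hF d hd).1.memLp (hG d hd).1.memLp
    _ ≤ (√C * √(A d)) * (√D * √(B d)) := by gcongr
    _ = _ := by ring

lemma add (hI : PairingBounded P A B I) (hJ : PairingBounded P A B J) :
    PairingBounded P A B (fun d => I d + J d) := by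
  obtain ⟨C, hC, hI⟩ := hI
  obtain ⟨D, hD, hJ⟩ := hJ
  refine ⟨C + D, by positivity, fun d hd => (abs_add_le _ _).trans ?_⟩
  rw [add_mul]
  exact add_le_add (hI d hd) (hJ d hd)

lemma const_mul (c : ℝ) (hI : PairingBounded P A B I) :
    PairingBounded P A B (fun d => c * I d) := by
  obtain ⟨C, hC, hI⟩ := hI
  refine ⟨|c| * C, by positivity, fun d hd => ?_⟩
  rw [abs_mul, mul_assoc]
  exact mul_le_mul_of_nonneg_left (hI d hd) (abs_nonneg _)

lemma neg (hI : PairingBounded P A B I) : PairingBounded P A B (fun d => -I d) := by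
  simpa using hI.const_mul (-1)

lemma sub (hI : PairingBounded P A B I) (hJ : PairingBounded P A B J) :
    PairingBounded P A B (fun d => I d - J d) := by
  simpa [sub_eq_add_neg] using hI.add hJ.neg

lemma sum {ι : Type*} [Fintype ι] {I : ι → α → ℝ} (hI : ∀ i, PairingBounded P A B (I i)) :
    PairingBounded P A B (fun d => ∑ i, I i d) := by
  choose C hC hI using hI
  refine ⟨∑ i, C i, Finset.sum_nonneg fun i _ => hC i, fun d hd => ?_⟩
  rw [Finset.sum_mul]
  exact (Finset.abs_sum_le_sum_abs _ _).trans (Finset.sum_le_sum fun i _ => hI i d hd)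

lemma congr (hI : PairingBounded P A B I) (h : ∀ d, P d → J d = I d) :
    PairingBounded P A B J := by
  obtain ⟨C, hC, hI⟩ := hI
  exact ⟨C, hC, fun d hd => by rw [h d hd]; exact hI d hd⟩

end PairingBounded

/-! ### The tangential pressure gradient -/

namespace StokesFlow

/-- The energy `∑ ‖Dₗ∂ⱼvᵢ‖²` of the tangential derivatives (`j ≠ 0`) of the flow. -/
def tangentialEnergy (m : Fin 3 → E3 → ℝ) (d : StokesFlow) : ℝ :=
  ∑ j : {j : Fin 3 // j ≠ 0}, ∑ i, ∑ l, sobolevSq 0 (pullbackDeriv m l (hderiv j (d.vel i)))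

/-- The data of order zero together with the tangential energy. The latter is absorbed at the end
of the energy argument. -/
def energySq (μ κ : ℝ) (m : Fin 3 → E3 → ℝ) (d : StokesFlow) : ℝ :=
  dataSq μ κ m 0 d + tangentialEnergy m d

/-- A flow of order zero and a function against which its momentum equation can be tested. -/
structure IsTestPair (e : StokesFlow × (E3 → ℝ)) : Prop where
  flow : Admissible 0 e.1
  test : HalfSobolev 1 e.2
  boundary : ZeroOnBoundary e.2

variable {m : Fin 3 → E3 → ℝ} {μ κ : ℝ} {d : StokesFlow} {j : Fin 3}

lemma tangentialEnergy_nonneg (m : Fin 3 → E3 → ℝ) (d : StokesFlow) : 0 ≤ tangentialEnergy m d :=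
  Finset.sum_nonneg fun _ _ => Finset.sum_nonneg fun _ _ => Finset.sum_nonneg fun _ _ =>
    sobolevSq_nonneg _ _

lemma energySq_nonneg (d : StokesFlow) : 0 ≤ energySq μ κ m d :=
  add_nonneg (dataSq_nonneg 0 d) (tangentialEnergy_nonneg m d)

lemma sobolevSq_le_energySq (d : StokesFlow) (hj : j ≠ 0) (i l : Fin 3) :
    sobolevSq 0 (pullbackDeriv m l (hderiv j (d.vel i))) ≤ energySq μ κ m d := by
  have hl := Finset.single_le_sum
    (f := fun l => sobolevSq 0 (pullbackDeriv m l (hderiv j (d.vel i))))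
    (fun _ _ => sobolevSq_nonneg _ _) (Finset.mem_univ l)
  have hi := Finset.single_le_sum
    (f := fun i => ∑ l, sobolevSq 0 (pullbackDeriv m l (hderiv j (d.vel i))))
    (fun _ _ => Finset.sum_nonneg fun _ _ => sobolevSq_nonneg _ _) (Finset.mem_univ i)
  have hj := Finset.single_le_sum (f := fun j : {j : Fin 3 // j ≠ 0} =>
    ∑ i, ∑ l, sobolevSq 0 (pullbackDeriv m l (hderiv j (d.vel i))))
    (fun _ _ => Finset.sum_nonneg fun _ _ => Finset.sum_nonneg fun _ _ => sobolevSq_nonneg _ _)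
    (Finset.mem_univ ⟨j, hj⟩)
  exact (hl.trans (hi.trans hj)).trans (le_add_of_nonneg_left (dataSq_nonneg 0 d))

lemma _root_.Cattabriga.SobolevBounded.energySq {n : ℕ} {F : StokesFlow → E3 → ℝ}
    (hF : SobolevBounded (Admissible 0) (dataSq μ κ m 0) n F) :
    SobolevBounded (Admissible 0) (energySq μ κ m) n F :=
  hF.trans ⟨1, zero_le_one, fun d _ => by
    rw [one_mul]
    exact le_add_of_nonneg_right (tangentialEnergy_nonneg m d)⟩

lemma sobolevBounded_pullbackDeriv_hderiv_vel (hm : FlatteningCoeff 0 m) (hj : j ≠ 0)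
    (i l : Fin 3) : SobolevBounded (Admissible 0) (energySq μ κ m) 0
      (fun d => pullbackDeriv m l (hderiv j (d.vel i))) :=
  .of_le (fun _ hd => .pullback hm l ((hd.vel i).deriv j))
    fun d _ => sobolevSq_le_energySq d hj i l

lemma sobolevBounded_hderiv_vel_one (hm : FlatteningCoeff 0 m) (hj : j ≠ 0) (i : Fin 3) :
    SobolevBounded (Admissible 0) (energySq μ κ m) 1 (fun d => hderiv j (d.vel i)) := by
  refine .succ (SobolevBounded.hderiv_vel i j).energySq (fun a => ?_) fun _ hd => (hd.vel i).deriv j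
  exact .hderiv_of_pullbackDeriv hm (sobolevBounded_pullbackDeriv_hderiv_vel hm hj i) a

lemma sobolevBounded_pullbackDeriv_vel (hm : FlatteningCoeff 0 m) (i l : Fin 3) :
    SobolevBounded (Admissible 0) (dataSq μ κ m 0) 0 (fun d => pullbackDeriv m l (d.vel i)) :=
  (SobolevBounded.hderiv_vel i l).sub
    ((SobolevBounded.hderiv_vel i 0).coeff_mul (hm.bounded l))

lemma sobolevBounded_hderiv_pullbackDeriv_vel (hm : FlatteningCoeff 1 m) (hj : j ≠ 0)
    (i l : Fin 3) : SobolevBounded (Admissible 0) (energySq μ κ m) 0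
      (fun d => hderiv j (pullbackDeriv m l (d.vel i))) := by
  refine SobolevBounded.congr ?_ fun _ hd => hderiv_pullbackDeriv hm (hd.vel i) j l
  exact (sobolevBounded_pullbackDeriv_hderiv_vel (hm.mono zero_le_one) hj i l).sub
    ((SobolevBounded.hderiv_vel i 0).energySq.coeff_mul (hm.deriv l j))

lemma integral_pullbackDeriv_pres_mul (hm : FlatteningCoeff 1 m) (hd : Admissible 0 d) (i : Fin 3)
    {w : E3 → ℝ} (hw : HalfSobolev 0 w) :
    κ * ∫ y, (pullbackDeriv m i d.pres * w) y = (∫ y, (force μ κ m i d * w) y) +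
      μ * ∑ l, ∫ y, (pullbackDeriv m l (pullbackDeriv m l (d.vel i)) * w) y := by
  have hforce := (hd.force (μ := μ) (κ := κ) hm i).integrable_mul hw
  have hlap := fun l => (hd.laplacian hm i l).integrable_mul hw
  rw [← integral_finsetSum _ fun l _ => hlap l, ← integral_const_mul, ← integral_const_mul,
    ← integral_add hforce ((integrable_finsetSum _ fun l _ => hlap l).const_mul μ)]
  congr 1 with y
  simp only [force, Pi.add_apply, Pi.mul_apply, Pi.neg_apply, Pi.smul_apply, smul_eq_mul,
    Finset.sum_apply, ← Finset.sum_mul]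
  ring

/-- Boundedness of a functional of a flow and a test function by `energySq^{1/2} ‖w‖_{H¹}`. -/
abbrev TestBounded (μ κ : ℝ) (m : Fin 3 → E3 → ℝ) (I : StokesFlow × (E3 → ℝ) → ℝ) : Prop :=
  PairingBounded IsTestPair (fun e => energySq μ κ m e.1) (fun e => sobolevSq 1 e.2) I

lemma sobolevBounded_test : SobolevBounded IsTestPair (fun e => sobolevSq 1 e.2) 1 (fun e => e.2) :=
  .of_le (fun _ he => he.test) fun _ _ => le_rfl

lemma _root_.Cattabriga.SobolevBounded.testPair {n : ℕ} {F : StokesFlow → E3 → ℝ}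
    (hF : SobolevBounded (Admissible 0) (energySq μ κ m) n F) :
    SobolevBounded IsTestPair (fun e => energySq μ κ m e.1) n (fun e => F e.1) :=
  hF.comp Prod.fst fun _ he => he.flow

namespace TestBounded

lemma pullbackDeriv_pres_mul (hm : FlatteningCoeff 1 m) (hκ : κ ≠ 0) (i : Fin 3) :
    TestBounded μ κ m (fun e => ∫ y, (pullbackDeriv m i e.1.pres * e.2) y) := by
  have hm₀ := hm.mono zero_le_one
  have hbound : TestBounded μ κ m (fun e => κ⁻¹ * ((∫ y, (force μ κ m i e.1 * e.2) y) +
      μ * ∑ l, -∫ y, (pullbackDeriv m l (e.1.vel i) * pullbackDeriv m l e.2) y)) :=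
    .const_mul _ (.add (.mul (SobolevBounded.force hm i).energySq.testPair sobolevBounded_test)
      (.const_mul _ (.sum fun l => .neg (.mul
        (sobolevBounded_pullbackDeriv_vel hm₀ i l).energySq.testPair
        (.pullback hm₀ l sobolevBounded_test)))))
  refine hbound.congr fun e he => ?_
  rw [eq_inv_mul_iff_mul_eq₀ hκ,
    integral_pullbackDeriv_pres_mul (μ := μ) hm he.flow i he.test.pred]
  simp only [integral_pullbackDeriv_mul hm (.pullback hm _ (he.flow.vel i)) he.test he.boundary]

lemma pullbackDeriv_pres_mul_hderiv (hm : FlatteningCoeff 2 m) (hκ : κ ≠ 0) (i : Fin 3)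
    (hj : j ≠ 0) :
    TestBounded μ κ m (fun e => ∫ y, (pullbackDeriv m i e.1.pres * hderiv j e.2) y) := by
  have hm₁ := hm.mono one_le_two
  have hm₀ := hm.mono zero_le_two
  have hbound : TestBounded μ κ m (fun e => κ⁻¹ * ((∫ y, (force μ κ m i e.1 * hderiv j e.2) y) +
      μ * ∑ l, ((∫ y, (hderiv j (pullbackDeriv m l (e.1.vel i)) * pullbackDeriv m l e.2) y) +
        -∫ y, (pullbackDeriv m l (e.1.vel i) * hderiv 0 (pd j (m l) * e.2)) y))) :=
    .const_mul _ (.add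
      (.mul (SobolevBounded.force hm₁ i).energySq.testPair sobolevBounded_test.deriv)
      (.const_mul _ (.sum fun l => .add
        (.mul (sobolevBounded_hderiv_pullbackDeriv_vel hm₁ hj i l).testPair
          (.pullback hm₀ l sobolevBounded_test))
        (.neg (.mul (sobolevBounded_pullbackDeriv_vel hm₀ i l).energySq.testPair
          (sobolevBounded_test.coeff_mul (hm.deriv l j)).deriv)))))
  refine hbound.congr fun e he => ?_
  rw [eq_inv_mul_iff_mul_eq₀ hκ,
    integral_pullbackDeriv_pres_mul (μ := μ) hm₁ he.flow i (he.test.deriv j)]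
  congr! 4 with l
  have hvel : HalfSobolev 1 (pullbackDeriv m l (e.1.vel i)) := .pullback hm₁ l (he.flow.vel i)
  rw [integral_pullbackDeriv_mul_hderiv hm₁ hvel he.test he.boundary l hj,
    integral_hderiv_mul hvel (he.test.coeff_mul (hm.deriv l j)) (.inr (he.boundary.mul_left _))]

lemma comp_coeff_mul {I : StokesFlow × (E3 → ℝ) → ℝ} (hI : TestBounded μ κ m I) {c : E3 → ℝ}
    (hc : BoundedCoeff 1 c) : TestBounded μ κ m (fun e => I (e.1, c * e.2)) := by
  obtain ⟨C, hC, hI⟩ := hI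
  obtain ⟨D, hD, hcoeff⟩ := hc.exists_sobolevSq_mul_le
  refine ⟨C * √D, by positivity, fun e he => ?_⟩
  have hsqrt := Real.sqrt_le_sqrt (hcoeff e.2 he.test)
  rw [Real.sqrt_mul hD] at hsqrt
  calc |I (e.1, c * e.2)| ≤ C * (√(energySq μ κ m e.1) * √(sobolevSq 1 (c * e.2))) :=
        hI (e.1, c * e.2) ⟨he.flow, he.test.coeff_mul hc, he.boundary.mul_left _⟩
    _ ≤ C * (√(energySq μ κ m e.1) * (√D * √(sobolevSq 1 e.2))) := by gcongr
    _ = _ := by ring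

lemma hderiv_pres_mul (hm : FlatteningCoeff 1 m) (hκ : κ ≠ 0) (j : Fin 3) :
    TestBounded μ κ m (fun e => ∫ y, (hderiv j e.1.pres * e.2) y) := by
  have hbound := (pullbackDeriv_pres_mul (μ := μ) hm hκ j).add
    ((pullbackDeriv_pres_mul (μ := μ) hm hκ 0).comp_coeff_mul (hm.bounded j))
  refine hbound.congr fun e he => ?_
  have hpres := fun i => HalfSobolev.pullback (hm.mono zero_le_one) i he.flow.pres
  rw [← integral_add' ((hpres j).integrable_mul he.test)
    ((hpres 0).integrable_mul (he.test.coeff_mul (hm.bounded j))),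
    hderiv_eq_pullbackDeriv_add hm.zero j]
  congr 1 with y
  simp only [Pi.add_apply, Pi.mul_apply]
  ring

lemma hderiv_pres_mul_hderiv (hm : FlatteningCoeff 2 m) (hκ : κ ≠ 0) (a : Fin 3) (hj : j ≠ 0) :
    TestBounded μ κ m (fun e => ∫ y, (hderiv j e.1.pres * hderiv a e.2) y) := by
  have hma := (hm.bounded a).pred
  have hbound := ((pullbackDeriv_pres_mul_hderiv (μ := μ) hm hκ a hj).add
    ((pullbackDeriv_pres_mul_hderiv (μ := μ) hm hκ 0 hj).comp_coeff_mul hma)).sub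
    ((pullbackDeriv_pres_mul (μ := μ) (hm.mono one_le_two) hκ 0).comp_coeff_mul (hm.deriv a j))
  refine hbound.congr fun e he => ?_
  have hpres := fun i => HalfSobolev.pullback (hm.mono zero_le_two) i he.flow.pres
  have hint₁ := (hpres a).integrable_mul (he.test.deriv j)
  have hint₂ := (hpres 0).integrable_mul ((he.test.coeff_mul hma).deriv j)
  have hint₃ := (hpres 0).integrable_mul (he.test.coeff_mul (hm.deriv a j))
  rw [← integral_hderiv_mul_hderiv_comm he.flow.pres he.test he.boundary hj,
    ← integral_add' hint₁ hint₂, ← integral_sub' (hint₁.add hint₂) hint₃,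
    hderiv_eq_pullbackDeriv_add hm.zero a,
    hderiv_coeff_mul hma.differentiable he.test.differentiableOn he.test.zeroOutside]
  congr 1 with y
  simp only [Pi.add_apply, Pi.mul_apply, Pi.sub_apply]
  ring

end TestBounded

theorem sobolevBounded_hderiv_pres (hm : FlatteningCoeff 2 m) (hκ : κ ≠ 0) (hj : j ≠ 0) :
    SobolevBounded (Admissible 0) (energySq μ κ m) 0 (fun d => hderiv j d.pres) := by
  obtain ⟨C, hC, hnecas⟩ := exists_sobolevSq_zero_le_of_abs_integral_le
  obtain ⟨D, hD, htest⟩ := TestBounded.hderiv_pres_mul (μ := μ) (hm.mono one_le_two) hκ j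
  choose D' hD' htest' using fun a => TestBounded.hderiv_pres_mul_hderiv (μ := μ) hm hκ a hj
  have hsum : 0 ≤ ∑ a, D' a := Finset.sum_nonneg fun a _ => hD' a
  have hDle : D ≤ D + ∑ a, D' a := le_add_of_nonneg_right hsum
  have hDle' : ∀ a, D' a ≤ D + ∑ a, D' a := fun a => le_add_of_nonneg_of_le hD
    (Finset.single_le_sum (fun a _ => hD' a) (Finset.mem_univ a))
  refine ⟨C * (D + ∑ a, D' a) ^ 2, by positivity, fun d hd => ⟨hd.pres.deriv j, ?_⟩⟩
  have hF := hd.pres.deriv j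
  refine (hnecas _ ((D + ∑ a, D' a) * √(energySq μ κ m d)) hF.memLp hF.zeroOutside (by positivity)
    (fun w hw hzero => ?_) fun a w hw hzero => ?_).trans_eq ?_
  · rw [mul_assoc]
    exact (htest (d, w) ⟨hd, hw, hzero⟩).trans (by gcongr)
  · rw [mul_assoc]
    exact (htest' a (d, w) ⟨hd, hw, hzero⟩).trans (by gcongr; exact hDle' a)
  · rw [mul_pow, Real.sq_sqrt (energySq_nonneg d), mul_assoc]

lemma tangentialBounds_energySq (hm : FlatteningCoeff 2 m) (hκ : κ ≠ 0) :
    TangentialBounds μ κ m 0 (energySq μ κ m) where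
  force i := (SobolevBounded.force (hm.mono one_le_two) i).energySq
  divergence := (SobolevBounded.divergence (hm.mono one_le_two)).energySq.deriv
  vel₂ j hj a i := (sobolevBounded_hderiv_vel_one (hm.mono zero_le_two) hj i).deriv.congr
    fun _ hd => (hd.vel i).hderiv_comm j a
  pres _ hj := sobolevBounded_hderiv_pres hm hκ hj
  vel₁ a i := (SobolevBounded.hderiv_vel i a).energySq

/-! ### The tangential energy estimate -/

lemma sobolevBounded_divergence_deriv (hm : FlatteningCoeff 1 m) (j : Fin 3) :
    SobolevBounded (Admissible 0) (dataSq μ κ m 0) 0 (fun d => divergence m (deriv j d)) :=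
  ((SobolevBounded.divergence hm).deriv.add
    (.sum fun i => (SobolevBounded.hderiv_vel i 0).coeff_mul (hm.deriv i j))).congr
    fun _ hd => divergence_deriv hm hd j

/-- The commutator terms produced by moving `∂ⱼ` past `DₗDₗ` in the energy identity. -/
def commutatorIntegral (m : Fin 3 → E3 → ℝ) (d : StokesFlow) (i j l : Fin 3) : ℝ :=
  (∫ y, ((pd j (m l) * hderiv 0 (d.vel i)) * pullbackDeriv m l (hderiv j (d.vel i))) y) +
    ∫ y, (pullbackDeriv m l (d.vel i) * hderiv 0 (pd j (m l) * hderiv j (d.vel i))) y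

lemma integral_pullbackDeriv_pullbackDeriv_vel_mul (hm : FlatteningCoeff 2 m)
    (hd : Admissible 0 d) (i l : Fin 3) (hj : j ≠ 0) :
    ∫ y, (pullbackDeriv m l (pullbackDeriv m l (d.vel i)) * hderiv j (hderiv j (d.vel i))) y =
      sobolevSq 0 (pullbackDeriv m l (hderiv j (d.vel i))) - commutatorIntegral m d i j l := by
  have hm₁ := hm.mono one_le_two
  have hz : HalfSobolev 1 (hderiv j (d.vel i)) := (hd.vel i).deriv j
  have hzero := (hd.boundary i).hderiv_of_ne (hd.vel i).differentiableOn hj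
  have hvel : HalfSobolev 1 (pullbackDeriv m l (d.vel i)) := .pullback hm₁ l (hd.vel i)
  have hDz : HalfSobolev 0 (pullbackDeriv m l (hderiv j (d.vel i))) :=
    .pullback (hm.mono zero_le_two) l hz
  have hcoeff : HalfSobolev 1 (pd j (m l) * hderiv 0 (d.vel i)) :=
    .coeff_mul (hm.deriv l j) ((hd.vel i).deriv 0)
  rw [integral_pullbackDeriv_mul_hderiv hm₁ hvel hz hzero l hj,
    integral_hderiv_mul hvel (hz.coeff_mul (hm.deriv l j)) (.inr (hzero.mul_left _)),
    hderiv_pullbackDeriv hm (hd.vel i) j l, sub_mul,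
    integral_sub' (hDz.integrable_mul hDz) (hcoeff.integrable_mul hDz), commutatorIntegral,
    sobolevSq_zero]
  simp only [Pi.mul_apply, ← sq]
  ring

lemma tangentialEnergy_identity (hm : FlatteningCoeff 2 m) (hd : Admissible 0 d) (i : Fin 3)
    (hj : j ≠ 0) :
    μ * ∑ l, sobolevSq 0 (pullbackDeriv m l (hderiv j (d.vel i))) =
      κ * ((∫ y, (pullbackDeriv m i (hderiv j (d.vel i)) * hderiv j d.pres) y) +
        ∫ y, ((pd j (m i) * hderiv j (d.vel i)) * hderiv 0 d.pres) y) -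
      (∫ y, (force μ κ m i d * hderiv j (hderiv j (d.vel i))) y) +
      μ * ∑ l, commutatorIntegral m d i j l := by
  have hm₁ := hm.mono one_le_two
  have hz : HalfSobolev 1 (hderiv j (d.vel i)) := (hd.vel i).deriv j
  have hzero := (hd.boundary i).hderiv_of_ne (hd.vel i).differentiableOn hj
  have htested := integral_pullbackDeriv_pres_mul (μ := μ) (κ := κ) hm₁ hd i (hz.deriv j)
  rw [integral_pullbackDeriv_mul_hderiv hm₁ hd.pres hz hzero i hj, mul_comm (hderiv j d.pres),
    mul_comm (hderiv 0 d.pres)] at htested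
  simp only [integral_pullbackDeriv_pullbackDeriv_vel_mul hm hd i _ hj,
    Finset.sum_sub_distrib] at htested
  linear_combination -htested

lemma sum_tangentialEnergy_identity (hm : FlatteningCoeff 2 m) (hd : Admissible 0 d)
    (hj : j ≠ 0) :
    μ * ∑ i, ∑ l, sobolevSq 0 (pullbackDeriv m l (hderiv j (d.vel i))) =
      κ * ((∫ y, (divergence m (deriv j d) * hderiv j d.pres) y) +
        ∑ i, ∫ y, ((pd j (m i) * hderiv j (d.vel i)) * hderiv 0 d.pres) y) -
      (∑ i, ∫ y, (force μ κ m i d * hderiv j (hderiv j (d.vel i))) y) +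
      μ * ∑ i, ∑ l, commutatorIntegral m d i j l := by
  have hint : ∀ i, Integrable (pullbackDeriv m i (hderiv j (d.vel i)) * hderiv j d.pres) := fun i =>
    (HalfSobolev.pullback (hm.mono zero_le_two) i ((hd.vel i).deriv j)).integrable_mul
      (hd.pres.deriv j)
  have hsum : ∫ y, (divergence m (deriv j d) * hderiv j d.pres) y =
      ∑ i, ∫ y, (pullbackDeriv m i (hderiv j (d.vel i)) * hderiv j d.pres) y := by
    rw [← integral_finsetSum _ fun i _ => hint i]
    simp only [divergence, deriv, Finset.sum_mul, Finset.sum_apply]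
  rw [hsum, Finset.mul_sum]
  simp only [tangentialEnergy_identity (κ := κ) hm hd _ hj, Finset.sum_add_distrib,
    Finset.sum_sub_distrib, ← Finset.mul_sum]

lemma pairingBounded_commutatorIntegral (hm : FlatteningCoeff 2 m) (hj : j ≠ 0) (i l : Fin 3) :
    PairingBounded (Admissible 0) (dataSq μ κ m 0) (energySq μ κ m)
      (fun d => commutatorIntegral m d i j l) := by
  have hm₀ := hm.mono zero_le_two
  exact .add
    (.mul ((SobolevBounded.hderiv_vel i 0).coeff_mul (hm.deriv l j).pred)
      (sobolevBounded_pullbackDeriv_hderiv_vel hm₀ hj i l))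
    (.mul (sobolevBounded_pullbackDeriv_vel hm₀ i l)
      ((sobolevBounded_hderiv_vel_one hm₀ hj i).coeff_mul (hm.deriv l j)).deriv)

lemma pairingBounded_sum_sobolevSq (hm : FlatteningCoeff 2 m) (hμ : μ ≠ 0) (hκ : κ ≠ 0)
    (hj : j ≠ 0) :
    PairingBounded (Admissible 0) (dataSq μ κ m 0) (energySq μ κ m)
      (fun d => ∑ i, ∑ l, sobolevSq 0 (pullbackDeriv m l (hderiv j (d.vel i)))) := by
  have hm₁ := hm.mono one_le_two
  have hpres := (tangentialBounds_energySq (μ := μ) hm hκ).hderiv_pres hm₁ hκ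
  refine PairingBounded.congr (.const_mul _ (.add (.sub (.const_mul _ (.add ?_ (.sum fun i => ?_)))
    (.sum fun i => ?_)) (.const_mul _ (.sum fun i => .sum fun l =>
      pairingBounded_commutatorIntegral hm hj i l))))
    fun d hd => (eq_inv_mul_iff_mul_eq₀ hμ).2 (sum_tangentialEnergy_identity (κ := κ) hm hd hj)
  · exact .mul (sobolevBounded_divergence_deriv hm₁ j) (hpres j)
  · exact .mul ((SobolevBounded.hderiv_vel i j).coeff_mul (hm.deriv i j).pred) (hpres 0)
  · exact .mul (SobolevBounded.force hm₁ i)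
      (sobolevBounded_hderiv_vel_one (hm.mono zero_le_two) hj i).deriv

lemma add_le_of_le_mul_sqrt_mul_sqrt_add {C K X : ℝ} (hK : 0 ≤ K) (hX : 0 ≤ X)
    (h : X ≤ C * (√K * √(K + X))) : K + X ≤ (C ^ 2 + 2) * K := by
  have hyoung : C * (√K * √(K + X)) ≤ (C ^ 2 * K + (K + X)) / 2 := by
    rw [← mul_assoc]
    nlinarith [sq_nonneg (C * √K - √(K + X)), Real.sq_sqrt hK, Real.sq_sqrt (add_nonneg hK hX)]
  linarith

theorem exists_energySq_le_dataSq (hm : FlatteningCoeff 2 m) (hμ : μ ≠ 0) (hκ : κ ≠ 0) :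
    ∃ C, 0 ≤ C ∧ ∀ d, Admissible 0 d → energySq μ κ m d ≤ C * dataSq μ κ m 0 d := by
  obtain ⟨C, -, hbound⟩ : PairingBounded (Admissible 0) (dataSq μ κ m 0) (energySq μ κ m)
      (tangentialEnergy m) := .sum fun j => pairingBounded_sum_sobolevSq hm hμ hκ j.2
  exact ⟨C ^ 2 + 2, by positivity, fun d hd => add_le_of_le_mul_sqrt_mul_sqrt_add
    (dataSq_nonneg 0 d) (tangentialEnergy_nonneg m d) ((le_abs_self _).trans (hbound d hd))⟩

lemma RegularityEstimate.base (hm : FlatteningCoeff 2 m) (hμ : μ ≠ 0) (hκ : κ ≠ 0) :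
    RegularityEstimate μ κ m 0 := by
  have hm₁ := hm.mono one_le_two
  have htangential := tangentialBounds_energySq (μ := μ) hm hκ
  have habsorb := exists_energySq_le_dataSq hm hμ hκ
  exact ⟨fun i a => .succ (SobolevBounded.hderiv_vel i a)
    (fun b => (htangential.hderiv_hderiv_vel hm₁ hμ hκ i a b).trans habsorb)
    fun _ hd => (hd.vel i).deriv a, fun a => (htangential.hderiv_pres hm₁ hκ a).trans habsorb⟩

theorem regularityEstimate {k : ℕ} (hm : FlatteningCoeff (k + 2) m) (hμ : μ ≠ 0) (hκ : κ ≠ 0) :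
    RegularityEstimate μ κ m k := by
  induction k with
  | zero => exact .base hm hμ hκ
  | succ k ih => exact (ih (hm.mono (by omega))).succ (hm.mono (by omega)) hμ hκ

end StokesFlow

/-! ### Flattening the boundary -/

/-- `f` does not depend on the normal variable. -/
def NormalInvariant (f : E3 → ℝ) : Prop := ∀ (y : E3) (t : ℝ), f (y + t • basisVec 0) = f y

/-- The height of the boundary `∂Ω` over the tangential variables of `y`. -/
def boundaryHeight (M : E2 → ℝ) (y : E3) : ℝ := M (proj2 y)

/-- The shear `y ↦ (y₁ + M(y'), y')`, which maps the half-space onto `closure Ω`. -/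
def unflatten (M : E2 → ℝ) (y : E3) : E3 := y + boundaryHeight M y • basisVec 0

/-- The inverse shear `x ↦ (x₁ - M(x'), x')`, which maps `closure Ω` onto the half-space. -/
def flatten (M : E2 → ℝ) (x : E3) : E3 := x - boundaryHeight M x • basisVec 0

/-- The derivatives `∂ᵢM(y')`, the coefficients of the flattened operators. -/
def flatteningCoeff (M : E2 → ℝ) (i : Fin 3) : E3 → ℝ := pd i (boundaryHeight M)

/-- `proj2` as a continuous linear map. -/
def tangentialProj : E3 →L[ℝ] E2 :=
  (EuclideanSpace.proj (1 : Fin 3)).smulRight (EuclideanSpace.single (0 : Fin 2) (1 : ℝ)) +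
    (EuclideanSpace.proj (2 : Fin 3)).smulRight (EuclideanSpace.single (1 : Fin 2) (1 : ℝ))

lemma proj2_eq_tangentialProj : proj2 = tangentialProj := by
  funext x
  ext i
  fin_cases i <;> simp [proj2, tangentialProj]

namespace NormalInvariant

variable {f : E3 → ℝ}

lemma pd_zero (hf : NormalInvariant f) (hdiff : Differentiable ℝ f) : pd 0 f = 0 := by
  funext y
  have hline : HasLineDerivAt ℝ f 0 y (basisVec 0) := by
    unfold HasLineDerivAt
    simp only [hf y]
    exact hasDerivAt_const _ _
  exact ((hdiff y).hasFDerivAt.hasLineDerivAt (basisVec 0)).lineDeriv.symm.trans hline.lineDeriv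

lemma pd (hf : NormalInvariant f) (i : Fin 3) : NormalInvariant (pd i f) := fun y t => by
  have htranslate : (fun z => f (z + t • basisVec 0)) = f := funext fun z => hf z t
  rw [pd_apply, pd_apply, ← fderiv_comp_add_right (f := f) (t • basisVec 0), htranslate]

end NormalInvariant

section Flattening

variable {M : E2 → ℝ}

lemma normalInvariant_boundaryHeight : NormalInvariant (boundaryHeight M) := fun y t => by
  have hproj : proj2 (y + t • basisVec 0) = proj2 y := by
    ext i
    fin_cases i <;> simp [proj2, basisVec]
  rw [boundaryHeight, boundaryHeight, hproj]

lemma flatten_unflatten (y : E3) : flatten M (unflatten M y) = y := by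
  rw [flatten, unflatten, normalInvariant_boundaryHeight, add_sub_cancel_right]

lemma unflatten_flatten (x : E3) : unflatten M (flatten M x) = x := by
  rw [unflatten, flatten, sub_eq_add_neg, ← neg_smul, normalInvariant_boundaryHeight, neg_smul,
    neg_add_cancel_right]

lemma unflatten_mem_Omg {y : E3} : unflatten M y ∈ Omg M ↔ 0 < y 0 := by
  change boundaryHeight M (unflatten M y) < unflatten M y 0 ↔ 0 < y 0
  rw [unflatten, normalInvariant_boundaryHeight]
  simp [basisVec]

lemma flatten_apply_zero_pos {x : E3} : 0 < flatten M x 0 ↔ x ∈ Omg M := by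
  rw [← unflatten_mem_Omg (M := M), unflatten_flatten]

lemma unflatten_of_apply_zero_eq_zero {y : E3} (hy : y 0 = 0) :
    unflatten M y = gph M (proj2 y) := by
  ext i
  fin_cases i <;> simp [unflatten, gph, basisVec, boundaryHeight, proj2, hy]

lemma boundaryHeight_eq_comp_tangentialProj (M : E2 → ℝ) :
    boundaryHeight M = M ∘ tangentialProj := by
  rw [← proj2_eq_tangentialProj]
  rfl

lemma contDiff_boundaryHeight (hM : ContDiff ℝ ∞ M) : ContDiff ℝ ∞ (boundaryHeight M) := by
  rw [boundaryHeight_eq_comp_tangentialProj]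
  exact hM.comp tangentialProj.contDiff

lemma contDiff_unflatten (hM : ContDiff ℝ ∞ M) : ContDiff ℝ ∞ (unflatten M) :=
  contDiff_id.add ((contDiff_boundaryHeight hM).smul contDiff_const)

lemma contDiff_flatten (hM : ContDiff ℝ ∞ M) : ContDiff ℝ ∞ (flatten M) :=
  contDiff_id.sub ((contDiff_boundaryHeight hM).smul contDiff_const)

lemma mapsTo_unflatten_closure (hM : ContDiff ℝ ∞ M) :
    MapsTo (unflatten M) halfSpace (closure (Omg M)) := fun _ hy =>
  map_mem_closure (contDiff_unflatten hM).continuous (halfSpace_subset_closure_setOf_pos hy)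
    fun _ hz => unflatten_mem_Omg.2 hz

lemma isOpen_Omg (hM : ContDiff ℝ ∞ M) : IsOpen (Omg M) :=
  isOpen_lt (contDiff_boundaryHeight hM).continuous (by fun_prop)

lemma measurableSet_Omg (hM : ContDiff ℝ ∞ M) : MeasurableSet (Omg M) :=
  (isOpen_Omg hM).measurableSet

lemma flatteningCoeff_zero (hM : ContDiff ℝ ∞ M) : flatteningCoeff M 0 = 0 :=
  normalInvariant_boundaryHeight.pd_zero
    ((contDiff_boundaryHeight hM).differentiable (by norm_num))

lemma pd_zero_flatteningCoeff (hM : ContDiff ℝ ∞ M) (i : Fin 3) : pd 0 (flatteningCoeff M i) = 0 :=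
  (normalInvariant_boundaryHeight.pd i).pd_zero
    ((contDiff_pd (contDiff_boundaryHeight hM) i).differentiable (by norm_num))

lemma fderiv_unflatten_basisVec (hM : ContDiff ℝ ∞ M) (y : E3) (i : Fin 3) :
    fderiv ℝ (unflatten M) y (basisVec i) = basisVec i + flatteningCoeff M i y • basisVec 0 := by
  have hheight : HasFDerivAt (boundaryHeight M) (fderiv ℝ (boundaryHeight M) y) y :=
    ((contDiff_boundaryHeight hM).differentiable (by norm_num) y).hasFDerivAt
  have hshear : HasFDerivAt (unflatten M) _ y :=
    (hasFDerivAt_id y).add (hheight.smul_const (basisVec 0))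
  rw [hshear.fderiv]
  rfl

/-- The coordinates `(y', y₁)` of `ℝ³`, in which `unflatten M` is a skew product. -/
def tangentialNormalEquiv : E3 ≃ᵐ (Fin 2 → ℝ) × ℝ :=
  ((MeasurableEquiv.toLp 2 (Fin 3 → ℝ)).symm.trans
    (MeasurableEquiv.piFinSuccAbove (fun _ : Fin 3 => ℝ) 0)).trans MeasurableEquiv.prodComm

lemma measurePreserving_tangentialNormalEquiv :
    MeasurePreserving tangentialNormalEquiv volume (volume.prod volume) :=
  Measure.measurePreserving_swap.comp <|
    (volume_preserving_piFinSuccAbove (fun _ : Fin 3 => ℝ) 0).comp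
      (EuclideanSpace.volume_preserving_symm_measurableEquiv_toLp (Fin 3))

lemma tangentialNormalEquiv_apply (y : E3) : tangentialNormalEquiv y = (![y 1, y 2], y 0) := by
  refine Prod.ext (funext fun i => ?_) rfl
  fin_cases i <;> rfl

lemma unflatten_eq_comp : unflatten M = tangentialNormalEquiv.symm ∘
    (fun q : (Fin 2 → ℝ) × ℝ => (q.1, q.2 + M (WithLp.toLp 2 q.1))) ∘ tangentialNormalEquiv := by
  funext y
  rw [Function.comp_apply, MeasurableEquiv.eq_symm_apply, Function.comp_apply,
    tangentialNormalEquiv_apply, tangentialNormalEquiv_apply]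
  simp [unflatten, basisVec, boundaryHeight, proj2]

lemma measurePreserving_unflatten (hM : Continuous M) :
    MeasurePreserving (unflatten M) volume volume := by
  have hheight : Continuous fun w : Fin 2 → ℝ => M (WithLp.toLp 2 w) := by fun_prop
  have hskew : MeasurePreserving (fun q : (Fin 2 → ℝ) × ℝ => (q.1, q.2 + M (WithLp.toLp 2 q.1)))
      (volume.prod volume) (volume.prod volume) :=
    MeasurePreserving.skew_product (g := fun w t => t + M (WithLp.toLp 2 w)) (.id _)
      (measurable_snd.add (hheight.measurable.comp measurable_fst))
      (Eventually.of_forall fun w => (measurePreserving_add_right volume _).map_eq)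
  rw [unflatten_eq_comp]
  exact (measurePreserving_tangentialNormalEquiv.symm _).comp
    (hskew.comp measurePreserving_tangentialNormalEquiv)

lemma measurableEmbedding_unflatten (hM : ContDiff ℝ ∞ M) : MeasurableEmbedding (unflatten M) :=
  (MeasurableEquiv.mk ⟨unflatten M, flatten M, flatten_unflatten, unflatten_flatten⟩
    (contDiff_unflatten hM).continuous.measurable
    (contDiff_flatten hM).continuous.measurable).measurableEmbedding

end Flattening

/-- `F` is the function `f` on `Ω` in flattened coordinates, of class `C^n` up to the boundary. -/
structure Represents (M : E2 → ℝ) (n : ℕ) (F f : E3 → ℝ) : Prop where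
  contDiffOn : ContDiffOn ℝ n F halfSpace
  zeroOutside : ZeroOutside F
  eq_of_pos : ∀ y : E3, 0 < y 0 → F y = f (unflatten M y)

/-- The function `f` on `closure Ω` in flattened coordinates. -/
def pullback (M : E2 → ℝ) (f : E3 → ℝ) : E3 → ℝ := halfSpace.indicator (f ∘ unflatten M)

lemma represents_pullback {M : E2 → ℝ} {n : ℕ} (hM : ContDiff ℝ ∞ M) {f : E3 → ℝ}
    (hf : ContDiffOn ℝ n f (closure (Omg M))) : Represents M n (pullback M f) f where
  contDiffOn := (hf.comp ((contDiff_unflatten hM).of_le (by exact_mod_cast le_top)).contDiffOn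
    (mapsTo_unflatten_closure hM)).congr fun _ hy => indicator_of_mem hy _
  zeroOutside _ hy := indicator_of_notMem hy _
  eq_of_pos _ hy := indicator_of_mem (setOf_pos_subset_halfSpace hy) _

namespace Represents

variable {M : E2 → ℝ} {n : ℕ} {F f G g : E3 → ℝ}

lemma add (hF : Represents M n F f) (hG : Represents M n G g) :
    Represents M n (F + G) (fun x => f x + g x) :=
  ⟨hF.contDiffOn.add hG.contDiffOn, hF.zeroOutside.add hG.zeroOutside,
    fun y hy => by simp [hF.eq_of_pos y hy, hG.eq_of_pos y hy]⟩

lemma smul (hF : Represents M n F f) (a : ℝ) : Represents M n (a • F) (fun x => a * f x) :=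
  ⟨hF.contDiffOn.const_smul a, fun y hy => by simp [hF.zeroOutside y hy],
    fun y hy => by simp [hF.eq_of_pos y hy]⟩

lemma sum {ι : Type*} [Fintype ι] {F f : ι → E3 → ℝ} (hF : ∀ i, Represents M n (F i) (f i)) :
    Represents M n (∑ i, F i) (fun x => ∑ i, f i x) where
  contDiffOn := by
    rw [Finset.sum_fn]
    exact ContDiffOn.sum fun i _ => (hF i).contDiffOn
  zeroOutside y hy := by
    rw [Finset.sum_apply]
    exact Finset.sum_eq_zero fun i _ => (hF i).zeroOutside y hy
  eq_of_pos y hy := by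
    rw [Finset.sum_apply]
    exact Finset.sum_congr rfl fun i _ => (hF i).eq_of_pos y hy

lemma mono {k : ℕ} (hkn : k ≤ n) (hF : Represents M n F f) : Represents M k F f :=
  ⟨hF.contDiffOn.of_le (by exact_mod_cast hkn), hF.zeroOutside, hF.eq_of_pos⟩

lemma contDiffOn_Omg (hM : ContDiff ℝ ∞ M) (hF : Represents M n F f) :
    ContDiffOn ℝ n f (Omg M) := by
  have hcomp : ContDiffOn ℝ n (F ∘ flatten M) (Omg M) :=
    hF.contDiffOn.comp ((contDiff_flatten hM).of_le (by exact_mod_cast le_top)).contDiffOn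
      fun x hx => setOf_pos_subset_halfSpace (flatten_apply_zero_pos.2 hx)
  refine hcomp.congr fun x hx => ?_
  rw [Function.comp_apply, hF.eq_of_pos _ (flatten_apply_zero_pos.2 hx), unflatten_flatten]

lemma contDiffAt (hM : ContDiff ℝ ∞ M) (hF : Represents M n F f) {x : E3} (hx : x ∈ Omg M) :
    ContDiffAt ℝ n f x := (hF.contDiffOn_Omg hM).contDiffAt ((isOpen_Omg hM).mem_nhds hx)

lemma hderiv_apply (hM : ContDiff ℝ ∞ M) (hF : Represents M (n + 1) F f) (i : Fin 3) {y : E3}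
    (hy : 0 < y 0) : hderiv i F y =
      pd i f (unflatten M y) + flatteningCoeff M i y * pd 0 f (unflatten M y) := by
  have hf : DifferentiableAt ℝ f (unflatten M y) :=
    (hF.contDiffAt hM (unflatten_mem_Omg.2 hy)).differentiableAt (by norm_cast)
  have heq : F =ᶠ[nhds y] f ∘ unflatten M := by
    filter_upwards [isOpen_setOf_pos.mem_nhds hy] with z hz using hF.eq_of_pos z hz
  rw [hderiv_apply_of_pos hy, heq.fderiv_eq, fderiv_comp _ hf
    ((contDiff_unflatten hM).differentiable (by norm_num) y)]
  simp [fderiv_unflatten_basisVec hM, pd_apply]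

lemma pd (hM : ContDiff ℝ ∞ M) (hF : Represents M (n + 1) F f) (i : Fin 3) :
    Represents M n (pullbackDeriv (flatteningCoeff M) i F) (pd i f) where
  contDiffOn := (contDiffOn_hderiv hF.contDiffOn i).sub <|
    (((contDiff_pd (contDiff_boundaryHeight hM) i).of_le (by exact_mod_cast le_top)).contDiffOn).mul
      (contDiffOn_hderiv hF.contDiffOn 0)
  zeroOutside y hy := by simp [pullbackDeriv, ZeroOutside.hderiv y hy]
  eq_of_pos y hy := by
    simp [pullbackDeriv, hF.hderiv_apply hM _ hy, flatteningCoeff_zero hM]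

lemma ae_eq (hF : Represents M n F f) :
    F =ᵐ[volume] fun y => (Omg M).indicator f (unflatten M y) := by
  filter_upwards [ae_apply_zero_ne_zero] with y hy
  rcases lt_or_gt_of_ne hy with hneg | hpos
  · rw [hF.zeroOutside y (not_le.2 hneg), indicator_of_notMem]
    rw [unflatten_mem_Omg]
    exact hneg.not_gt
  · rw [hF.eq_of_pos y hpos, indicator_of_mem (unflatten_mem_Omg.2 hpos)]

lemma sq_ae_eq (hF : Represents M n F f) :
    (fun y => F y ^ 2) =ᵐ[volume] (Omg M).indicator (fun x => f x ^ 2) ∘ unflatten M := by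
  filter_upwards [hF.ae_eq] with y hy
  rw [hy]
  by_cases hx : unflatten M y ∈ Omg M <;> simp [hx]

lemma sobolevSq_zero_eq (hM : ContDiff ℝ ∞ M) (hF : Represents M n F f) :
    sobolevSq 0 F = ∫ x in Omg M, f x ^ 2 := by
  rw [sobolevSq_zero, ← integral_indicator (measurableSet_Omg hM),
    integral_congr_ae hF.sq_ae_eq]
  exact (measurePreserving_unflatten hM.continuous).integral_comp
    (measurableEmbedding_unflatten hM) _

lemma memLp_iff (hM : ContDiff ℝ ∞ M) (hF : Represents M n F f) :
    MemLp F 2 volume ↔ IntegrableOn (fun x => f x ^ 2) (Omg M) := by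
  rw [← integrable_indicator_iff (measurableSet_Omg hM),
    ← (measurePreserving_unflatten hM.continuous).integrable_comp_emb
      (measurableEmbedding_unflatten hM), ← integrable_congr hF.sq_ae_eq]
  refine memLp_two_iff_integrable_sq ?_
  have hmeas : AEStronglyMeasurable ((Omg M).indicator f) volume :=
    (aestronglyMeasurable_indicator_iff (measurableSet_Omg hM)).2
      ((hF.contDiffOn_Omg hM).continuousOn.aestronglyMeasurable (measurableSet_Omg hM))
  exact (hmeas.comp_measurePreserving (measurePreserving_unflatten hM.continuous)).congr
    hF.ae_eq.symm

end Represents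

/-! ### Derivatives of functions on `Ω` -/

section PointwiseNorms

variable {E F : Type*} [NormedAddCommGroup E] [NormedSpace ℝ E] [NormedAddCommGroup F]
  [NormedSpace ℝ F] {n : ℕ} {x : E}

lemma norm_iteratedFDeriv_fderiv_apply_le {f : E → F} (hf : ContDiffAt ℝ (n + 1 : ℕ) f x) (v : E) :
    ‖iteratedFDeriv ℝ n (fun y => fderiv ℝ f y v) x‖ ≤ ‖v‖ * ‖iteratedFDeriv ℝ (n + 1) f x‖ := by
  have hfderiv : ContDiffAt ℝ n (fderiv ℝ f) x := hf.fderiv_right (by norm_cast)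
  have hcomp := (ContinuousLinearMap.apply ℝ F v).norm_iteratedFDeriv_comp_left hfderiv le_rfl
  rw [norm_iteratedFDeriv_fderiv] at hcomp
  refine hcomp.trans (mul_le_mul_of_nonneg_right ?_ (norm_nonneg _))
  refine ContinuousLinearMap.opNorm_le_bound _ (norm_nonneg v) fun L => ?_
  rw [mul_comm]
  exact L.le_opNorm v

lemma norm_iteratedFDeriv_smul_const_le {φ : E → ℝ} (hφ : ContDiffAt ℝ n φ x) {b : F}
    (hb : ‖b‖ ≤ 1) : ‖iteratedFDeriv ℝ n (fun y => φ y • b) x‖ ≤ ‖iteratedFDeriv ℝ n φ x‖ := by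
  refine (ContinuousLinearMap.norm_iteratedFDeriv_comp_left
    ((ContinuousLinearMap.id ℝ ℝ).smulRight b) hφ le_rfl).trans ?_
  refine mul_le_of_le_one_left (norm_nonneg _) ?_
  rw [ContinuousLinearMap.norm_smulRight_apply]
  exact mul_le_one₀ ContinuousLinearMap.norm_id_le (norm_nonneg b) hb

lemma norm_iteratedFDeriv_sum_smul_sq_le {ι : Type*} [Fintype ι] {φ : ι → E → ℝ}
    (hφ : ∀ i, ContDiffAt ℝ n (φ i) x) {b : ι → F} (hb : ∀ i, ‖b i‖ ≤ 1) :
    ‖iteratedFDeriv ℝ n (fun y => ∑ i, φ i y • b i) x‖ ^ 2 ≤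
      Fintype.card ι * ∑ i, ‖iteratedFDeriv ℝ n (φ i) x‖ ^ 2 := by
  rw [iteratedFDeriv_fun_sum_apply (f := fun i y => φ i y • b i)
    fun i _ => (hφ i).smul contDiffAt_const]
  calc ‖∑ i, iteratedFDeriv ℝ n (fun y => φ i y • b i) x‖ ^ 2
      ≤ (∑ i, ‖iteratedFDeriv ℝ n (φ i) x‖) ^ 2 := by
        gcongr
        exact norm_sum_le_of_le _ fun i _ => norm_iteratedFDeriv_smul_const_le (hφ i) (hb i)
    _ ≤ Fintype.card ι * ∑ i, ‖iteratedFDeriv ℝ n (φ i) x‖ ^ 2 := sq_sum_le_card_mul_sum_sq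

variable {ι : Type*} [Fintype ι]

lemma norm_euclideanProj_le_one (i : ι) :
    ‖(EuclideanSpace.proj i : EuclideanSpace ℝ ι →L[ℝ] ℝ)‖ ≤ 1 :=
  ContinuousLinearMap.opNorm_le_bound _ zero_le_one fun v => by
    simpa using PiLp.norm_apply_le v i

lemma norm_iteratedFDeriv_component_le {u : E → EuclideanSpace ℝ ι} (hu : ContDiffAt ℝ n u x)
    (i : ι) : ‖iteratedFDeriv ℝ n (fun y => u y i) x‖ ≤ ‖iteratedFDeriv ℝ n u x‖ :=
  ((EuclideanSpace.proj i : EuclideanSpace ℝ ι →L[ℝ] ℝ).norm_iteratedFDeriv_comp_left hu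
    le_rfl).trans (mul_le_of_le_one_left (norm_nonneg _) (norm_euclideanProj_le_one i))

lemma norm_iteratedFDeriv_euclidean_sq_le {u : E → EuclideanSpace ℝ ι}
    (hu : ContDiffAt ℝ n u x) : ‖iteratedFDeriv ℝ n u x‖ ^ 2 ≤
      Fintype.card ι * ∑ i, ‖iteratedFDeriv ℝ n (fun y => u y i) x‖ ^ 2 := by
  classical
  have hexpand : u = fun y => ∑ i, u y i • EuclideanSpace.single i (1 : ℝ) := by
    funext y
    simpa using ((EuclideanSpace.basisFun ι ℝ).sum_repr (u y)).symm
  conv_lhs => rw [hexpand]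
  exact norm_iteratedFDeriv_sum_smul_sq_le (contDiffAt_euclidean.1 hu) fun i => by simp

lemma fderiv_eq_sum_pd_smul_proj (f : E3 → ℝ) :
    fderiv ℝ f = fun y => ∑ i, pd i f y • (EuclideanSpace.proj i : E3 →L[ℝ] ℝ) := by
  funext y
  ext v
  conv_lhs => rw [← (EuclideanSpace.basisFun (Fin 3) ℝ).sum_repr v]
  simp [map_sum, mul_comm, pd]

lemma norm_iteratedFDeriv_succ_sq_le {f : E3 → ℝ} {x : E3}
    (hf : ContDiffAt ℝ (n + 1 : ℕ) f x) :
    ‖iteratedFDeriv ℝ (n + 1) f x‖ ^ 2 ≤ 3 * ∑ i, ‖iteratedFDeriv ℝ n (pd i f) x‖ ^ 2 := by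
  have hfderiv : ContDiffAt ℝ n (fderiv ℝ f) x := hf.fderiv_right (by norm_cast)
  rw [← norm_iteratedFDeriv_fderiv, fderiv_eq_sum_pd_smul_proj]
  simpa using norm_iteratedFDeriv_sum_smul_sq_le (φ := fun i => pd i f)
    (fun i => hfderiv.clm_apply contDiffAt_const) norm_euclideanProj_le_one

end PointwiseNorms

section Domain

variable {G : Type*} [NormedAddCommGroup G] [NormedSpace ℝ G]

/-- The squared seminorm `∫_U |∇^n f|²`. -/
def derivSq (U : Set E3) (n : ℕ) (f : E3 → G) : ℝ := ∫ x in U, ‖iteratedFDeriv ℝ n f x‖ ^ 2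

/-- The derivatives of `f` up to order `n` are square-integrable on `U`. -/
def SqIntegrableDerivs (U : Set E3) (n : ℕ) (f : E3 → G) : Prop :=
  ∀ j ≤ n, IntegrableOn (fun x => ‖iteratedFDeriv ℝ j f x‖ ^ 2) U

/-- The squared Sobolev norm `‖f‖²_{H^n(U)}`. -/
def sobolevNormSq (U : Set E3) (n : ℕ) (f : E3 → G) : ℝ := ∑ j ∈ Finset.range (n + 1), derivSq U j f

/-- The members `f d`, `d ∈ P`, of a family satisfy `∫_U |∇^n (f d)|² ≤ C R(d)` with a constant `C`
independent of `d`. -/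
def DerivSqBounded (U : Set E3) {α : Type*} (P : α → Prop) (R : α → ℝ) (n : ℕ)
    (f : α → E3 → G) : Prop :=
  ∃ C, 0 ≤ C ∧ ∀ d, P d →
    IntegrableOn (fun x => ‖iteratedFDeriv ℝ n (f d) x‖ ^ 2) U ∧ derivSq U n (f d) ≤ C * R d

variable {U : Set E3} {n : ℕ} {f : E3 → G}

lemma derivSq_nonneg (U : Set E3) (n : ℕ) (f : E3 → G) : 0 ≤ derivSq U n f :=
  integral_nonneg fun _ => sq_nonneg _

lemma sobolevNormSq_nonneg (U : Set E3) (n : ℕ) (f : E3 → G) : 0 ≤ sobolevNormSq U n f :=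
  Finset.sum_nonneg fun _ _ => derivSq_nonneg U _ f

lemma derivSq_zero (U : Set E3) (f : E3 → ℝ) : derivSq U 0 f = ∫ x in U, f x ^ 2 := by
  simp [derivSq]

lemma sobolevNormSq_zero (U : Set E3) (f : E3 → G) : sobolevNormSq U 0 f = derivSq U 0 f :=
  Finset.sum_range_one _

lemma derivSq_zero_le_sobolevNormSq (U : Set E3) (n : ℕ) (f : E3 → G) :
    derivSq U 0 f ≤ sobolevNormSq U n f :=
  Finset.single_le_sum (f := fun j => derivSq U j f) (fun j _ => derivSq_nonneg U j f)
    (Finset.mem_range.2 n.succ_pos)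

lemma integrableOn_and_derivSq_le (hU : IsOpen U) (hf : ContDiffOn ℝ n f U) {ψ : E3 → ℝ}
    (hψ : IntegrableOn ψ U) (hle : ∀ x ∈ U, ‖iteratedFDeriv ℝ n f x‖ ^ 2 ≤ ψ x) :
    IntegrableOn (fun x => ‖iteratedFDeriv ℝ n f x‖ ^ 2) U ∧ derivSq U n f ≤ ∫ x in U, ψ x := by
  have hcont : ContinuousOn (fun x => ‖iteratedFDeriv ℝ n f x‖ ^ 2) U :=
    ((hf.continuousOn_iteratedFDerivWithin le_rfl hU.uniqueDiffOn).congr fun x hx =>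
      (iteratedFDerivWithin_of_isOpen n hU hx).symm).norm.pow 2
  have hint : IntegrableOn (fun x => ‖iteratedFDeriv ℝ n f x‖ ^ 2) U := by
    refine Integrable.mono' hψ (hcont.aestronglyMeasurable hU.measurableSet) ?_
    filter_upwards [ae_restrict_mem hU.measurableSet] with x hx
    rw [Real.norm_of_nonneg (sq_nonneg _)]
    exact hle x hx
  exact ⟨hint, setIntegral_mono_on hint hψ hU.measurableSet hle⟩

lemma integrableOn_and_derivSq_le_sum {H ι : Type*} [NormedAddCommGroup H] [NormedSpace ℝ H]
    [Fintype ι] {g : ι → E3 → H} {k : ℕ} {c : ℝ} (hU : IsOpen U) (hf : ContDiffOn ℝ n f U)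
    (hg : ∀ i, IntegrableOn (fun x => ‖iteratedFDeriv ℝ k (g i) x‖ ^ 2) U)
    (hle : ∀ x ∈ U,
      ‖iteratedFDeriv ℝ n f x‖ ^ 2 ≤ c * ∑ i, ‖iteratedFDeriv ℝ k (g i) x‖ ^ 2) :
    IntegrableOn (fun x => ‖iteratedFDeriv ℝ n f x‖ ^ 2) U ∧
      derivSq U n f ≤ c * ∑ i, derivSq U k (g i) := by
  have hsum := integrableOn_and_derivSq_le hU hf
    ((integrable_finsetSum _ fun i _ => hg i).const_mul c) hle
  rwa [integral_const_mul, integral_finsetSum _ fun i _ => hg i] at hsum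

lemma integrableOn_and_derivSq_pd_le {f : E3 → ℝ} (hU : IsOpen U)
    (hf : ContDiffOn ℝ (n + 1 : ℕ) f U)
    (hint : IntegrableOn (fun x => ‖iteratedFDeriv ℝ (n + 1) f x‖ ^ 2) U) (i : Fin 3) :
    IntegrableOn (fun x => ‖iteratedFDeriv ℝ n (pd i f) x‖ ^ 2) U ∧
      derivSq U n (pd i f) ≤ derivSq U (n + 1) f := by
  have hpd : ContDiffOn ℝ n (pd i f) U :=
    (hf.fderiv_of_isOpen hU (by norm_cast)).clm_apply contDiffOn_const
  refine integrableOn_and_derivSq_le hU hpd hint fun x hx => ?_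
  gcongr
  refine (norm_iteratedFDeriv_fderiv_apply_le (hf.contDiffAt (hU.mem_nhds hx)) _).trans_eq ?_
  simp

lemma integrableOn_and_derivSq_component_le {u : E3 → E3} (hU : IsOpen U)
    (hu : ContDiffOn ℝ n u U)
    (hint : IntegrableOn (fun x => ‖iteratedFDeriv ℝ n u x‖ ^ 2) U) (i : Fin 3) :
    IntegrableOn (fun x => ‖iteratedFDeriv ℝ n (fun y => u y i) x‖ ^ 2) U ∧
      derivSq U n (fun y => u y i) ≤ derivSq U n u := by
  refine integrableOn_and_derivSq_le hU (contDiffOn_euclidean.1 hu i) hint fun x hx => ?_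
  gcongr
  exact norm_iteratedFDeriv_component_le (hu.contDiffAt (hU.mem_nhds hx)) i

namespace SqIntegrableDerivs

lemma sobolevNormSq_pd_le {f : E3 → ℝ} (hf : SqIntegrableDerivs U (n + 1) f) (hU : IsOpen U)
    (hcont : ContDiffOn ℝ (n + 1 : ℕ) f U) (i : Fin 3) :
    sobolevNormSq U n (pd i f) ≤ sobolevNormSq U (n + 1) f := by
  rw [sobolevNormSq, sobolevNormSq, Finset.sum_range_succ' _ (n + 1)]
  refine (Finset.sum_le_sum fun j hj => ?_).trans (le_add_of_nonneg_right (derivSq_nonneg U 0 f))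
  have hjn := Finset.mem_range.1 hj
  exact (integrableOn_and_derivSq_pd_le hU (hcont.of_le (by norm_cast))
    (hf (j + 1) (by omega)) i).2

lemma pd {f : E3 → ℝ} (hf : SqIntegrableDerivs U (n + 1) f) (hU : IsOpen U)
    (hcont : ContDiffOn ℝ (n + 1 : ℕ) f U) (i : Fin 3) : SqIntegrableDerivs U n (pd i f) :=
  fun j hj => (integrableOn_and_derivSq_pd_le hU (hcont.of_le (by norm_cast; omega))
    (hf (j + 1) (by omega)) i).1

lemma component {u : E3 → E3} (hu : SqIntegrableDerivs U n u) (hU : IsOpen U)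
    (hcont : ContDiffOn ℝ n u U) (i : Fin 3) : SqIntegrableDerivs U n (fun y => u y i) :=
  fun j hj => (integrableOn_and_derivSq_component_le hU (hcont.of_le (by norm_cast)) (hu j hj) i).1

lemma sobolevNormSq_component_le {u : E3 → E3} (hu : SqIntegrableDerivs U n u) (hU : IsOpen U)
    (hcont : ContDiffOn ℝ n u U) (i : Fin 3) :
    sobolevNormSq U n (fun y => u y i) ≤ sobolevNormSq U n u :=
  Finset.sum_le_sum fun j hj => by
    have hjn := Finset.mem_range_succ_iff.1 hj
    exact (integrableOn_and_derivSq_component_le hU (hcont.of_le (by norm_cast)) (hu j hjn) i).2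

lemma euclidean {u : E3 → E3} (hu : ∀ i, SqIntegrableDerivs U n (fun y => u y i)) (hU : IsOpen U)
    (hcont : ContDiffOn ℝ n u U) : SqIntegrableDerivs U n u := fun j hj =>
  (integrableOn_and_derivSq_le_sum hU (hcont.of_le (by norm_cast)) (fun i => hu i j hj)
    fun _ hx => norm_iteratedFDeriv_euclidean_sq_le
      ((hcont.of_le (by norm_cast)).contDiffAt (hU.mem_nhds hx))).1

end SqIntegrableDerivs

namespace DerivSqBounded

variable {α : Type*} {P : α → Prop} {R : α → ℝ}

lemma of_sum {H ι : Type*} [NormedAddCommGroup H] [NormedSpace ℝ H] [Fintype ι] {k : ℕ}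
    {f : α → E3 → G} {g : ι → α → E3 → H} {c : ℝ} (hU : IsOpen U) (hc : 0 ≤ c)
    (hcont : ∀ d, P d → ContDiffOn ℝ n (f d) U)
    (hg : ∀ i, DerivSqBounded U P R k (g i))
    (hle : ∀ d, P d → ∀ x ∈ U,
      ‖iteratedFDeriv ℝ n (f d) x‖ ^ 2 ≤ c * ∑ i, ‖iteratedFDeriv ℝ k (g i d) x‖ ^ 2) :
    DerivSqBounded U P R n f := by
  choose C hC hg using hg
  have hsum := Finset.sum_nonneg fun i (_ : i ∈ Finset.univ) => hC i
  refine ⟨c * ∑ i, C i, by positivity, fun d hd => ?_⟩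
  obtain ⟨hint, hbound⟩ := integrableOn_and_derivSq_le_sum hU (hcont d hd)
    (fun i => (hg i d hd).1) (hle d hd)
  refine ⟨hint, hbound.trans ?_⟩
  rw [mul_assoc, Finset.sum_mul]
  gcongr with i
  exact (hg i d hd).2

lemma succ {f : α → E3 → ℝ} (hU : IsOpen U)
    (hcont : ∀ d, P d → ContDiffOn ℝ (n + 1 : ℕ) (f d) U)
    (hpd : ∀ i, DerivSqBounded U P R n (fun d => pd i (f d))) :
    DerivSqBounded U P R (n + 1) f :=
  .of_sum hU zero_le_three hcont hpd fun d hd _ hx =>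
    norm_iteratedFDeriv_succ_sq_le ((hcont d hd).contDiffAt (hU.mem_nhds hx))

lemma euclidean {u : α → E3 → E3} (hU : IsOpen U)
    (hcont : ∀ d, P d → ContDiffOn ℝ n (u d) U)
    (hu : ∀ i, DerivSqBounded U P R n (fun d y => u d y i)) : DerivSqBounded U P R n u :=
  .of_sum hU (Nat.cast_nonneg _) hcont hu fun d hd _ hx =>
    norm_iteratedFDeriv_euclidean_sq_le ((hcont d hd).contDiffAt (hU.mem_nhds hx))

end DerivSqBounded

end Domain

/-! ### Transfer between `Ω` and the half-space -/

section Transfer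

variable {M : E2 → ℝ} {n : ℕ} {α : Type*} {P : α → Prop} {F f : α → E3 → ℝ}

lemma SobolevBounded.zero_of_represents (hM : ContDiff ℝ ∞ M)
    (hF : ∀ d, P d → Represents M n (F d) (f d))
    (hf : ∀ d, P d → SqIntegrableDerivs (Omg M) n (f d)) :
    SobolevBounded P (fun d => sobolevNormSq (Omg M) n (f d)) 0 F := by
  refine .of_le (fun d hd => ?_) fun d hd => ?_
  · have hsq := hf d hd 0 n.zero_le
    simp only [norm_iteratedFDeriv_zero, Real.norm_eq_abs, sq_abs] at hsq
    exact ⟨((hF d hd).mono n.zero_le).contDiffOn, (hF d hd).zeroOutside,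
      ((hF d hd).memLp_iff hM).2 hsq⟩
  · rw [(hF d hd).sobolevSq_zero_eq hM, ← derivSq_zero]
    exact derivSq_zero_le_sobolevNormSq _ n _

theorem SobolevBounded.of_represents (hM : ContDiff ℝ ∞ M)
    (hm : FlatteningCoeff n (flatteningCoeff M)) (hF : ∀ d, P d → Represents M n (F d) (f d))
    (hf : ∀ d, P d → SqIntegrableDerivs (Omg M) n (f d)) :
    SobolevBounded P (fun d => sobolevNormSq (Omg M) n (f d)) n F := by
  induction n generalizing F f with
  | zero => exact .zero_of_represents hM hF hf
  | succ n ih =>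
    have hU := isOpen_Omg hM
    have hmn := hm.mono n.le_succ
    have hcont (d) (hd : P d) := (hF d hd).contDiffOn_Omg hM
    have hpull (i : Fin 3) : SobolevBounded P (fun d => sobolevNormSq (Omg M) (n + 1) (f d)) n
        (fun d => pullbackDeriv (flatteningCoeff M) i (F d)) := by
      refine (ih hmn (fun d hd => (hF d hd).pd hM i)
        fun d hd => (hf d hd).pd hU (hcont d hd) i).trans ⟨1, zero_le_one, fun d hd => ?_⟩
      rw [one_mul]
      exact (hf d hd).sobolevNormSq_pd_le hU (hcont d hd) i
    have hzero := SobolevBounded.zero_of_represents hM hF hf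
    have hderiv (i : Fin 3) := SobolevBounded.hderiv_of_pullbackDeriv hmn hpull i
    exact .succ hzero hderiv fun d hd => .succ (hF d hd).contDiffOn (hF d hd).zeroOutside
      (hzero.halfSobolev hd).memLp fun i => (hderiv i).halfSobolev hd

lemma Represents.halfSobolev (hM : ContDiff ℝ ∞ M) (hm : FlatteningCoeff n (flatteningCoeff M))
    {F f : E3 → ℝ} (hF : Represents M n F f) (hf : SqIntegrableDerivs (Omg M) n f) :
    HalfSobolev n F :=
  (SobolevBounded.of_represents (P := fun _ : Unit => True) hM hm (fun _ _ => hF)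
    fun _ _ => hf).halfSobolev (d := ()) trivial

theorem SobolevBounded.derivSqBounded {R : α → ℝ} (hM : ContDiff ℝ ∞ M)
    (hm : FlatteningCoeff n (flatteningCoeff M))
    (hrep : ∀ d, P d → Represents M n (F d) (f d)) (hF : SobolevBounded P R n F) :
    DerivSqBounded (Omg M) P R n f := by
  induction n generalizing F f with
  | zero =>
    obtain ⟨C, hC, hF⟩ := hF
    refine ⟨C, hC, fun d hd => ⟨?_, ?_⟩⟩
    · simp only [norm_iteratedFDeriv_zero, Real.norm_eq_abs, sq_abs]
      exact ((hrep d hd).memLp_iff hM).1 (hF d hd).1.memLp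
    · rw [derivSq_zero, ← (hrep d hd).sobolevSq_zero_eq hM]
      exact (hF d hd).2
  | succ n ih =>
    have hmn := hm.mono n.le_succ
    exact .succ (isOpen_Omg hM) (fun d hd => (hrep d hd).contDiffOn_Omg hM) fun i =>
      ih hmn (fun d hd => (hrep d hd).pd hM i) (hF.pullback hmn i)

lemma Represents.sqIntegrableDerivs (hM : ContDiff ℝ ∞ M)
    (hm : FlatteningCoeff n (flatteningCoeff M)) {F f : E3 → ℝ} (hF : Represents M n F f)
    (hsob : HalfSobolev n F) : SqIntegrableDerivs (Omg M) n f := fun j hj => by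
  have hbound : SobolevBounded (fun _ : Unit => True) (fun _ => sobolevSq j F) j (fun _ => F) :=
    .of_le (fun _ _ => hsob.mono hj) fun _ _ => le_rfl
  obtain ⟨_, _, h⟩ := hbound.derivSqBounded hM (hm.mono hj) fun _ _ => hF.mono hj
  exact (h () trivial).1

end Transfer

/-! ### The Stokes system on `Ω` -/

section NoSlipFlow

/-- The velocities `u ∈ C^{k+2}` and pressures `p ∈ C^{k+1}` on `closure Ω` with square-integrable
derivatives for which `u` satisfies the no-slip condition. -/
structure NoSlipFlow (M : E2 → ℝ) (k : ℕ) (u : E3 → E3) (p : E3 → ℝ) : Prop where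
  contDiffOn_vel : ContDiffOn ℝ (k + 2 : ℕ) u (closure (Omg M))
  contDiffOn_pres : ContDiffOn ℝ (k + 1 : ℕ) p (closure (Omg M))
  sqIntegrable_vel : SqIntegrableDerivs (Omg M) (k + 2) u
  sqIntegrable_pres : SqIntegrableDerivs (Omg M) (k + 1) p
  noSlip : ∀ x', u (gph M x') = 0

/-- The left-hand side `-μΔu + κ∇p` of the momentum equation. -/
def stokesForce (μ κ : ℝ) (u : E3 → E3) (p : E3 → ℝ) (x : E3) : E3 := -μ • vlap u x + κ • grad p x

/-- The right-hand side of the estimate of order `k` on `Ω`, without its constant. -/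
def domainDataSq (M : E2 → ℝ) (ρ μ κ : ℝ) (k : ℕ) (u : E3 → E3) (p : E3 → ℝ) : ℝ :=
  sobolevNormSq (Omg M) (k + 1) (fun x => ρ * vdiv u x) +
    sobolevNormSq (Omg M) k (stokesForce μ κ u p) + derivSq (Omg M) 1 u

/-- A flow on `closure Ω` in flattened coordinates. -/
def flattenedFlow (M : E2 → ℝ) (u : E3 → E3) (p : E3 → ℝ) : StokesFlow :=
  ⟨fun i => pullback M (fun y => u y i), pullback M p⟩

variable {M : E2 → ℝ} {ρ μ κ : ℝ} {k : ℕ} {u : E3 → E3} {p : E3 → ℝ}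

lemma domainDataSq_nonneg (M : E2 → ℝ) (ρ μ κ : ℝ) (k : ℕ) (u : E3 → E3) (p : E3 → ℝ) :
    0 ≤ domainDataSq M ρ μ κ k u p :=
  add_nonneg (add_nonneg (sobolevNormSq_nonneg _ _ _) (sobolevNormSq_nonneg _ _ _))
    (derivSq_nonneg _ _ _)

namespace NoSlipFlow

lemma represents_vel (hM : ContDiff ℝ ∞ M) (hw : NoSlipFlow M k u p) (i : Fin 3) :
    Represents M (k + 2) ((flattenedFlow M u p).vel i) (fun y => u y i) :=
  represents_pullback hM (contDiffOn_euclidean.1 hw.contDiffOn_vel i)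

lemma represents_pres (hM : ContDiff ℝ ∞ M) (hw : NoSlipFlow M k u p) :
    Represents M (k + 1) (flattenedFlow M u p).pres p :=
  represents_pullback hM hw.contDiffOn_pres

lemma represents_divergence (hM : ContDiff ℝ ∞ M) (hw : NoSlipFlow M k u p) :
    Represents M (k + 1) (StokesFlow.divergence (flatteningCoeff M) (flattenedFlow M u p))
      (vdiv u) :=
  .sum (f := fun i => pd i fun y => u y i) fun i => (hw.represents_vel hM i).pd hM i

lemma represents_force (hM : ContDiff ℝ ∞ M) (hw : NoSlipFlow M k u p) (i : Fin 3) :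
    Represents M k (StokesFlow.force μ κ (flatteningCoeff M) i (flattenedFlow M u p))
      (fun x => stokesForce μ κ u p x i) := by
  have hlap : Represents M k _ (fun x => ∑ j, pd j (pd j fun y => u y i) x) :=
    .sum (f := fun j => pd j (pd j fun y => u y i))
      fun j => ((hw.represents_vel hM i).pd hM j).pd hM j
  convert (hlap.smul (-μ)).add (((hw.represents_pres hM).pd hM i).smul κ) using 1
  · rw [StokesFlow.force, neg_smul]
  · funext x
    simp [stokesForce, vlap, grad, vecE3]

lemma admissible (hM : ContDiff ℝ ∞ M) (hm : FlatteningCoeff (k + 2) (flatteningCoeff M))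
    (hw : NoSlipFlow M k u p) : (flattenedFlow M u p).Admissible k where
  vel i := (hw.represents_vel hM i).halfSobolev hM hm
    (hw.sqIntegrable_vel.component (isOpen_Omg hM) (hw.contDiffOn_vel.mono subset_closure) i)
  pres := (hw.represents_pres hM).halfSobolev hM (hm.mono (by omega)) hw.sqIntegrable_pres
  boundary i y hy := by
    have hmem : y ∈ halfSpace := hy.ge
    simp [flattenedFlow, pullback, hmem, unflatten_of_apply_zero_eq_zero hy, hw.noSlip]

lemma contDiffOn_stokesForce (hM : ContDiff ℝ ∞ M) (hw : NoSlipFlow M k u p) :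
    ContDiffOn ℝ k (stokesForce μ κ u p) (Omg M) :=
  contDiffOn_euclidean.2 fun i => (hw.represents_force hM i).contDiffOn_Omg hM

lemma sqIntegrable_divergence (hM : ContDiff ℝ ∞ M)
    (hm : FlatteningCoeff (k + 2) (flatteningCoeff M)) (hw : NoSlipFlow M k u p) :
    SqIntegrableDerivs (Omg M) (k + 1) (fun x => ρ * vdiv u x) := by
  have hm₁ := hm.mono (k + 1).le_succ
  exact ((hw.represents_divergence hM).smul ρ).sqIntegrableDerivs hM hm₁
    (((hw.admissible hM hm).divergence hm₁).smul ρ)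

lemma sqIntegrable_stokesForce (hM : ContDiff ℝ ∞ M)
    (hm : FlatteningCoeff (k + 2) (flatteningCoeff M)) (hw : NoSlipFlow M k u p) :
    SqIntegrableDerivs (Omg M) k (stokesForce μ κ u p) :=
  .euclidean (fun i => (hw.represents_force hM i).sqIntegrableDerivs hM (hm.mono (by omega))
    ((hw.admissible hM hm).force (hm.mono (k + 1).le_succ) i)) (isOpen_Omg hM)
    (hw.contDiffOn_stokesForce hM)

end NoSlipFlow

end NoSlipFlow

section NoSlipFlowEstimate

variable {M : E2 → ℝ} {ρ μ κ : ℝ} {k : ℕ}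

lemma sobolevBounded_divergence (hM : ContDiff ℝ ∞ M)
    (hm : FlatteningCoeff (k + 2) (flatteningCoeff M)) (hρ : ρ ≠ 0) :
    SobolevBounded (fun w : (E3 → E3) × (E3 → ℝ) => NoSlipFlow M k w.1 w.2)
      (fun w => domainDataSq M ρ μ κ k w.1 w.2) (k + 1)
      (fun w => StokesFlow.divergence (flatteningCoeff M) (flattenedFlow M w.1 w.2)) := by
  have hscaled := SobolevBounded.of_represents (hM := hM)
    (P := fun w : (E3 → E3) × (E3 → ℝ) => NoSlipFlow M k w.1 w.2) (hm.mono (k + 1).le_succ)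
    (fun w hw => (hw.represents_divergence hM).smul ρ)
    fun w hw => hw.sqIntegrable_divergence hM hm
  refine ((hscaled.smul ρ⁻¹).congr fun w _ => (inv_smul_smul₀ hρ _).symm).trans
    ⟨1, zero_le_one, fun w _ => ?_⟩
  rw [one_mul, domainDataSq, add_assoc]
  exact le_add_of_nonneg_right (add_nonneg (sobolevNormSq_nonneg _ _ _) (derivSq_nonneg _ _ _))

lemma sobolevBounded_force (hM : ContDiff ℝ ∞ M)
    (hm : FlatteningCoeff (k + 2) (flatteningCoeff M)) (i : Fin 3) :
    SobolevBounded (fun w : (E3 → E3) × (E3 → ℝ) => NoSlipFlow M k w.1 w.2)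
      (fun w => domainDataSq M ρ μ κ k w.1 w.2) k
      (fun w => StokesFlow.force μ κ (flatteningCoeff M) i (flattenedFlow M w.1 w.2)) := by
  have hU := isOpen_Omg hM
  have hcomponent := SobolevBounded.of_represents (hM := hM)
    (P := fun w : (E3 → E3) × (E3 → ℝ) => NoSlipFlow M k w.1 w.2) (hm.mono (by omega))
    (fun w hw => hw.represents_force (μ := μ) (κ := κ) hM i) fun w hw =>
      (hw.sqIntegrable_stokesForce hM hm).component hU (hw.contDiffOn_stokesForce hM) i
  refine hcomponent.trans ⟨1, zero_le_one, fun w hw => ?_⟩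
  rw [one_mul, domainDataSq]
  linarith [(hw.sqIntegrable_stokesForce (μ := μ) (κ := κ) hM hm).sobolevNormSq_component_le hU
    (hw.contDiffOn_stokesForce hM) i, derivSq_nonneg (Omg M) 1 w.1,
    sobolevNormSq_nonneg (Omg M) (k + 1) (fun x => ρ * vdiv w.1 x)]

lemma NoSlipFlow.derivSq_pd_vel_le {u : E3 → E3} {p : E3 → ℝ} (hM : ContDiff ℝ ∞ M)
    (hw : NoSlipFlow M k u p) (i a : Fin 3) :
    IntegrableOn (fun x => ‖iteratedFDeriv ℝ 0 (pd a fun y => u y i) x‖ ^ 2) (Omg M) ∧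
      derivSq (Omg M) 0 (pd a fun y => u y i) ≤ derivSq (Omg M) 1 u := by
  have hU := isOpen_Omg hM
  have hu : ContDiffOn ℝ (0 + 1 : ℕ) u (Omg M) :=
    (hw.contDiffOn_vel.mono subset_closure).of_le (by norm_cast; omega)
  obtain ⟨hint, hle⟩ := integrableOn_and_derivSq_component_le hU hu
    (hw.sqIntegrable_vel 1 (by omega)) i
  obtain ⟨hint', hle'⟩ := integrableOn_and_derivSq_pd_le hU (contDiffOn_euclidean.1 hu i) hint a
  exact ⟨hint', hle'.trans hle⟩

lemma sobolevBounded_hderiv_vel (hM : ContDiff ℝ ∞ M)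
    (hm : FlatteningCoeff (k + 2) (flatteningCoeff M)) (i a : Fin 3) :
    SobolevBounded (fun w : (E3 → E3) × (E3 → ℝ) => NoSlipFlow M k w.1 w.2)
      (fun w => domainDataSq M ρ μ κ k w.1 w.2) 0
      (fun w => hderiv a ((flattenedFlow M w.1 w.2).vel i)) := by
  have hm₀ := hm.mono (k + 2).zero_le
  refine SobolevBounded.hderiv_of_pullbackDeriv hm₀ (fun b => ?_) a
  refine (SobolevBounded.of_represents hM hm₀
    (fun w hw => ((hw.represents_vel hM i).pd hM b).mono (k + 1).zero_le) ?_).trans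
    ⟨1, zero_le_one, fun w hw => ?_⟩
  · intro w hw j hj
    rw [Nat.le_zero.1 hj]
    exact (hw.derivSq_pd_vel_le hM i b).1
  · rw [one_mul, sobolevNormSq_zero, domainDataSq]
    exact (hw.derivSq_pd_vel_le hM i b).2.trans
      (le_add_of_nonneg_left (add_nonneg (sobolevNormSq_nonneg _ _ _) (sobolevNormSq_nonneg _ _ _)))

lemma SobolevBounded.comp_flattenedFlow {n : ℕ} {F : StokesFlow → E3 → ℝ} (hM : ContDiff ℝ ∞ M)
    (hm : FlatteningCoeff (k + 2) (flatteningCoeff M)) (hρ : ρ ≠ 0)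
    (hF : SobolevBounded (StokesFlow.Admissible k) (StokesFlow.dataSq μ κ (flatteningCoeff M) k)
      n F) :
    SobolevBounded (fun w : (E3 → E3) × (E3 → ℝ) => NoSlipFlow M k w.1 w.2)
      (fun w => domainDataSq M ρ μ κ k w.1 w.2) n (fun w => F (flattenedFlow M w.1 w.2)) := by
  have hcomp := hF.comp (Q := fun w : (E3 → E3) × (E3 → ℝ) => NoSlipFlow M k w.1 w.2)
    (fun w => flattenedFlow M w.1 w.2) fun w hw => hw.admissible hM hm
  have hdata := StokesFlow.exists_dataSq_le (sobolevBounded_divergence (μ := μ) (κ := κ) hM hm hρ)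
    (sobolevBounded_force hM hm) (sobolevBounded_hderiv_vel hM hm)
  exact hcomp.trans hdata

theorem derivSqBounded_vel (hM : ContDiff ℝ ∞ M)
    (hm : FlatteningCoeff (k + 2) (flatteningCoeff M)) (hρ : ρ ≠ 0) (hμ : μ ≠ 0) (hκ : κ ≠ 0) :
    DerivSqBounded (Omg M) (fun w : (E3 → E3) × (E3 → ℝ) => NoSlipFlow M k w.1 w.2)
      (fun w => domainDataSq M ρ μ κ k w.1 w.2) (k + 2) Prod.fst := by
  have hm₁ := hm.mono (k + 1).le_succ
  have hU := isOpen_Omg hM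
  refine .euclidean hU (fun w hw => hw.contDiffOn_vel.mono subset_closure) fun i =>
    .succ hU (fun w hw => (hw.represents_vel hM i).contDiffOn_Omg hM) fun b => ?_
  have hpull := SobolevBounded.pullbackDeriv_of_hderiv hm₁
    ((StokesFlow.regularityEstimate hm hμ hκ).vel i) b
  exact (hpull.comp_flattenedFlow hM hm hρ).derivSqBounded hM hm₁
    fun w hw => (hw.represents_vel hM i).pd hM b

theorem derivSqBounded_pres (hM : ContDiff ℝ ∞ M)
    (hm : FlatteningCoeff (k + 2) (flatteningCoeff M)) (hρ : ρ ≠ 0) (hμ : μ ≠ 0) (hκ : κ ≠ 0) :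
    DerivSqBounded (Omg M) (fun w : (E3 → E3) × (E3 → ℝ) => NoSlipFlow M k w.1 w.2)
      (fun w => domainDataSq M ρ μ κ k w.1 w.2) (k + 1) Prod.snd := by
  have hm₀ := hm.mono (show k ≤ k + 2 by omega)
  refine .succ (isOpen_Omg hM) (fun w hw => hw.contDiffOn_pres.mono subset_closure) fun b => ?_
  have hpull := SobolevBounded.pullbackDeriv_of_hderiv hm₀
    (StokesFlow.regularityEstimate hm hμ hκ).pres b
  exact (hpull.comp_flattenedFlow hM hm hρ).derivSqBounded hM hm₀
    fun w hw => (hw.represents_pres hM).pd hM b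

end NoSlipFlowEstimate

/-! ### Sobolev embedding on the plane -/

section LineSobolev

variable {f f' : ℝ → ℝ}

lemma sq_le_sq_add_integral (hf : ∀ x, HasDerivAt f (f' x) x) (hf' : Continuous f') {x t : ℝ}
    (ht : t ∈ Icc x (x + 1)) :
    f x ^ 2 ≤ f t ^ 2 + ∫ s in x..(x + 1), (f s ^ 2 + f' s ^ 2) := by
  have hcont : Continuous f := continuous_iff_continuousAt.2 fun x => (hf x).continuousAt
  have hdensity : Continuous fun s => f s ^ 2 + f' s ^ 2 := by fun_prop
  have hprod : Continuous fun s => 2 * f s * f' s := by fun_prop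
  have hftc : ∫ s in x..t, (2 * f s * f' s) = f t ^ 2 - f x ^ 2 :=
    intervalIntegral.integral_eq_sub_of_hasDerivAt (f := fun s => f s ^ 2)
      (fun s _ => ((hf s).pow 2).congr_deriv (by simp)) (hprod.intervalIntegrable _ _)
  have hyoung : ∫ s in x..t, -(f s ^ 2 + f' s ^ 2) ≤ ∫ s in x..t, (2 * f s * f' s) := by
    refine intervalIntegral.integral_mono_on ht.1 (hdensity.neg.intervalIntegrable _ _)
      (hprod.intervalIntegrable _ _) fun s _ => ?_
    linarith [sq_nonneg (f s + f' s)]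
  have hextend : ∫ s in x..t, (f s ^ 2 + f' s ^ 2) ≤ ∫ s in x..(x + 1), (f s ^ 2 + f' s ^ 2) :=
    intervalIntegral.integral_mono_interval le_rfl ht.1 ht.2
      (Eventually.of_forall fun s => by positivity) (hdensity.intervalIntegrable _ _)
  rw [intervalIntegral.integral_neg] at hyoung
  linarith

lemma sq_le_two_mul_integral (hf : ∀ x, HasDerivAt f (f' x) x) (hf' : Continuous f') (x : ℝ) :
    f x ^ 2 ≤ 2 * ∫ t in x..(x + 1), (f t ^ 2 + f' t ^ 2) := by
  have hcont : Continuous f := continuous_iff_continuousAt.2 fun x => (hf x).continuousAt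
  have hdensity : Continuous fun t => f t ^ 2 + f' t ^ 2 := by fun_prop
  set J := ∫ t in x..(x + 1), (f t ^ 2 + f' t ^ 2)
  have hmono : ∫ _ in x..(x + 1), f x ^ 2 ≤ ∫ t in x..(x + 1), ((f t ^ 2 + f' t ^ 2) + J) := by
    refine intervalIntegral.integral_mono_on (by linarith) (by simp)
      ((hdensity.add continuous_const).intervalIntegrable _ _) fun t ht => ?_
    linarith [sq_le_sq_add_integral hf hf' ht, sq_nonneg (f' t)]
  rw [intervalIntegral.integral_add (hdensity.intervalIntegrable _ _) (by simp)] at hmono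
  simp only [intervalIntegral.integral_const, add_sub_cancel_left, one_smul] at hmono
  linarith

end LineSobolev

section PlaneSobolev

/-- The point of the plane with coordinates `s` and `t`. -/
def planePoint (s t : ℝ) : E2 := s • EuclideanSpace.single 0 1 + t • EuclideanSpace.single 1 1

/-- The derivative of `N` in the direction `v`. -/
def dirDeriv (v : E2) (N : E2 → ℝ) (x : E2) : ℝ := fderiv ℝ N x v

/-- The density `N² + (∂₁N)² + (∂₀N)² + (∂₁∂₀N)²`, whose integral over a unit square controls `N²`
at a corner. -/
def mixedDerivSq (N : E2 → ℝ) (x : E2) : ℝ :=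
  (N x ^ 2 + dirDeriv (EuclideanSpace.single 1 1) N x ^ 2) +
    (dirDeriv (EuclideanSpace.single 0 1) N x ^ 2 +
      dirDeriv (EuclideanSpace.single 1 1) (dirDeriv (EuclideanSpace.single 0 1) N) x ^ 2)

variable {N : E2 → ℝ}

lemma continuous_planePoint : Continuous fun q : ℝ × ℝ => planePoint q.1 q.2 := by
  unfold planePoint
  fun_prop

lemma continuous_planePoint_left (t : ℝ) : Continuous fun s => planePoint s t :=
  continuous_planePoint.comp (Continuous.prodMk_left t)

lemma continuous_planePoint_right (s : ℝ) : Continuous fun t => planePoint s t :=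
  continuous_planePoint.comp (Continuous.prodMk_right s)

lemma planePoint_apply_zero_apply_one (y : E2) : planePoint (y 0) (y 1) = y := by
  ext i
  fin_cases i <;> simp [planePoint]

lemma measurePreserving_planePoint :
    MeasurePreserving (fun q : ℝ × ℝ => planePoint q.1 q.2) volume volume := by
  have hcoord : (fun q : ℝ × ℝ => planePoint q.1 q.2) =
      (MeasurableEquiv.toLp 2 (Fin 2 → ℝ)).symm.symm ∘ MeasurableEquiv.finTwoArrow.symm := by
    funext q
    ext i
    fin_cases i <;> simp [planePoint, MeasurableEquiv.finTwoArrow]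
  rw [hcoord]
  exact (EuclideanSpace.volume_preserving_symm_measurableEquiv_toLp (Fin 2)).symm.comp
    (volume_preserving_finTwoArrow ℝ).symm

lemma contDiff_dirDeriv (hN : ContDiff ℝ ∞ N) (v : E2) : ContDiff ℝ ∞ (dirDeriv v N) :=
  (hN.fderiv_right (m := ∞) (by norm_cast)).clm_apply contDiff_const

lemma integrable_sq_iteratedFDeriv_dirDeriv (hN : ContDiff ℝ ∞ N) (v : E2) {n : ℕ}
    (hint : ∀ j ≤ n + 1, Integrable fun x => ‖iteratedFDeriv ℝ j N x‖ ^ 2) :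
    ∀ j ≤ n, Integrable fun x => ‖iteratedFDeriv ℝ j (dirDeriv v N) x‖ ^ 2 := by
  intro j hj
  refine ((hint (j + 1) (by omega)).const_mul (‖v‖ ^ 2)).mono' ?_ (Eventually.of_forall fun x => ?_)
  · exact (((contDiff_dirDeriv hN v).continuous_iteratedFDeriv
      (by exact_mod_cast le_top)).norm.pow 2).aestronglyMeasurable
  · rw [Real.norm_of_nonneg (sq_nonneg _), ← mul_pow]
    gcongr
    exact norm_iteratedFDeriv_fderiv_apply_le
      (hN.contDiffAt.of_le (by exact_mod_cast le_top)) v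

lemma integrable_mixedDerivSq (hN : ContDiff ℝ ∞ N)
    (hint : ∀ j ≤ 2, Integrable fun x => ‖iteratedFDeriv ℝ j N x‖ ^ 2) :
    Integrable (mixedDerivSq N) := by
  have hsq {f : E2 → ℝ} (hf : ∀ j ≤ 0, Integrable fun x => ‖iteratedFDeriv ℝ j f x‖ ^ 2) :
      Integrable fun x => f x ^ 2 := by
    simpa only [norm_iteratedFDeriv_zero, Real.norm_eq_abs, sq_abs] using hf 0 le_rfl
  have hfirst (v : E2) := integrable_sq_iteratedFDeriv_dirDeriv (n := 1) hN v hint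
  have hsecond := integrable_sq_iteratedFDeriv_dirDeriv (contDiff_dirDeriv hN _)
    (EuclideanSpace.single 1 1) (hfirst (EuclideanSpace.single 0 1))
  exact ((hsq fun j hj => hint j (by omega)).add (hsq fun j hj => hfirst _ j (by omega))).add
    ((hsq fun j hj => hfirst _ j (by omega)).add (hsq hsecond))

lemma hasDerivAt_comp_planePoint_left (hN : ContDiff ℝ ∞ N) (s t : ℝ) :
    HasDerivAt (fun s => N (planePoint s t))
      (dirDeriv (EuclideanSpace.single 0 1) N (planePoint s t)) s := by
  have hline : HasDerivAt (fun s => planePoint s t) (EuclideanSpace.single 0 1) s := by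
    simpa [planePoint] using ((hasDerivAt_id s).smul_const
      (EuclideanSpace.single (0 : Fin 2) (1 : ℝ))).add_const (t • EuclideanSpace.single 1 1)
  exact (hN.differentiable (by norm_num) _).hasFDerivAt.comp_hasDerivAt s hline

lemma hasDerivAt_comp_planePoint_right (hN : ContDiff ℝ ∞ N) (s t : ℝ) :
    HasDerivAt (fun t => N (planePoint s t))
      (dirDeriv (EuclideanSpace.single 1 1) N (planePoint s t)) t := by
  have hline : HasDerivAt (fun t => planePoint s t) (EuclideanSpace.single 1 1) t := by
    simpa [planePoint] using ((hasDerivAt_id t).smul_const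
      (EuclideanSpace.single (1 : Fin 2) (1 : ℝ))).const_add (s • EuclideanSpace.single 0 1)
  exact (hN.differentiable (by norm_num) _).hasFDerivAt.comp_hasDerivAt t hline

lemma continuous_mixedDerivSq (hN : ContDiff ℝ ∞ N) : Continuous (mixedDerivSq N) :=
  ((hN.continuous.pow 2).add ((contDiff_dirDeriv hN _).continuous.pow 2)).add
    (((contDiff_dirDeriv hN _).continuous.pow 2).add
      ((contDiff_dirDeriv (contDiff_dirDeriv hN _) _).continuous.pow 2))

lemma sq_add_sq_dirDeriv_le_integral (hN : ContDiff ℝ ∞ N) (s b : ℝ) :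
    N (planePoint s b) ^ 2 + dirDeriv (EuclideanSpace.single 0 1) N (planePoint s b) ^ 2 ≤
      2 * ∫ t in b..(b + 1), mixedDerivSq N (planePoint s t) := by
  have hline := continuous_planePoint_right s
  have hslice {f : E2 → ℝ} (hf : ContDiff ℝ ∞ f) :=
    sq_le_two_mul_integral (hasDerivAt_comp_planePoint_right hf s)
      ((contDiff_dirDeriv hf _).continuous.comp hline) b
  have hint {f : E2 → ℝ} (hf : ContDiff ℝ ∞ f) : IntervalIntegrable (fun t =>
      f (planePoint s t) ^ 2 + dirDeriv (EuclideanSpace.single 1 1) f (planePoint s t) ^ 2)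
      volume b (b + 1) :=
    (((hf.continuous.comp hline).pow 2).add
      (((contDiff_dirDeriv hf _).continuous.comp hline).pow 2)).intervalIntegrable _ _
  have hN₀ := contDiff_dirDeriv hN (EuclideanSpace.single 0 1)
  unfold mixedDerivSq
  rw [intervalIntegral.integral_add (hint hN) (hint hN₀)]
  linarith [hslice hN, hslice hN₀]

lemma integral_square_le_integral {Q : E2 → ℝ} (hcont : Continuous Q) (hint : Integrable Q)
    (hnonneg : ∀ x, 0 ≤ Q x) (a b : ℝ) :
    ∫ s in a..(a + 1), ∫ t in b..(b + 1), Q (planePoint s t) ≤ ∫ x, Q x := by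
  have hcomp : Integrable (fun q : ℝ × ℝ => Q (planePoint q.1 q.2)) :=
    measurePreserving_planePoint.integrable_comp_of_integrable hint
  have hfubini := setIntegral_prod (μ := volume) (ν := volume) (s := Ioc a (a + 1))
    (t := Ioc b (b + 1)) (fun q : ℝ × ℝ => Q (planePoint q.1 q.2)) hcomp.integrableOn
  have hmap := integral_map measurePreserving_planePoint.aemeasurable (f := Q)
    hcont.aestronglyMeasurable
  rw [measurePreserving_planePoint.map_eq] at hmap
  simp only [intervalIntegral.integral_of_le (lt_add_one _).le]
  rw [← hfubini, hmap]
  exact setIntegral_le_integral hcomp (Eventually.of_forall fun q => hnonneg _)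

lemma sq_planePoint_le_integral (hN : ContDiff ℝ ∞ N) (a b : ℝ)
    (hint : ∀ j ≤ 2, Integrable fun x => ‖iteratedFDeriv ℝ j N x‖ ^ 2) :
    N (planePoint a b) ^ 2 ≤ 4 * ∫ x, mixedDerivSq N x := by
  have hline := continuous_planePoint_left b
  have hN₀ := (contDiff_dirDeriv hN (EuclideanSpace.single 0 1)).continuous
  have hQ := continuous_mixedDerivSq hN
  have hparam : Continuous fun s => ∫ t in b..(b + 1), mixedDerivSq N (planePoint s t) :=
    intervalIntegral.continuous_parametric_intervalIntegral_of_continuous'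
      (f := fun s t => mixedDerivSq N (planePoint s t)) (hQ.comp continuous_planePoint) _ _
  have hslices : ∫ s in a..(a + 1), (N (planePoint s b) ^ 2 +
        dirDeriv (EuclideanSpace.single 0 1) N (planePoint s b) ^ 2) ≤
      ∫ s in a..(a + 1), 2 * ∫ t in b..(b + 1), mixedDerivSq N (planePoint s t) :=
    intervalIntegral.integral_mono_on (lt_add_one a).le
      ((((hN.continuous.comp hline).pow 2).add ((hN₀.comp hline).pow 2)).intervalIntegrable _ _)
      ((continuous_const.mul hparam).intervalIntegrable _ _)
      fun s _ => sq_add_sq_dirDeriv_le_integral hN s b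
  rw [intervalIntegral.integral_const_mul] at hslices
  have hsquare := integral_square_le_integral hQ (integrable_mixedDerivSq hN hint)
    (fun x => by unfold mixedDerivSq; positivity) a b
  have hrow := sq_le_two_mul_integral (hasDerivAt_comp_planePoint_left hN · b) (hN₀.comp hline) a
  linarith

theorem exists_abs_le_of_integrable_sq_iteratedFDeriv (hN : ContDiff ℝ ∞ N)
    (hint : ∀ j ≤ 2, Integrable fun x => ‖iteratedFDeriv ℝ j N x‖ ^ 2) : ∃ K, ∀ x, |N x| ≤ K := by
  refine ⟨√(4 * ∫ x, mixedDerivSq N x), fun x => Real.abs_le_sqrt ?_⟩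
  have hle := sq_planePoint_le_integral hN (x 0) (x 1) hint
  rwa [planePoint_apply_zero_apply_one] at hle

lemma pd_comp_tangentialProj (hN : ContDiff ℝ ∞ N) (i : Fin 3) :
    pd i (N ∘ tangentialProj) = dirDeriv (tangentialProj (basisVec i)) N ∘ tangentialProj := by
  funext y
  rw [pd_apply, fderiv_comp y (hN.differentiable (by norm_num) _) tangentialProj.differentiableAt]
  simp [dirDeriv]

lemma boundedDerivs_comp_tangentialProj {n : ℕ} (hN : ContDiff ℝ ∞ N)
    (hint : ∀ j ≤ n + 2, Integrable fun x => ‖iteratedFDeriv ℝ j N x‖ ^ 2) :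
    BoundedDerivs n (N ∘ tangentialProj) := by
  obtain ⟨K, hK⟩ := exists_abs_le_of_integrable_sq_iteratedFDeriv hN fun j hj =>
    hint j (by omega)
  induction n generalizing N K with
  | zero => exact ⟨K, fun y => hK _⟩
  | succ n ih =>
    refine ⟨⟨K, fun y => hK _⟩, fun i => ?_⟩
    rw [pd_comp_tangentialProj hN]
    have hN' := contDiff_dirDeriv hN (tangentialProj (basisVec i))
    have hint' := integrable_sq_iteratedFDeriv_dirDeriv hN (tangentialProj (basisVec i)) hint
    obtain ⟨L, hL⟩ := exists_abs_le_of_integrable_sq_iteratedFDeriv hN' fun j hj =>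
      hint' j (by omega)
    exact ih hN' hint' L hL

theorem flatteningCoeff_of_integrable {M : E2 → ℝ} {n : ℕ} (hM : ContDiff ℝ ∞ M)
    (hint : ∀ j ≤ n + 3, Integrable fun x => ‖iteratedFDeriv ℝ j M x‖ ^ 2) :
    FlatteningCoeff n (flatteningCoeff M) := by
  refine ⟨flatteningCoeff_zero hM, fun i => ⟨contDiff_pd (contDiff_boundaryHeight hM) i, ?_⟩,
    pd_zero_flatteningCoeff hM⟩
  rw [flatteningCoeff, boundaryHeight_eq_comp_tangentialProj, pd_comp_tangentialProj hM]
  exact boundedDerivs_comp_tangentialProj (contDiff_dirDeriv hM _)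
    (integrable_sq_iteratedFDeriv_dirDeriv hM _ hint)

end PlaneSobolev

theorem _root_.cattabriga_estimate_general {M : E2 → ℝ} {k : ℕ} (hM : ContDiff ℝ ∞ M)
    (hMint : ∀ j ≤ k + 5, Integrable fun x' => ‖iteratedFDeriv ℝ j M x'‖ ^ 2) {ρ μ κ : ℝ}
    (hρ : ρ ≠ 0) (hμ : μ ≠ 0) (hκ : κ ≠ 0) :
    ∃ C₀ : ℝ, 0 < C₀ ∧ ∀ (u : E3 → E3) (p : E3 → ℝ), NoSlipFlow M k u p →
      derivSq (Omg M) (k + 2) u + derivSq (Omg M) (k + 1) p ≤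
        C₀ * domainDataSq M ρ μ κ k u p := by
  have hm := flatteningCoeff_of_integrable (n := k + 2) hM hMint
  obtain ⟨A, hA, hvel⟩ := derivSqBounded_vel (ρ := ρ) hM hm hρ hμ hκ
  obtain ⟨B, hB, hpres⟩ := derivSqBounded_pres (ρ := ρ) hM hm hρ hμ hκ
  refine ⟨A + B + 1, by positivity, fun u p hw => ?_⟩
  linarith [(hvel (u, p) hw).2, (hpres (u, p) hw).2, domainDataSq_nonneg M ρ μ κ k u p]

end Cattabriga

theorem cattabriga_estimate (M : E2 → ℝ) (hM : ContDiff ℝ (⊤ : ℕ∞) M)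
    (hMint : ∀ j ≤ 9, Integrable fun x' : E2 => ‖iteratedFDeriv ℝ j M x'‖ ^ 2)
    (ρb μh ph : ℝ) (hρb : 0 < ρb) (hμh : 0 < μh) (hph : 0 < ph)
    (k : ℕ) (hk : k ≤ 4) :
    ∃ C₀ : ℝ, 0 < C₀ ∧
      ∀ (u : E3 → E3) (p : E3 → ℝ),
        ContDiffOn ℝ (k + 2) u (closure (Omg M)) →
        ContDiffOn ℝ (k + 1) p (closure (Omg M)) →
        (∀ j ≤ k + 2, IntegrableOn (fun x => ‖iteratedFDeriv ℝ j u x‖ ^ 2) (Omg M)) →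
        (∀ j ≤ k + 1, IntegrableOn (fun x => ‖iteratedFDeriv ℝ j p x‖ ^ 2) (Omg M)) →
        (∀ j ≤ k + 1, IntegrableOn
          (fun x => ‖iteratedFDeriv ℝ j (fun y => ρb * vdiv u y) x‖ ^ 2) (Omg M)) →
        (∀ j ≤ k, IntegrableOn
          (fun x => ‖iteratedFDeriv ℝ j (fun y => -μh • vlap u y + ph • grad p y) x‖ ^ 2)
          (Omg M)) →
        (∀ x' : E2, u (gph M x') = 0) →
        Filter.Tendsto u (Bornology.cobounded E3 ⊓ Filter.principal (closure (Omg M))) (nhds 0) →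
        (∫ x in Omg M, ‖iteratedFDeriv ℝ (k + 2) u x‖ ^ 2) +
            (∫ x in Omg M, ‖iteratedFDeriv ℝ (k + 1) p x‖ ^ 2) ≤
          C₀ * ((∑ j ∈ Finset.range (k + 2),
              ∫ x in Omg M, ‖iteratedFDeriv ℝ j (fun y => ρb * vdiv u y) x‖ ^ 2) +
            (∑ j ∈ Finset.range (k + 1),
              ∫ x in Omg M, ‖iteratedFDeriv ℝ j (fun y => -μh • vlap u y + ph • grad p y) x‖ ^ 2) +
            ∫ x in Omg M, ‖iteratedFDeriv ℝ 1 u x‖ ^ 2) := by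
  obtain ⟨C₀, hC₀, hle⟩ := cattabriga_estimate_general (k := k) hM
    (fun j hj => hMint j (by omega)) hρb.ne' hμh.ne' hph.ne'
  exact ⟨C₀, hC₀, fun u p hu hp husq hpsq _ _ hnoSlip _ => hle u p
    ⟨by exact_mod_cast hu, by exact_mod_cast hp, husq, hpsq, hnoSlip⟩⟩
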